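/- arXiv:1005.0713 — 5 statements merged into one kernel-verified Lean document; each statement's English description precedes it below -/
import Mathlib

section
/- Define Q : (0, ∞) → ℂ by Q(t) = (2π)^{−3/2} (2i)^{−1} ∫_ℝ sign(β) |β|^{−3/2} exp(−i(π/4)·sign β + 2iβt) (exp(−(2/3)iβ³) − 1) dβ. Then: (a) the integrand is absolutely integrable on ℝ for every t, so Q(t) is a well-defined Lebesgue integral; (b) Q(t) is real for every t > 0; and (c) Q(t) = O(t^{−1}) as t → +∞. -/
/-!
Write `f t β` for the integrand. It satisfies `f t (-β) = -conj (f t β)`. Hence `∫ f t` is purely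
imaginary, so that `Q(t)`, which carries the factor `(2i)⁻¹`, is real, and everything else reduces
to the half-line `β > 0`.

Integrability on the half-line: `|e^{-2iβ³/3} - 1|` is at most `2β³/3` and at most `2`, so the
integrand is bounded by `1` on `(0, 1]` and by `2 β^{-3/2}` beyond.

Decay: on `(0, 1]` the amplitude `β^{-3/2}(e^{-2iβ³/3} - 1)` has bounded derivative, and one
integration by parts gives `O(1/t)` (`norm_integral_zero_one_le`). On `[1, ∞)` the two exponentials
are separated. The linear phase `2βt` gives `O(1/t)` by integration by parts. The phase
`2βt - 2β³/3` has its stationary point at `β = √t`; a window of half-width `t^{-1/4}` around it is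
estimated trivially, since the amplitude there is `O(t^{-3/4})`, and the remaining intervals by the
first-derivative estimate `norm_integral_exp_le_of_monotone_factors`
(`norm_integral_zero_R_le`). All bounds are uniform in the upper limit of integration, which is
then sent to infinity.
-/

open MeasureTheory Filter Asymptotics

/-- The short-loop correction kernel for the one-dimensional model operator `h²D₁² − x₁`:
`Q(t) = (2π)^{−3/2} (2i)^{−1} ∫_ℝ sign β · |β|^{−3/2} exp(−i(π/4) sign β + 2iβt)
(exp(−(2/3)iβ³) − 1) dβ`. -/
noncomputable def shortLoopQ (t : ℝ) : ℂ :=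
  (((2*Real.pi) ^ (-(3:ℝ)/2) : ℝ) : ℂ) * (2 * Complex.I)⁻¹ *
    ∫ β : ℝ, (Real.sign β : ℂ) * ((|β| ^ (-(3:ℝ)/2) : ℝ) : ℂ) *
      Complex.exp (-Complex.I * ((Real.pi : ℂ)/4) * (Real.sign β : ℂ)
        + 2 * Complex.I * (β : ℂ) * (t : ℂ)) *
      (Complex.exp (-(2/3) * Complex.I * (β : ℂ)^3) - 1)

/-! ### Non-stationary phase with a product amplitude -/

/-- First-derivative (van der Corput) estimate. The amplitude divided by the phase derivative `p'`
is `u v`, with `u` nonincreasing and `v` monotone in either direction. Integrating by parts against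
`p' e^{ip}` leaves the boundary terms and the total variation of `u v`, each at most `2 U V`.
The constant `c` absorbs the sign of `p'`, which keeps `v` nonnegative. -/
theorem norm_integral_exp_le_of_monotone_factors {a b U V : ℝ} (hab : a ≤ b)
    {u v p u' v' p' : ℝ → ℝ} {A : ℝ → ℂ} {c : ℂ} (hc : ‖c‖ ≤ 1)
    (hu : ∀ x ∈ Set.Icc a b, HasDerivAt u (u' x) x)
    (hv : ∀ x ∈ Set.Icc a b, HasDerivAt v (v' x) x)
    (hp : ∀ x ∈ Set.Icc a b, HasDerivAt p (p' x) x)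
    (hu'c : ContinuousOn u' (Set.Icc a b)) (hv'c : ContinuousOn v' (Set.Icc a b))
    (hp'c : ContinuousOn p' (Set.Icc a b))
    (hu0 : ∀ x ∈ Set.Icc a b, 0 ≤ u x) (huU : ∀ x ∈ Set.Icc a b, u x ≤ U)
    (hv0 : ∀ x ∈ Set.Icc a b, 0 ≤ v x) (hvV : ∀ x ∈ Set.Icc a b, v x ≤ V)
    (hu' : ∀ x ∈ Set.Icc a b, u' x ≤ 0)
    (hv' : (∀ x ∈ Set.Icc a b, 0 ≤ v' x) ∨ (∀ x ∈ Set.Icc a b, v' x ≤ 0))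
    (hA : ∀ x ∈ Set.Icc a b,
      A x = c * (((u x * v x * p' x : ℝ) : ℂ) * Complex.exp (Complex.I * (p x : ℝ)))) :
    ‖∫ x in a..b, A x‖ ≤ 4 * U * V := by
  have hI : Set.uIcc a b = Set.Icc a b := Set.uIcc_of_le hab
  have ha : a ∈ Set.Icc a b := Set.left_mem_Icc.2 hab
  have hb : b ∈ Set.Icc a b := Set.right_mem_Icc.2 hab
  have huc : ContinuousOn u (Set.Icc a b) := fun x hx => (hu x hx).continuousAt.continuousWithinAt
  have hvc : ContinuousOn v (Set.Icc a b) := fun x hx => (hv x hx).continuousAt.continuousWithinAt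
  have hpc : ContinuousOn p (Set.Icc a b) := fun x hx => (hp x hx).continuousAt.continuousWithinAt
  have hU0 : 0 ≤ U := (hu0 a ha).trans (huU a ha)
  have hV0 : 0 ≤ V := (hv0 a ha).trans (hvV a ha)
  set G : ℝ → ℂ := fun x => ((u x * v x : ℝ) : ℂ) with hG
  set G' : ℝ → ℂ := fun x => ((u' x * v x + u x * v' x : ℝ) : ℂ) with hG'
  set E : ℝ → ℂ := fun x => -Complex.I * Complex.exp (Complex.I * (p x : ℝ)) with hE
  set E' : ℝ → ℂ := fun x => (p' x : ℂ) * Complex.exp (Complex.I * (p x : ℝ)) with hE'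
  have hGd : ∀ x ∈ Set.uIcc a b, HasDerivAt G (G' x) x := by
    intro x hx
    rw [hI] at hx
    exact ((hu x hx).mul (hv x hx)).ofReal_comp
  have hEd : ∀ x ∈ Set.uIcc a b, HasDerivAt E (E' x) x := by
    intro x hx
    rw [hI] at hx
    have h := ((((hp x hx).ofReal_comp).const_mul Complex.I).cexp).const_mul (-Complex.I)
    refine h.congr_deriv ?_
    simp only [hE']
    linear_combination (-(p' x : ℂ) * Complex.exp (Complex.I * (p x : ℝ))) * Complex.I_sq
  have hG'r : ContinuousOn (fun x => u' x * v x + u x * v' x) (Set.Icc a b) := by fun_prop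
  have hG'c : ContinuousOn G' (Set.uIcc a b) := by
    rw [hI]; exact Complex.continuous_ofReal.comp_continuousOn hG'r
  have hE'c : ContinuousOn E' (Set.uIcc a b) := by
    rw [hI]; fun_prop
  have hEn : ∀ x, ‖E x‖ = 1 := by
    intro x
    simp only [hE]
    rw [norm_mul, Complex.norm_exp_I_mul_ofReal]; simp
  have ibp := intervalIntegral.integral_mul_deriv_eq_deriv_mul hGd hEd
    hG'c.intervalIntegrable hE'c.intervalIntegrable
  have hAint : ∫ x in a..b, A x = c * ∫ x in a..b, G x * E' x := by
    rw [← intervalIntegral.integral_const_mul]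
    apply intervalIntegral.integral_congr
    intro x hx
    rw [hI] at hx
    simp only [hA x hx, hG, hE']
    push_cast; ring
  have hGn : ∀ x ∈ Set.Icc a b, ‖G x‖ ≤ U * V := by
    intro x hx
    simp only [hG]
    rw [Complex.norm_real, Real.norm_eq_abs, abs_of_nonneg (mul_nonneg (hu0 x hx) (hv0 x hx))]
    exact mul_le_mul (huU x hx) (hvV x hx) (hv0 x hx) hU0
  have hu'int : ∫ x in a..b, u' x = u b - u a :=
    intervalIntegral.integral_eq_sub_of_hasDerivAt (by rwa [hI])
      (ContinuousOn.intervalIntegrable (by rwa [hI]))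
  have hv'int : ∫ x in a..b, v' x = v b - v a :=
    intervalIntegral.integral_eq_sub_of_hasDerivAt (by rwa [hI])
      (ContinuousOn.intervalIntegrable (by rwa [hI]))
  -- A common sign `σ` of `v'` turns `∫ |v'|` into a telescoping integral.
  obtain ⟨σ, hσ, hσv⟩ : ∃ σ : ℝ, |σ| = 1 ∧ ∀ x ∈ Set.Icc a b, |v' x| = σ * v' x := by
    rcases hv' with h | h
    · exact ⟨1, by simp, fun x hx => by rw [abs_of_nonneg (h x hx), one_mul]⟩
    · exact ⟨-1, by simp, fun x hx => by rw [abs_of_nonpos (h x hx)]; ring⟩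
  have hu'i : IntervalIntegrable u' volume a b := ContinuousOn.intervalIntegrable (by rwa [hI])
  have hv'i : IntervalIntegrable v' volume a b := ContinuousOn.intervalIntegrable (by rwa [hI])
  have hvar : ‖∫ x in a..b, G' x * E x‖ ≤ 2 * (U * V) := by
    have h1 : ‖∫ x in a..b, G' x * E x‖ ≤ ∫ x in a..b, (-V * u' x + (U * σ) * v' x) := by
      apply intervalIntegral.norm_integral_le_of_norm_le hab
      · refine Eventually.of_forall fun x hx => ?_
        have hx : x ∈ Set.Icc a b := Set.Ioc_subset_Icc_self hx
        rw [norm_mul, hEn, mul_one, Complex.norm_real, Real.norm_eq_abs]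
        refine (abs_add_le _ _).trans ?_
        rw [abs_mul, abs_mul, abs_of_nonpos (hu' x hx), abs_of_nonneg (hv0 x hx),
          abs_of_nonneg (hu0 x hx), mul_assoc, ← hσv x hx]
        have e1 := mul_le_mul_of_nonneg_left (hvV x hx) (neg_nonneg.2 (hu' x hx))
        have e2 := mul_le_mul_of_nonneg_right (huU x hx) (abs_nonneg (v' x))
        linarith
      · exact (hu'i.const_mul _).add (hv'i.const_mul _)
    rw [intervalIntegral.integral_add (hu'i.const_mul _) (hv'i.const_mul _),
      intervalIntegral.integral_const_mul, intervalIntegral.integral_const_mul, hu'int,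
      hv'int] at h1
    have e1 : -V * (u b - u a) ≤ V * U := by nlinarith [hu0 b hb, huU a ha]
    have e2 : σ * (v b - v a) ≤ V := by
      refine (le_abs_self _).trans ?_
      rw [abs_mul, hσ, one_mul, abs_le]
      constructor <;> linarith [hv0 a ha, hv0 b hb, hvV a ha, hvV b hb]
    have e3 : U * (σ * (v b - v a)) ≤ U * V := mul_le_mul_of_nonneg_left e2 hU0
    linarith
  rw [hAint, norm_mul, ibp]
  refine (mul_le_of_le_one_left (norm_nonneg _) hc).trans ?_
  refine (norm_sub_le _ _).trans ?_
  have h3 := norm_sub_le (G b * E b) (G a * E a)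
  rw [norm_mul (G b) (E b), norm_mul (G a) (E a), hEn, hEn] at h3
  linarith [hGn a ha, hGn b hb]

theorem hasDerivAt_rpow_neg_three_halves {x : ℝ} (hx : 0 < x) :
    HasDerivAt (fun x : ℝ => x ^ (-(3:ℝ)/2)) (-(3:ℝ)/2 * x ^ (-(5:ℝ)/2)) x := by
  have h := Real.hasDerivAt_rpow_const (x := x) (p := -(3:ℝ)/2) (Or.inl hx.ne')
  convert h using 2
  norm_num

theorem continuousOn_rpow_of_pos {a b : ℝ} (ha : 0 < a) (p : ℝ) :
    ContinuousOn (fun x : ℝ => x ^ p) (Set.Icc a b) := fun x hx =>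
  (Real.continuousAt_rpow_const x p (Or.inl (ha.trans_le hx.1).ne')).continuousWithinAt

/-- The Airy-type phase `2xt - 2x³/3` on an interval where its derivative `2(t - x²)` has constant
sign `ε` and size at least `m`. -/
theorem norm_airy_piece_le {a b t U m ε : ℝ} (ha : 0 < a) (hab : a ≤ b) (hm : 0 < m)
    (hε : ε = 1 ∨ ε = -1) (h : ∀ x ∈ Set.Icc a b, m ≤ ε * (2 * (t - x ^ 2)))
    (hU : ∀ x ∈ Set.Icc a b, x ^ (-(3:ℝ)/2) ≤ U) :
    ‖∫ x in a..b, ((x ^ (-(3:ℝ)/2) : ℝ) : ℂ) *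
      Complex.exp (Complex.I * ((2 * x * t - 2 / 3 * x ^ 3 : ℝ) : ℂ))‖ ≤ 4 * U * (1 / m) := by
  have hpos : ∀ x ∈ Set.Icc a b, 0 < x := fun x hx => ha.trans_le hx.1
  have hq : ∀ x ∈ Set.Icc a b, ε * (2 * (t - x ^ 2)) ≠ 0 := fun x hx =>
    (hm.trans_le (h x hx)).ne'
  refine norm_integral_exp_le_of_monotone_factors (c := (ε : ℂ)) (u := fun x => x ^ (-(3:ℝ)/2))
    (v := fun x => (ε * (2 * (t - x ^ 2)))⁻¹) (p := fun x => 2 * x * t - 2 / 3 * x ^ 3)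
    (u' := fun x => -(3:ℝ)/2 * x ^ (-(5:ℝ)/2))
    (v' := fun x => ε * (4 * x) / (ε * (2 * (t - x ^ 2))) ^ 2)
    (p' := fun x => 2 * (t - x ^ 2)) hab ?_ ?_ ?_ ?_ ?_ ?_ ?_ ?_ hU ?_ ?_ ?_ ?_ ?_
  · rcases hε with h | h <;> simp [h]
  · exact fun x hx => hasDerivAt_rpow_neg_three_halves (hpos x hx)
  · intro x hx
    have h1 : HasDerivAt (fun x : ℝ => ε * (2 * (t - x ^ 2))) (-(ε * (4 * x))) x := by
      have := ((((hasDerivAt_id x).pow 2).const_sub t).const_mul 2).const_mul ε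
      refine this.congr_deriv ?_
      simp only [id]; push_cast; ring
    refine (h1.inv (hq x hx)).congr_deriv ?_
    rw [neg_neg]
  · intro x hx
    have := (((hasDerivAt_id x).const_mul 2).mul_const t).sub
      (((hasDerivAt_id x).pow 3).const_mul (2 / 3))
    refine this.congr_deriv ?_
    simp; ring
  · exact (continuousOn_rpow_of_pos ha _).const_mul _
  · exact ContinuousOn.div (by fun_prop) (by fun_prop) fun x hx => pow_ne_zero _ (hq x hx)
  · fun_prop
  · exact fun x hx => Real.rpow_nonneg (hpos x hx).le _
  · exact fun x hx => inv_nonneg.2 (hm.le.trans (h x hx))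
  · intro x hx
    rw [one_div]
    exact inv_anti₀ hm (h x hx)
  · intro x hx
    have := Real.rpow_nonneg (hpos x hx).le (-(5:ℝ)/2)
    linarith
  · rcases hε with h | h
    · left
      intro x hx
      have := (hpos x hx).le
      simp only [h]; positivity
    · right
      intro x hx
      have := (hpos x hx).le
      simp only [h]
      apply div_nonpos_of_nonpos_of_nonneg
      · linarith
      · positivity
  · intro x hx
    have h1 : ε * (x ^ (-(3:ℝ)/2) * (ε * (2 * (t - x ^ 2)))⁻¹ * (2 * (t - x ^ 2)))
        = x ^ (-(3:ℝ)/2) := by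
      have := hq x hx
      have h2 : (ε * (2 * (t - x ^ 2)))⁻¹ * (ε * (2 * (t - x ^ 2))) = 1 := inv_mul_cancel₀ this
      linear_combination x ^ (-(3:ℝ)/2) * h2
    rw [← mul_assoc, ← Complex.ofReal_mul, h1]

theorem norm_linear_piece_le {R t : ℝ} (ht : 0 < t) (hR : 1 ≤ R) :
    ‖∫ x in (1:ℝ)..R, ((x ^ (-(3:ℝ)/2) : ℝ) : ℂ) *
      Complex.exp (Complex.I * ((2 * x * t : ℝ) : ℂ))‖ ≤ 4 * 1 * (1 / (2 * t)) := by
  have hpos : ∀ x ∈ Set.Icc 1 R, 0 < x := fun x hx => one_pos.trans_le hx.1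
  refine norm_integral_exp_le_of_monotone_factors (c := 1) (u := fun x => x ^ (-(3:ℝ)/2))
    (v := fun x => 1 / (2 * t)) (p := fun x => 2 * x * t)
    (u' := fun x => -(3:ℝ)/2 * x ^ (-(5:ℝ)/2))
    (v' := fun x => 0)
    (p' := fun x => 2 * t) hR ?_ ?_ ?_ ?_ ?_ ?_ ?_ ?_ ?_ ?_ ?_ ?_ ?_ ?_
  · simp
  · exact fun x hx => hasDerivAt_rpow_neg_three_halves (hpos x hx)
  · exact fun x hx => hasDerivAt_const _ _
  · intro x hx
    refine (((hasDerivAt_id x).const_mul 2).mul_const t).congr_deriv ?_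
    simp
  · exact (continuousOn_rpow_of_pos one_pos _).const_mul _
  · fun_prop
  · fun_prop
  · exact fun x hx => Real.rpow_nonneg (hpos x hx).le _
  · exact fun x hx => Real.rpow_le_one_of_one_le_of_nonpos hx.1 (by norm_num)
  · intro x hx; positivity
  · exact fun x hx => le_rfl
  · intro x hx
    have := Real.rpow_nonneg (hpos x hx).le (-(5:ℝ)/2)
    linarith
  · exact Or.inl fun x hx => le_rfl
  · intro x hx
    have h1 : x ^ (-(3:ℝ)/2) * (1 / (2 * t)) * (2 * t) = x ^ (-(3:ℝ)/2) := by field_simp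
    rw [h1, one_mul]

/-! ### The half-line integrand and its singularity at the origin -/

/-- The integrand of `Q` on the positive half-line, without the constant factor `e^{-iπ/4}`. -/
noncomputable def halfLineIntegrand (t x : ℝ) : ℂ :=
  ((x ^ (-(3:ℝ)/2) : ℝ) : ℂ) * (Complex.exp (Complex.I * ((-(2 / 3) * x ^ 3 : ℝ) : ℂ)) - 1) *
    Complex.exp (Complex.I * ((2 * x * t : ℝ) : ℂ))

theorem norm_loop_factor_le {x : ℝ} (hx : 0 < x) :
    ‖Complex.exp (Complex.I * ((-(2 / 3) * x ^ 3 : ℝ) : ℂ)) - 1‖ ≤ 2 / 3 * x ^ 3 := by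
  refine Real.norm_exp_I_mul_ofReal_sub_one_le.trans ?_
  rw [Real.norm_eq_abs, abs_mul, abs_of_pos (pow_pos hx 3)]
  norm_num

theorem norm_halfLineIntegrand_le_one {t x : ℝ} (hx : 0 < x) (hx1 : x ≤ 1) :
    ‖halfLineIntegrand t x‖ ≤ 1 := by
  rw [halfLineIntegrand, norm_mul, norm_mul, Complex.norm_exp_I_mul_ofReal, mul_one,
    Complex.norm_real, Real.norm_of_nonneg (Real.rpow_nonneg hx.le _)]
  have h1 : x ^ (-(3:ℝ)/2) * x ^ 3 = x ^ ((3:ℝ)/2) := by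
    rw [← Real.rpow_natCast, ← Real.rpow_add hx]; norm_num
  have h2 : x ^ ((3:ℝ)/2) ≤ 1 := Real.rpow_le_one hx.le hx1 (by norm_num)
  have h3 := mul_le_mul_of_nonneg_left (norm_loop_factor_le hx)
    (Real.rpow_nonneg hx.le (-(3:ℝ)/2))
  linarith

theorem norm_halfLineIntegrand_le {t x : ℝ} (hx : 0 < x) :
    ‖halfLineIntegrand t x‖ ≤ 2 * x ^ (-(3:ℝ)/2) := by
  rw [halfLineIntegrand, norm_mul, norm_mul, Complex.norm_exp_I_mul_ofReal, mul_one,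
    Complex.norm_real, Real.norm_of_nonneg (Real.rpow_nonneg hx.le _)]
  have h : ‖Complex.exp (Complex.I * ((-(2 / 3) * x ^ 3 : ℝ) : ℂ)) - 1‖ ≤ 2 := by
    refine (norm_sub_le _ _).trans ?_
    rw [Complex.norm_exp_I_mul_ofReal]; norm_num
  nlinarith [Real.rpow_nonneg hx.le (-(3:ℝ)/2)]

theorem integrableOn_halfLineIntegrand (t : ℝ) :
    IntegrableOn (halfLineIntegrand t) (Set.Ioi 0) := by
  have hmeas : Measurable (halfLineIntegrand t) := by
    unfold halfLineIntegrand
    fun_prop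
  rw [← Set.Ioc_union_Ioi_eq_Ioi (zero_le_one : (0:ℝ) ≤ 1)]
  refine IntegrableOn.union ?_ ?_
  · refine Measure.integrableOn_of_bounded (M := 1) (by simp) hmeas.aestronglyMeasurable ?_
    filter_upwards [ae_restrict_mem measurableSet_Ioc] with x hx
    exact norm_halfLineIntegrand_le_one hx.1 hx.2
  · refine Integrable.mono' ((integrableOn_Ioi_rpow_of_lt (a := -(3:ℝ)/2) (by norm_num)
      one_pos).const_mul 2) hmeas.aestronglyMeasurable ?_
    filter_upwards [ae_restrict_mem measurableSet_Ioi] with x hx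
    exact norm_halfLineIntegrand_le (one_pos.trans hx)

/-- Near the origin the two terms of `e^{-2ix³/3} - 1` must be kept together. Then
`x^{-3/2}(e^{-2ix³/3} - 1)` has derivative bounded by `3` on `(0, 1]`, and one integration by parts
against `e^{2ixt}` gains `1/t`. Cutting off `[0, 1/t]` avoids differentiating at `0`. -/
theorem norm_integral_zero_one_le {t : ℝ} (ht : 1 ≤ t) :
    ‖∫ x in (0:ℝ)..1, halfLineIntegrand t x‖ ≤ 4 / t := by
  have ht0 : 0 < t := one_pos.trans_le ht
  have hinv : 0 < t⁻¹ := inv_pos.2 ht0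
  have hinv1 : t⁻¹ ≤ 1 := inv_le_one_of_one_le₀ ht
  have hint := integrableOn_halfLineIntegrand t
  have hii : ∀ a b : ℝ, 0 ≤ a → a ≤ b → IntervalIntegrable (halfLineIntegrand t) volume a b :=
    fun a b ha hab => (intervalIntegrable_iff_integrableOn_Ioc_of_le hab).2
      (hint.mono_set fun x hx => ha.trans_lt hx.1)
  rw [← intervalIntegral.integral_add_adjacent_intervals (hii 0 t⁻¹ le_rfl hinv.le)
    (hii t⁻¹ 1 hinv.le hinv1)]
  have h1 : ‖∫ x in (0:ℝ)..t⁻¹, halfLineIntegrand t x‖ ≤ 1 * |t⁻¹ - 0| := by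
    apply intervalIntegral.norm_integral_le_of_norm_le_const
    intro x hx
    rw [Set.uIoc_of_le hinv.le] at hx
    exact norm_halfLineIntegrand_le_one hx.1 (hx.2.trans hinv1)
  rw [sub_zero, abs_of_pos hinv, one_mul] at h1
  have hI : Set.uIcc t⁻¹ 1 = Set.Icc t⁻¹ 1 := Set.uIcc_of_le hinv1
  set e : ℝ → ℂ := fun x => Complex.exp (Complex.I * ((-(2 / 3) * x ^ 3 : ℝ) : ℂ)) with he
  set w : ℝ → ℂ := fun x => ((x ^ (-(3:ℝ)/2) : ℝ) : ℂ) * (e x - 1) with hw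
  set w' : ℝ → ℂ := fun x => ((-(3:ℝ)/2 * x ^ (-(5:ℝ)/2) : ℝ) : ℂ) * (e x - 1) +
    ((x ^ (-(3:ℝ)/2) : ℝ) : ℂ) * (e x * (Complex.I * ((-(2 * x ^ 2) : ℝ) : ℂ))) with hw'
  set E : ℝ → ℂ := fun x => (2 * Complex.I * t)⁻¹ *
    Complex.exp (Complex.I * ((2 * x * t : ℝ) : ℂ)) with hE
  set E' : ℝ → ℂ := fun x => Complex.exp (Complex.I * ((2 * x * t : ℝ) : ℂ)) with hE'
  have hwd : ∀ x ∈ Set.uIcc t⁻¹ 1, HasDerivAt w (w' x) x := by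
    intro x hx
    rw [hI] at hx
    have hx0 : 0 < x := hinv.trans_le hx.1
    have h3 : HasDerivAt (fun x : ℝ => -(2 / 3) * x ^ 3) (-(2 * x ^ 2)) x := by
      refine (((hasDerivAt_id x).pow 3).const_mul (-(2 / 3))).congr_deriv ?_
      simp; ring
    exact (hasDerivAt_rpow_neg_three_halves hx0).ofReal_comp.mul
      (((h3.ofReal_comp.const_mul Complex.I).cexp).sub_const 1)
  have hEd : ∀ x ∈ Set.uIcc t⁻¹ 1, HasDerivAt E (E' x) x := by
    intro x hx
    have h3 : HasDerivAt (fun x : ℝ => 2 * x * t) (2 * t) x := by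
      refine (((hasDerivAt_id x).const_mul 2).mul_const t).congr_deriv ?_
      simp
    refine (((h3.ofReal_comp.const_mul Complex.I).cexp).const_mul
      ((2 * Complex.I * t)⁻¹)).congr_deriv ?_
    have : (t : ℂ) ≠ 0 := by exact_mod_cast ht0.ne'
    simp only [hE']
    push_cast
    field_simp
  have hrp : ∀ p : ℝ, ContinuousOn (fun x : ℝ => x ^ p) (Set.Icc t⁻¹ 1) :=
    continuousOn_rpow_of_pos hinv
  have hw'c : ContinuousOn w' (Set.uIcc t⁻¹ 1) := by
    rw [hI]
    have h5 := hrp (-(5:ℝ)/2)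
    have h3 := hrp (-(3:ℝ)/2)
    simp only [hw', he]
    fun_prop
  have hE'c : ContinuousOn E' (Set.uIcc t⁻¹ 1) := by simp only [hE']; fun_prop
  have ibp := intervalIntegral.integral_mul_deriv_eq_deriv_mul hwd hEd
    hw'c.intervalIntegrable hE'c.intervalIntegrable
  have hEn : ∀ x, ‖E x‖ = (2 * t)⁻¹ := by
    intro x
    simp only [hE]
    rw [norm_mul, Complex.norm_exp_I_mul_ofReal]
    simp [abs_of_pos ht0]
  have hwn : ∀ x ∈ Set.Icc t⁻¹ 1, ‖w x‖ ≤ 1 := by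
    intro x hx
    have h := norm_halfLineIntegrand_le_one (t := t) (hinv.trans_le hx.1) hx.2
    rwa [halfLineIntegrand, norm_mul, Complex.norm_exp_I_mul_ofReal, mul_one] at h
  have hw'n : ∀ x ∈ Set.Icc t⁻¹ 1, ‖w' x‖ ≤ 3 := by
    intro x hx
    have hx0 : 0 < x := hinv.trans_le hx.1
    have h5 := Real.rpow_nonneg hx0.le (-(5:ℝ)/2)
    have e5 : x ^ (-(5:ℝ)/2) * x ^ 3 = x ^ ((1:ℝ)/2) := by
      rw [← Real.rpow_natCast, ← Real.rpow_add hx0]; norm_num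
    have e3 : x ^ (-(3:ℝ)/2) * x ^ 2 = x ^ ((1:ℝ)/2) := by
      rw [← Real.rpow_natCast, ← Real.rpow_add hx0]; norm_num
    have e1 : x ^ ((1:ℝ)/2) ≤ 1 := Real.rpow_le_one hx0.le hx.2 (by norm_num)
    refine (norm_add_le _ _).trans ?_
    have n1 : ‖((-(3:ℝ)/2 * x ^ (-(5:ℝ)/2) : ℝ) : ℂ) * (e x - 1)‖ ≤ 1 := by
      rw [norm_mul, Complex.norm_real, Real.norm_eq_abs, abs_mul, abs_of_nonneg h5]
      have h32 : |-(3:ℝ)/2| = 3/2 := by rw [abs_of_neg] <;> norm_num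
      have h6 : ‖e x - 1‖ ≤ 2 / 3 * x ^ 3 := norm_loop_factor_le hx0
      have h7 := mul_le_mul_of_nonneg_left h6 h5
      rw [h32]
      linarith
    have n2 : ‖((x ^ (-(3:ℝ)/2) : ℝ) : ℂ) *
        (e x * (Complex.I * ((-(2 * x ^ 2) : ℝ) : ℂ)))‖ ≤ 2 := by
      rw [norm_mul, norm_mul, norm_mul, Complex.norm_I, Complex.norm_real, Complex.norm_real]
      simp only [he]
      rw [Complex.norm_exp_I_mul_ofReal, Real.norm_of_nonneg (Real.rpow_nonneg hx0.le _),
        norm_neg, Real.norm_of_nonneg (by positivity)]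
      linarith
    linarith
  have h2 : ‖∫ x in t⁻¹..1, w' x * E x‖ ≤ 3 * (2 * t)⁻¹ * |1 - t⁻¹| := by
    apply intervalIntegral.norm_integral_le_of_norm_le_const
    intro x hx
    rw [Set.uIoc_of_le hinv1] at hx
    rw [norm_mul, hEn]
    exact mul_le_mul_of_nonneg_right (hw'n x (Set.Ioc_subset_Icc_self hx)) (by positivity)
  have h3 : |1 - t⁻¹| ≤ 1 := by rw [abs_le]; constructor <;> linarith
  have h4 : 3 * (2 * t)⁻¹ * |1 - t⁻¹| ≤ 3 * (2 * t)⁻¹ :=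
    mul_le_of_le_one_right (by positivity) h3
  have h5 : ‖∫ x in t⁻¹..1, halfLineIntegrand t x‖ ≤ 5 * (2 * t)⁻¹ := by
    have : ∫ x in t⁻¹..1, halfLineIntegrand t x = ∫ x in t⁻¹..1, w x * E' x := rfl
    rw [this, ibp]
    refine (norm_sub_le _ _).trans ?_
    have n := norm_sub_le (w 1 * E 1) (w t⁻¹ * E t⁻¹)
    rw [norm_mul (w 1) (E 1), norm_mul (w t⁻¹) (E t⁻¹), hEn, hEn] at n
    have hp : 0 ≤ (2 * t)⁻¹ := by positivity
    have n1 := mul_le_mul_of_nonneg_right (hwn 1 ⟨hinv1, le_rfl⟩) hp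
    have n2 := mul_le_mul_of_nonneg_right (hwn t⁻¹ ⟨le_rfl, hinv1⟩) hp
    linarith
  refine (norm_add_le _ _).trans ?_
  rw [mul_inv] at h5
  rw [div_eq_mul_inv]
  linarith

/-! ### The stationary point -/

theorem rpow_neg_three_halves_le {r x : ℝ} (hr : 0 < r) (hx : r ^ 2 / 4 ≤ x) :
    x ^ (-(3:ℝ)/2) ≤ 8 / r ^ 3 := by
  have h0 : (0:ℝ) < r ^ 2 / 4 := by positivity
  refine (Real.rpow_le_rpow_of_nonpos h0 hx (by norm_num)).trans (le_of_eq ?_)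
  have h1 : r ^ 2 / 4 = (r / 2) ^ (2:ℝ) := by
    rw [Real.rpow_ofNat]; ring
  have h2 : (2:ℝ) * (-(3:ℝ)/2) = -((3:ℕ):ℝ) := by norm_num
  rw [h1, ← Real.rpow_mul (by positivity), h2, Real.rpow_neg (by positivity), Real.rpow_natCast]
  field_simp
  norm_num

/-- With `t = r⁴` the stationary point is `x = r²`, and the second derivative of the phase there has
size `4r²`, so the critical window is `[r² - 1/r, r² + 1/r]`. On it the amplitude is `O(r⁻³)`, and
at its ends the phase derivative is of size `r`; both effects contribute `O(r⁻⁴) = O(1/t)`. -/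
theorem norm_integral_zero_R_le {r R : ℝ} (hr : 2 ≤ r) (hR : r ^ 2 + 1 ≤ R) :
    ‖∫ x in (0:ℝ)..R, halfLineIntegrand (r ^ 4) x‖ ≤ 90 / r ^ 4 := by
  have hr0 : 0 < r := by linarith
  have hri : 0 < 1 / r := by positivity
  have hri2 : 1 / r ≤ 1 / 2 := one_div_le_one_div_of_le two_pos hr
  have hr2 : 4 ≤ r ^ 2 := by nlinarith
  set P : ℝ → ℂ := fun x => ((x ^ (-(3:ℝ)/2) : ℝ) : ℂ) *
      Complex.exp (Complex.I * ((2 * x * r ^ 4 - 2 / 3 * x ^ 3 : ℝ) : ℂ)) with hP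
  set L : ℝ → ℂ := fun x => ((x ^ (-(3:ℝ)/2) : ℝ) : ℂ) *
      Complex.exp (Complex.I * ((2 * x * r ^ 4 : ℝ) : ℂ)) with hL
  have hPi : ∀ a b : ℝ, 1 ≤ a → a ≤ b → IntervalIntegrable P volume a b := by
    intro a b ha hab
    apply ContinuousOn.intervalIntegrable
    rw [Set.uIcc_of_le hab]
    have := continuousOn_rpow_of_pos (b := b) (one_pos.trans_le ha) (-(3:ℝ)/2)
    simp only [hP]
    fun_prop
  have hLi : ∀ a b : ℝ, 1 ≤ a → a ≤ b → IntervalIntegrable L volume a b := by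
    intro a b ha hab
    apply ContinuousOn.intervalIntegrable
    rw [Set.uIcc_of_le hab]
    have := continuousOn_rpow_of_pos (b := b) (one_pos.trans_le ha) (-(3:ℝ)/2)
    simp only [hL]
    fun_prop
  have hii : ∀ a b : ℝ, 0 ≤ a → a ≤ b →
      IntervalIntegrable (halfLineIntegrand (r ^ 4)) volume a b :=
    fun a b ha hab => (intervalIntegrable_iff_integrableOn_Ioc_of_le hab).2
      ((integrableOn_halfLineIntegrand (r ^ 4)).mono_set fun x hx => ha.trans_lt hx.1)
  have b1 : (1:ℝ) ≤ r ^ 2 / 2 := by linarith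
  have b2 : r ^ 2 / 2 ≤ r ^ 2 - 1 / r := by linarith
  have b3 : r ^ 2 - 1 / r ≤ r ^ 2 + 1 / r := by linarith
  have b4 : r ^ 2 + 1 / r ≤ R := by linarith
  have hsplit : ∫ x in (0:ℝ)..R, halfLineIntegrand (r ^ 4) x =
      (∫ x in (0:ℝ)..1, halfLineIntegrand (r ^ 4) x) +
      ((∫ x in (1:ℝ)..(r ^ 2 / 2), P x) + (∫ x in (r ^ 2 / 2)..(r ^ 2 - 1 / r), P x) +
        (∫ x in (r ^ 2 - 1 / r)..(r ^ 2 + 1 / r), P x) + (∫ x in (r ^ 2 + 1 / r)..R, P x)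
        - ∫ x in (1:ℝ)..R, L x) := by
    rw [intervalIntegral.integral_add_adjacent_intervals (hPi _ _ le_rfl b1)
        (hPi _ _ b1 b2),
      intervalIntegral.integral_add_adjacent_intervals (hPi _ _ le_rfl (b1.trans b2))
        (hPi _ _ (b1.trans b2) b3),
      intervalIntegral.integral_add_adjacent_intervals (hPi _ _ le_rfl ((b1.trans b2).trans b3))
        (hPi _ _ ((b1.trans b2).trans b3) b4),
      ← intervalIntegral.integral_sub (hPi _ _ le_rfl (by linarith))
        (hLi _ _ le_rfl (by linarith)),
      ← intervalIntegral.integral_add_adjacent_intervals (hii 0 1 le_rfl zero_le_one)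
        (hii 1 R zero_le_one (by linarith))]
    congr 1
    apply intervalIntegral.integral_congr
    intro x _
    simp only [halfLineIntegrand, hP, hL]
    have : Complex.I * ((2 * x * r ^ 4 - 2 / 3 * x ^ 3 : ℝ) : ℂ) =
        Complex.I * ((-(2 / 3) * x ^ 3 : ℝ) : ℂ) + Complex.I * ((2 * x * r ^ 4 : ℝ) : ℂ) := by
      push_cast; ring
    rw [this, Complex.exp_add]
    ring
  have n0 := norm_integral_zero_one_le (t := r ^ 4) (by nlinarith)
  have n1 : ‖∫ x in (1:ℝ)..(r ^ 2 / 2), P x‖ ≤ 4 * 1 * (1 / r ^ 4) := by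
    refine norm_airy_piece_le (ε := 1) one_pos b1 (by positivity) (Or.inl rfl) ?_ ?_
    · intro x hx
      have : x ^ 2 ≤ (r ^ 2 / 2) ^ 2 := pow_le_pow_left₀ (by linarith [hx.1]) hx.2 2
      have h4 : 0 ≤ r ^ 4 := by positivity
      nlinarith
    · exact fun x hx => Real.rpow_le_one_of_one_le_of_nonpos hx.1 (by norm_num)
  have n2 : ‖∫ x in (r ^ 2 / 2)..(r ^ 2 - 1 / r), P x‖ ≤ 4 * (8 / r ^ 3) * (1 / r) := by
    refine norm_airy_piece_le (ε := 1) (by linarith) b2 hr0 (Or.inl rfl) ?_ ?_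
    · intro x hx
      have h1 : 1 / r ≤ r ^ 2 - x := by linarith [hx.2]
      have h2 : r ^ 2 ≤ r ^ 2 + x := by linarith [hx.1]
      have h3 := mul_le_mul h1 h2 (by positivity) (hri.le.trans h1)
      have h4 : 1 / r * r ^ 2 = r := by field_simp
      nlinarith
    · intro x hx
      exact rpow_neg_three_halves_le hr0 (by linarith [hx.1])
  have n3 : ‖∫ x in (r ^ 2 - 1 / r)..(r ^ 2 + 1 / r), P x‖ ≤
      8 / r ^ 3 * |r ^ 2 + 1 / r - (r ^ 2 - 1 / r)| := by
    apply intervalIntegral.norm_integral_le_of_norm_le_const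
    intro x hx
    rw [Set.uIoc_of_le b3] at hx
    have hx0 : 0 < x := by linarith [hx.1]
    simp only [hP]
    rw [norm_mul, Complex.norm_exp_I_mul_ofReal, mul_one, Complex.norm_real,
      Real.norm_of_nonneg (Real.rpow_nonneg hx0.le _)]
    exact rpow_neg_three_halves_le hr0 (by linarith [hx.1])
  have n4 : ‖∫ x in (r ^ 2 + 1 / r)..R, P x‖ ≤ 4 * (8 / r ^ 3) * (1 / r) := by
    refine norm_airy_piece_le (ε := -1) (by linarith) b4 hr0 (Or.inr rfl) ?_ ?_
    · intro x hx
      have h1 : 1 / r ≤ x - r ^ 2 := by linarith [hx.1]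
      have h2 : r ^ 2 ≤ r ^ 2 + x := by linarith [hx.1]
      have h3 := mul_le_mul h1 h2 (by positivity) (hri.le.trans h1)
      have h4 : 1 / r * r ^ 2 = r := by field_simp
      nlinarith
    · intro x hx
      exact rpow_neg_three_halves_le hr0 (by linarith [hx.1])
  have n5 : ‖∫ x in (1:ℝ)..R, L x‖ ≤ 4 * 1 * (1 / (2 * r ^ 4)) :=
    norm_linear_piece_le (by positivity) (by linarith)
  have e3 : |r ^ 2 + 1 / r - (r ^ 2 - 1 / r)| = 2 * (1 / r) := by
    rw [abs_of_nonneg (by linarith)]; ring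
  rw [e3] at n3
  have e4 : 8 / r ^ 3 * (1 / r) = 8 / r ^ 4 := by field_simp
  have e5 : 1 / (2 * r ^ 4) = 1 / 2 * (1 / r ^ 4) := by field_simp
  have e6 : ∀ c : ℝ, c / r ^ 4 = c * (1 / r ^ 4) := fun c => by ring
  rw [hsplit, e6]
  rw [e6] at n0 e4
  rw [e5] at n5
  refine (norm_add_le _ _).trans ?_
  refine (add_le_add_right (norm_sub_le _ _) _).trans ?_
  have k1 := norm_add₃_le (a := ∫ x in (1:ℝ)..(r ^ 2 / 2), P x)
    (b := ∫ x in (r ^ 2 / 2)..(r ^ 2 - 1 / r), P x)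
    (c := ∫ x in (r ^ 2 - 1 / r)..(r ^ 2 + 1 / r), P x)
  have k2 := norm_add_le ((∫ x in (1:ℝ)..(r ^ 2 / 2), P x) +
    (∫ x in (r ^ 2 / 2)..(r ^ 2 - 1 / r), P x) +
    (∫ x in (r ^ 2 - 1 / r)..(r ^ 2 + 1 / r), P x)) (∫ x in (r ^ 2 + 1 / r)..R, P x)
  linarith

theorem norm_integral_halfLine_le {t : ℝ} (ht : 16 ≤ t) :
    ‖∫ x in Set.Ioi (0:ℝ), halfLineIntegrand t x‖ ≤ 90 / t := by
  obtain ⟨r, hr, rfl⟩ : ∃ r : ℝ, 2 ≤ r ∧ r ^ 4 = t := by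
    have ht0 : 0 ≤ t := by linarith
    refine ⟨√(√t), ?_, ?_⟩
    · refine Real.le_sqrt_of_sq_le (Real.le_sqrt_of_sq_le ?_)
      linarith
    · rw [show 4 = 2 * 2 from rfl, pow_mul, Real.sq_sqrt (Real.sqrt_nonneg t), Real.sq_sqrt ht0]
  refine le_of_tendsto (intervalIntegral_tendsto_integral_Ioi 0
    (integrableOn_halfLineIntegrand (r ^ 4)) tendsto_id).norm ?_
  filter_upwards [eventually_ge_atTop (r ^ 2 + 1)] with R hR
  exact norm_integral_zero_R_le hr hR

/-! ### Symmetry and the full-line integral -/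

/-- The integrand of `shortLoopQ t`. -/
noncomputable def loopIntegrand (t β : ℝ) : ℂ :=
  (Real.sign β : ℂ) * ((|β| ^ (-(3:ℝ)/2) : ℝ) : ℂ) *
    Complex.exp (-Complex.I * ((Real.pi : ℂ)/4) * (Real.sign β : ℂ)
      + 2 * Complex.I * (β : ℂ) * (t : ℂ)) *
    (Complex.exp (-(2/3) * Complex.I * (β : ℂ)^3) - 1)

theorem loopIntegrand_of_pos {t x : ℝ} (hx : 0 < x) :
    loopIntegrand t x =
      Complex.exp (Complex.I * ((-(Real.pi / 4) : ℝ) : ℂ)) * halfLineIntegrand t x := by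
  have h1 : -Complex.I * ((Real.pi : ℂ)/4) * ((1:ℝ) : ℂ) + 2 * Complex.I * (x : ℂ) * (t : ℂ) =
      Complex.I * ((-(Real.pi / 4) : ℝ) : ℂ) + Complex.I * ((2 * x * t : ℝ) : ℂ) := by
    push_cast; ring
  have h2 : -(2/3) * Complex.I * (x : ℂ)^3 = Complex.I * ((-(2 / 3) * x ^ 3 : ℝ) : ℂ) := by
    push_cast; ring
  rw [loopIntegrand, halfLineIntegrand, Real.sign_of_pos hx, abs_of_pos hx, h1, h2,
    Complex.exp_add]
  push_cast; ring

theorem loopIntegrand_neg (t β : ℝ) :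
    loopIntegrand t (-β) = -(starRingEnd ℂ) (loopIntegrand t β) := by
  simp only [loopIntegrand, map_mul, map_sub, map_one, Complex.conj_ofReal, ← Complex.exp_conj,
    map_add, map_neg, map_pow, map_div₀, Complex.conj_I, map_ofNat, Real.sign_neg, abs_neg]
  push_cast
  ring_nf

theorem integrableOn_loopIntegrand_Ioi (t : ℝ) :
    IntegrableOn (loopIntegrand t) (Set.Ioi 0) := by
  refine IntegrableOn.congr_fun ((integrableOn_halfLineIntegrand t).const_mul
    (Complex.exp (Complex.I * ((-(Real.pi / 4) : ℝ) : ℂ)))) ?_ measurableSet_Ioi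
  exact fun x hx => (loopIntegrand_of_pos hx).symm

theorem integrableOn_loopIntegrand_Iic (t : ℝ) :
    IntegrableOn (loopIntegrand t) (Set.Iic 0) := by
  have h := integrableOn_loopIntegrand_Ioi t
  have h1 : IntegrableOn (fun x => loopIntegrand t (-x)) (Set.Ici 0) := by
    rw [integrableOn_Ici_iff_integrableOn_Ioi]
    have h2 : IntegrableOn (fun x => (starRingEnd ℂ) (loopIntegrand t x)) (Set.Ioi 0) :=
      Complex.conjLIE.toContinuousLinearEquiv.toContinuousLinearMap.integrable_comp h
    simp only [loopIntegrand_neg]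
    exact h2.neg
  have h3 := IntegrableOn.comp_neg_Iic (c := (0:ℝ)) (μ := volume)
    (f := fun x => loopIntegrand t (-x)) (by rwa [neg_zero])
  simpa using h3

theorem integrable_loopIntegrand (t : ℝ) : Integrable (loopIntegrand t) := by
  rw [← integrableOn_univ, ← Set.Iic_union_Ioi (a := (0:ℝ))]
  exact (integrableOn_loopIntegrand_Iic t).union (integrableOn_loopIntegrand_Ioi t)

theorem conj_integral_loopIntegrand (t : ℝ) :
    (starRingEnd ℂ) (∫ β, loopIntegrand t β) = -∫ β, loopIntegrand t β := by
  have h := integral_neg_eq_self (loopIntegrand t) volume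
  simp only [loopIntegrand_neg] at h
  rw [integral_neg, integral_conj] at h
  exact neg_eq_iff_eq_neg.1 h

theorem norm_integral_loopIntegrand_le {t : ℝ} (ht : 16 ≤ t) :
    ‖∫ β, loopIntegrand t β‖ ≤ 180 / t := by
  have h1 : ‖∫ β in Set.Ioi (0:ℝ), loopIntegrand t β‖ ≤ 90 / t := by
    rw [setIntegral_congr_fun measurableSet_Ioi fun x hx => loopIntegrand_of_pos (t := t) hx,
      integral_const_mul, norm_mul, Complex.norm_exp_I_mul_ofReal, one_mul]
    exact norm_integral_halfLine_le ht
  have h2 : ‖∫ β in Set.Iic (0:ℝ), loopIntegrand t β‖ ≤ 90 / t := by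
    have h3 := integral_comp_neg_Ioi 0 (loopIntegrand t)
    rw [neg_zero] at h3
    rw [← h3]
    simp only [loopIntegrand_neg]
    rw [integral_neg, integral_conj, norm_neg, RCLike.norm_conj]
    exact h1
  rw [← intervalIntegral.integral_Iic_add_Ioi (integrableOn_loopIntegrand_Iic t)
    (integrableOn_loopIntegrand_Ioi t)]
  refine (norm_add_le _ _).trans ?_
  have : 180 / t = 90 / t + 90 / t := by ring
  linarith

/-- (a) the integrand defining `Q(t)` is absolutely integrable for every `t > 0`;
(b) `Q(t)` is real for every `t > 0`; (c) `Q(t) = O(t^{−1})` as `t → +∞`. -/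
theorem shortLoopQ_properties :
    (∀ t : ℝ, 0 < t → Integrable (fun β : ℝ =>
        (Real.sign β : ℂ) * ((|β| ^ (-(3:ℝ)/2) : ℝ) : ℂ) *
          Complex.exp (-Complex.I * ((Real.pi : ℂ)/4) * (Real.sign β : ℂ)
            + 2 * Complex.I * (β : ℂ) * (t : ℂ)) *
          (Complex.exp (-(2/3) * Complex.I * (β : ℂ)^3) - 1)))
    ∧ (∀ t : ℝ, 0 < t → (shortLoopQ t).im = 0)
    ∧ shortLoopQ =O[atTop] fun t : ℝ => t ^ (-(1:ℝ)) := by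
  refine ⟨fun t _ => integrable_loopIntegrand t, fun t _ => ?_, ?_⟩
  · have h := conj_integral_loopIntegrand t
    have hQ : shortLoopQ t = (((2*Real.pi) ^ (-(3:ℝ)/2) : ℝ) : ℂ) * (2 * Complex.I)⁻¹ *
        ∫ β, loopIntegrand t β := rfl
    rw [← Complex.conj_eq_iff_im, hQ, map_mul, h, map_mul, Complex.conj_ofReal, map_inv₀, map_mul,
      Complex.conj_I, map_ofNat, mul_neg 2, inv_neg]
    ring
  · refine IsBigO.of_bound (‖(((2*Real.pi) ^ (-(3:ℝ)/2) : ℝ) : ℂ) * (2 * Complex.I)⁻¹‖ * 180) ?_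
    filter_upwards [eventually_ge_atTop 16] with t ht
    have ht0 : 0 < t := by linarith
    have hQ : shortLoopQ t = (((2*Real.pi) ^ (-(3:ℝ)/2) : ℝ) : ℂ) * (2 * Complex.I)⁻¹ *
        ∫ β, loopIntegrand t β := rfl
    rw [hQ, norm_mul, Real.rpow_neg_one, norm_inv, Real.norm_of_nonneg ht0.le, mul_assoc,
      ← div_eq_mul_inv]
    exact mul_le_mul_of_nonneg_left (norm_integral_loopIntegrand_le ht) (norm_nonneg _)
end

section
/- Let Q : (0, ∞) → ℂ be defined by Q(t) = (2π)^{−3/2} (2i)^{−1} ∫_ℝ sign(β) |β|^{−3/2} exp(−i(π/4)·sign β + 2iβt) (exp(−(2/3)iβ³) − 1) dβ (an absolutely convergent integral). Then there exist real constants A and B such that Q(t) − t^{−1} (A·cos((4/3) t^{3/2}) + B·sin((4/3) t^{3/2})) = O(t^{−3/2}) as t → +∞. -/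
/-!
The integrand at `-β` is minus the conjugate of the integrand at `β`, so `Q(t)` is a constant times the
imaginary part of `e^{-iπ/4} ∫₀^∞ β^{-3/2} (e^{i(2βt - (2/3)β³)} - e^{2iβt}) dβ` (`shortLoopQ_eq_im`).
The substitution `β = √t s` turns this into `t^{-1/4} J(L)` with `L = t^{3/2}` and
`J(L) = ∫₀^∞ s^{-3/2} (e^{iL(2s - (2/3)s³)} - e^{2iLs}) ds`, and it suffices to show
`J(L) = κ L^{-1/2} e^{4iL/3} + O(1/L)` (`scaled_asymptotics`).

* Around the stationary point `s = 1`, put `u = (s - 1) √(2(s+2)/3)`, so that the phase is `4/3 - u²`.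
  Then `s^{-3/2} = u'(s)/√2 + H(s) φ'(s)` with `φ' = 2 - 2s²` and an explicit smooth `H` (`amp_split`).
  The first part is a Fresnel integral, which supplies the leading term, and the second is `O(1/L)`
  after one integration by parts (`stationary`).
* On `[1/2, ∞)` for the linear phase and `[2, ∞)` for the cubic one, the phase is not stationary and the
  amplitude divided by the phase derivative is monotone, which gives `O(1/L)` uniformly
  (`linear_tail`, `cubic_tail`).
* Near `0` the two exponentials have to be kept together. Two integrations by parts, together with the
  bound `O(L s³)` for their difference, give `O(1/L)` (`near_bound`).
-/

open MeasureTheory Filter Asymptotics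

open Set Topology

/-! ### Oscillatory integrals with a non-stationary phase -/

/-- The unimodular exponential `osc x = e^{ix}` of a real argument. -/
noncomputable def osc (x : ℝ) : ℂ := Complex.exp (x * Complex.I)

lemma norm_osc (x : ℝ) : ‖osc x‖ = 1 := Complex.norm_exp_ofReal_mul_I x

lemma osc_add (x y : ℝ) : osc (x + y) = osc x * osc y := by
  simp [osc, add_mul, Complex.exp_add]

lemma continuous_osc : Continuous osc := by unfold osc; fun_prop

lemma hasDerivAt_osc {f : ℝ → ℝ} {f' s : ℝ} (h : HasDerivAt f f' s) :
    HasDerivAt (fun s => osc (f s)) (osc (f s) * (f' * Complex.I)) s := by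
  unfold osc
  exact (h.ofReal_comp.mul_const Complex.I).cexp

lemma norm_osc_sub_le (x y : ℝ) : ‖osc x - osc y‖ ≤ |x - y| := by
  have h : osc x - osc y = osc y * (osc (x - y) - 1) := by
    have := osc_add y (x - y)
    rw [add_sub_cancel] at this
    rw [this]; ring
  rw [h, norm_mul, norm_osc, one_mul]
  have := Real.norm_exp_I_mul_ofReal_sub_one_le (x := x - y)
  simpa [osc, mul_comm] using this

/-- First-derivative test by one integration by parts: an amplitude of the form `H φ'` against
`e^{iLφ}` is `L⁻¹` times boundary values and the total variation of `H`. Zeros of `φ'` are allowed,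
which is what makes the bound usable on an interval containing the stationary point. -/
lemma norm_integral_osc_le {φ φ' H H' : ℝ → ℝ} {a b L : ℝ} (hab : a ≤ b) (hL : 0 < L)
    (hφ : ∀ s ∈ Icc a b, HasDerivAt φ (φ' s) s) (hφ' : ContinuousOn φ' (Icc a b))
    (hH : ∀ s ∈ Icc a b, HasDerivAt H (H' s) s) (hH' : IntervalIntegrable H' volume a b) :
    ‖∫ s in a..b, ((H s * φ' s : ℝ) : ℂ) * osc (L * φ s)‖
      ≤ (|H a| + |H b| + ∫ s in a..b, |H' s|) / L := by
  rw [← uIcc_of_le hab] at hφ hφ' hH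
  have hφc : ContinuousOn φ (uIcc a b) := fun s hs => (hφ s hs).continuousAt.continuousWithinAt
  have hHc : ContinuousOn H (uIcc a b) := fun s hs => (hH s hs).continuousAt.continuousWithinAt
  have hoc : ContinuousOn (fun s => osc (L * φ s)) (uIcc a b) :=
    continuous_osc.comp_continuousOn (continuousOn_const.mul hφc)
  have i1 : IntervalIntegrable (fun s => (H' s : ℂ) * osc (L * φ s)) volume a b :=
    IntervalIntegrable.mul_continuousOn ⟨hH'.1.ofReal, hH'.2.ofReal⟩ hoc
  have i2 : IntervalIntegrable (fun s => ((H s * φ' s : ℝ) : ℂ) * osc (L * φ s)) volume a b :=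
    ((Complex.continuous_ofReal.comp_continuousOn (hHc.mul hφ')).mul hoc).intervalIntegrable
  have key := intervalIntegral.integral_eq_sub_of_hasDerivAt
    (f := fun s => (H s : ℂ) * osc (L * φ s))
    (f' := fun s => (H' s : ℂ) * osc (L * φ s)
      + (L * Complex.I) * (((H s * φ' s : ℝ) : ℂ) * osc (L * φ s))) (a := a) (b := b)
    (fun s hs => by
      refine ((hH s hs).ofReal_comp.mul
        (hasDerivAt_osc ((hφ s hs).const_mul L))).congr_deriv ?_
      push_cast; ring) (i1.add (i2.const_mul _))
  rw [intervalIntegral.integral_add i1 (i2.const_mul _), intervalIntegral.integral_const_mul] at key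
  have hn : ‖(L * Complex.I : ℂ) * ∫ s in a..b, ((H s * φ' s : ℝ) : ℂ) * osc (L * φ s)‖
      ≤ |H a| + |H b| + ∫ s in a..b, |H' s| := by
    rw [eq_sub_of_add_eq' key]
    have h1 : ‖∫ s in a..b, (H' s : ℂ) * osc (L * φ s)‖ ≤ ∫ s in a..b, |H' s| := by
      refine (intervalIntegral.norm_integral_le_integral_norm hab).trans_eq ?_
      simp [norm_osc]
    have h2 := norm_sub_le ((H b : ℂ) * osc (L * φ b) - (H a : ℂ) * osc (L * φ a))
      (∫ s in a..b, (H' s : ℂ) * osc (L * φ s))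
    have h3 := norm_sub_le ((H b : ℂ) * osc (L * φ b)) ((H a : ℂ) * osc (L * φ a))
    simp only [norm_mul, norm_osc, Complex.norm_real, mul_one, Real.norm_eq_abs] at h3
    linarith
  rw [norm_mul, norm_mul, Complex.norm_I, Complex.norm_real, Real.norm_of_nonneg hL.le, mul_one]
    at hn
  rw [le_div_iff₀ hL]
  linarith

/-- For monotone `H` the total variation is controlled by the boundary values, so that the bound is
uniform in the interval. -/
lemma norm_integral_osc_le_of_monotone {φ φ' H H' : ℝ → ℝ} {a b L B : ℝ} (hab : a ≤ b)
    (hL : 0 < L) (hφ : ∀ s ∈ Icc a b, HasDerivAt φ (φ' s) s) (hφ' : ContinuousOn φ' (Icc a b))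
    (hH : ∀ s ∈ Icc a b, HasDerivAt H (H' s) s) (hH' : ∀ s ∈ Icc a b, 0 ≤ H' s)
    (ha : |H a| ≤ B) (hb : |H b| ≤ B) :
    ‖∫ s in a..b, ((H s * φ' s : ℝ) : ℂ) * osc (L * φ s)‖ ≤ 4 * B / L := by
  have hc : ContinuousOn H (uIcc a b) := by
    rw [uIcc_of_le hab]
    exact fun s hs => (hH s hs).continuousAt.continuousWithinAt
  have hI : IntervalIntegrable H' volume a b := by
    refine intervalIntegral.intervalIntegrable_deriv_of_nonneg hc ?_ ?_
    · intro s hs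
      rw [min_eq_left hab, max_eq_right hab] at hs
      exact hH s (Ioo_subset_Icc_self hs)
    · intro s hs
      rw [min_eq_left hab, max_eq_right hab] at hs
      exact hH' s (Ioo_subset_Icc_self hs)
  refine (norm_integral_osc_le hab hL hφ hφ' hH hI).trans ?_
  have h1 : ∫ s in a..b, |H' s| = H b - H a := by
    rw [← intervalIntegral.integral_eq_sub_of_hasDerivAt
      (fun s hs => hH s (by rwa [uIcc_of_le hab] at hs)) hI]
    refine intervalIntegral.integral_congr fun s hs => ?_
    rw [uIcc_of_le hab] at hs
    exact abs_of_nonneg (hH' s hs)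
  rw [h1]
  gcongr
  linarith [le_abs_self (H b), neg_abs_le (H a)]

/-! ### The Fresnel integral -/

/-- The Fresnel integral converges, with rate `O(1/X)`. The value of its limit is not needed. -/
lemma fresnel : ∃ C : ℂ, ∀ X : ℝ, 0 < X → ‖(∫ v in (0:ℝ)..X, osc (-v ^ 2)) - C‖ ≤ 2 / X := by
  have hi : ∀ a b : ℝ, IntervalIntegrable (fun v : ℝ => osc (-v ^ 2)) volume a b := fun a b =>
    (continuous_osc.comp (by fun_prop)).intervalIntegrable a b
  have key : ∀ X Y : ℝ, 0 < X → X ≤ Y →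
      ‖(∫ v in (0:ℝ)..Y, osc (-v ^ 2)) - ∫ v in (0:ℝ)..X, osc (-v ^ 2)‖ ≤ 2 / X := by
    intro X Y hX hXY
    rw [intervalIntegral.integral_interval_sub_left (hi _ _) (hi _ _)]
    have h := norm_integral_osc_le_of_monotone (φ := fun v => -v ^ 2) (φ' := fun v => -(2 * v))
      (H := fun v => -(2 * v)⁻¹) (H' := fun v => 2 / (2 * v) ^ 2) (L := 1) (B := (2 * X)⁻¹) hXY
      one_pos (fun s _ => (hasDerivAt_pow 2 s).neg.congr_deriv (by simp)) (by fun_prop)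
      (fun s hs => by
        have hs0 : 0 < s := hX.trans_le hs.1
        exact (((hasDerivAt_id s).const_mul 2).inv (by simpa using hs0.ne')).neg.congr_deriv
          (by simp [neg_div]))
      (fun s hs => by positivity)
      (by rw [abs_neg, abs_of_pos (by positivity)])
      (by
        have : 0 < Y := hX.trans_le hXY
        rw [abs_neg, abs_of_pos (by positivity)]; gcongr)
    have e : (4 * (2 * X)⁻¹ / 1 : ℝ) = 2 / X := by field_simp; norm_num
    rw [e] at h
    refine le_trans (le_of_eq ?_) h
    congr 1
    refine intervalIntegral.integral_congr fun s hs => ?_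
    rw [uIcc_of_le hXY] at hs
    have hs0 : s ≠ 0 := (hX.trans_le hs.1).ne'
    have : -(2 * s)⁻¹ * -(2 * s) = 1 := by field_simp
    simp only [this, Complex.ofReal_one, one_mul]
  have hcau : CauchySeq (fun Y : ℝ => ∫ v in (0:ℝ)..Y, osc (-v ^ 2)) := by
    rw [Metric.cauchySeq_iff']
    intro ε hε
    refine ⟨3 / ε, fun Y hY => ?_⟩
    rw [dist_eq_norm]
    refine (key _ _ (by positivity) hY).trans_lt ?_
    rw [div_div_eq_mul_div]
    linarith
  obtain ⟨C, hC⟩ := cauchySeq_tendsto_of_complete hcau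
  refine ⟨C, fun X hX => ?_⟩
  rw [norm_sub_rev]
  refine le_of_tendsto (hC.sub_const _).norm ?_
  filter_upwards [eventually_ge_atTop X] with Y hY using key X Y hX hY

lemma fresnel_scaled : ∃ C : ℂ, ∀ p q L : ℝ, 0 < p → 0 < q → 0 < L →
    ‖(∫ v in (-p)..q, osc (-(L * v ^ 2))) - ((√L)⁻¹ : ℝ) * C‖ ≤ (2 / p + 2 / q) / L := by
  obtain ⟨C, hC⟩ := fresnel
  refine ⟨2 * C, fun p q L hp hq hL => ?_⟩
  have hr : 0 < √L := Real.sqrt_pos.2 hL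
  have hrr : √L * √L = L := Real.mul_self_sqrt hL.le
  have hi : ∀ a b : ℝ, IntervalIntegrable (fun v : ℝ => osc (-v ^ 2)) volume a b := fun a b =>
    (continuous_osc.comp (by fun_prop)).intervalIntegrable a b
  have h1 : ∫ v in (-p)..q, osc (-(L * v ^ 2))
      = ((√L)⁻¹ : ℝ) * ((∫ v in (0:ℝ)..(√L * p), osc (-v ^ 2))
        + ∫ v in (0:ℝ)..(√L * q), osc (-v ^ 2)) := by
    have e : ∀ v : ℝ, osc (-(L * v ^ 2)) = (fun w : ℝ => osc (-w ^ 2)) (√L * v) := by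
      intro v
      simp only [mul_pow, Real.sq_sqrt hL.le]
    simp only [e]
    rw [intervalIntegral.integral_comp_mul_left (fun w : ℝ => osc (-w ^ 2)) hr.ne',
      ← intervalIntegral.integral_add_adjacent_intervals (hi _ 0) (hi 0 _), Complex.real_smul]
    congr 2
    have := intervalIntegral.integral_comp_neg (a := 0) (b := √L * p)
      (fun w : ℝ => osc (-w ^ 2))
    simp only [neg_sq, neg_zero] at this
    rw [this, mul_neg]
  rw [h1]
  have h2 := hC (√L * p) (by positivity)
  have h3 := hC (√L * q) (by positivity)
  rw [← mul_sub, norm_mul, Complex.norm_real, Real.norm_of_nonneg (by positivity)]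
  have h4 : ‖(∫ v in (0:ℝ)..(√L * p), osc (-v ^ 2))
        + (∫ v in (0:ℝ)..(√L * q), osc (-v ^ 2)) - 2 * C‖ ≤ 2 / (√L * p) + 2 / (√L * q) := by
    refine le_trans (le_of_eq ?_) ((norm_add_le _ _).trans (add_le_add h2 h3))
    congr 1; ring
  calc _ ≤ (√L)⁻¹ * (2 / (√L * p) + 2 / (√L * q)) := by gcongr
    _ = (2 / p + 2 / q) / (√L * √L) := by field_simp
    _ = _ := by rw [hrr]

/-! ### The stationary point -/

/-- The square root `w(s)` of `2(s+2)/3`: with `u = (s - 1) w(s)` the cubic phase becomes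
`2s - (2/3)s³ = 4/3 - u²`. -/
noncomputable def morseRoot (s : ℝ) : ℝ := √(2 * (s + 2) / 3)

/-- The derivative of the Morse coordinate `u = (s - 1) * morseRoot s`; as an amplitude it gives
exactly a Fresnel integral. -/
noncomputable def modelAmp (s : ℝ) : ℝ := (s + 1) / morseRoot s

/-- The quotient of `s^{-3/2} - modelAmp s / √2`, which vanishes at the stationary point `s = 1`, by
the phase derivative `2 - 2s²`. The common factor `1 - s` is cancelled (after rationalizing the
difference of square roots), so that the expression is visibly smooth at `s = 1`. -/
noncomputable def quotAmp (s : ℝ) : ℝ :=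
  (3 * s ^ 4 + 9 * s ^ 3 + 12 * s ^ 2 + 12 * s + 8) / (4 * s ^ 3 * (s + 2)) /
    (s ^ (-(3:ℝ)/2) + (√2)⁻¹ * modelAmp s) / (2 * (1 + s))

lemma morseRoot_pos {s : ℝ} (hs : 0 < s) : 0 < morseRoot s := by
  unfold morseRoot; positivity

lemma modelAmp_pos {s : ℝ} (hs : 0 < s) : 0 < modelAmp s := by
  have := morseRoot_pos hs
  unfold modelAmp; positivity

lemma amp_split {s : ℝ} (hs : 0 < s) :
    s ^ (-(3:ℝ)/2) = (√2)⁻¹ * modelAmp s + quotAmp s * (2 - 2 * s ^ 2) := by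
  have hw := morseRoot_pos hs
  have hm := modelAmp_pos hs
  have hr : 0 < s ^ (-(3:ℝ)/2) := by positivity
  have hr2 : (s ^ (-(3:ℝ)/2)) ^ 2 = (s ^ 3)⁻¹ := by
    rw [← Real.rpow_natCast, ← Real.rpow_mul hs.le]
    norm_num
  have hq2 : ((√2)⁻¹ * modelAmp s) ^ 2 = 3 * (s + 1) ^ 2 / (4 * (s + 2)) := by
    unfold modelAmp morseRoot
    rw [mul_pow, div_pow, Real.sq_sqrt (by positivity), inv_pow, Real.sq_sqrt (by norm_num)]
    field_simp
    norm_num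
  have hq : 0 < (√2)⁻¹ * modelAmp s := by positivity
  unfold quotAmp
  set r := s ^ (-(3:ℝ)/2)
  set q := (√2)⁻¹ * modelAmp s
  have h : (r - q) * (r + q) =
      (3 * s ^ 4 + 9 * s ^ 3 + 12 * s ^ 2 + 12 * s + 8) / (4 * s ^ 3 * (s + 2)) * (1 - s) := by
    have : (r - q) * (r + q) = r ^ 2 - q ^ 2 := by ring
    rw [this, hr2, hq2]
    field_simp
    ring
  have h' : r - q = (3 * s ^ 4 + 9 * s ^ 3 + 12 * s ^ 2 + 12 * s + 8) / (4 * s ^ 3 * (s + 2))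
      * (1 - s) / (r + q) := by
    rw [← h]; field_simp
  rw [← sub_eq_iff_eq_add', h']
  field_simp
  ring

lemma contDiffOn_quotAmp : ContDiffOn ℝ 1 quotAmp (Ioi 0) := by
  intro s hs
  have hs : 0 < s := hs
  apply ContDiffAt.contDiffWithinAt
  have hw := morseRoot_pos hs
  have hm := modelAmp_pos hs
  have hr : 0 < s ^ (-(3:ℝ)/2) := by positivity
  have c1 : ContDiffAt ℝ 1 (fun s : ℝ => s ^ (-(3:ℝ)/2)) s :=
    contDiffAt_id.rpow_const_of_ne hs.ne'
  have c2 : ContDiffAt ℝ 1 morseRoot s := by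
    unfold morseRoot
    exact ContDiffAt.sqrt (by fun_prop) (by positivity)
  have c3 : ContDiffAt ℝ 1 modelAmp s := by
    unfold modelAmp
    exact ContDiffAt.div (by fun_prop) c2 hw.ne'
  unfold quotAmp
  refine ContDiffAt.div (ContDiffAt.div (ContDiffAt.div (by fun_prop) (by fun_prop) ?_)
    (c1.add (contDiffAt_const.mul c3)) ?_) (by fun_prop) ?_ <;> positivity

/-- Stationary phase on `[1/2, 2]`: after the splitting `amp_split`, the `modelAmp` part is a Fresnel
integral in the variable `u`, and the `quotAmp` part is `O(1/L)` by integration by parts. -/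
lemma stationary : ∃ κ : ℂ, ∃ C : ℝ, ∀ L : ℝ, 0 < L →
    ‖(∫ s in (1/2:ℝ)..2, ((s ^ (-(3:ℝ)/2) : ℝ) : ℂ) * osc (L * (2 * s - 2/3 * s ^ 3)))
      - ((√L)⁻¹ : ℝ) * osc (4/3 * L) * κ‖ ≤ C / L := by
  obtain ⟨F, hF⟩ := fresnel_scaled
  set p : ℝ := 1/2 * morseRoot (1/2) with hp
  set q : ℝ := morseRoot 2 with hq
  have hp0 : 0 < p := mul_pos (by norm_num) (morseRoot_pos (by norm_num))
  have hq0 : 0 < q := morseRoot_pos (by norm_num)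
  refine ⟨((√2)⁻¹ : ℝ) * F, |quotAmp (1/2)| + |quotAmp 2| + (∫ s in (1/2:ℝ)..2, |deriv quotAmp s|)
    + (√2)⁻¹ * (2 / p + 2 / q), fun L hL => ?_⟩
  have hpos : ∀ s ∈ uIcc (1/2:ℝ) 2, 0 < s := fun s hs => by
    rw [uIcc_of_le (by norm_num)] at hs; linarith [hs.1]
  have hsub : uIcc (1/2:ℝ) 2 ⊆ Ioi 0 := fun s hs => hpos s hs
  have hdq : ∀ s ∈ Ioi (0:ℝ), HasDerivAt quotAmp (deriv quotAmp s) s := fun s hs =>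
    ((contDiffOn_quotAmp.differentiableOn one_ne_zero).differentiableAt
      (Ioi_mem_nhds hs)).hasDerivAt
  have hcq : ContinuousOn (deriv quotAmp) (Ioi 0) :=
    contDiffOn_quotAmp.continuousOn_deriv_of_isOpen isOpen_Ioi le_rfl
  have hdw : ∀ s ∈ Ioi (0:ℝ), HasDerivAt (fun s => (s - 1) * morseRoot s) (modelAmp s) s := by
    intro s hs
    have hs : 0 < s := hs
    have hw := morseRoot_pos hs
    have h1 : HasDerivAt (fun s : ℝ => 2 * (s + 2) / 3) (2 * 1 / 3) s :=
      (((hasDerivAt_id s).add_const 2).const_mul 2).div_const 3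
    have h2 : HasDerivAt morseRoot (2 * 1 / 3 / (2 * morseRoot s)) s := h1.sqrt (by positivity)
    refine (((hasDerivAt_id s).sub_const 1).mul h2).congr_deriv ?_
    have hsq : morseRoot s ^ 2 = 2 * (s + 2) / 3 := Real.sq_sqrt (by positivity)
    unfold modelAmp
    field_simp
    rw [hsq]
    simp
    ring
  have hcw : ContinuousOn morseRoot (Ioi 0) := by unfold morseRoot; fun_prop
  have hcm : ContinuousOn modelAmp (Ioi 0) :=
    ContinuousOn.div (by fun_prop) hcw fun s hs => (morseRoot_pos hs).ne'
  have hosc : Continuous fun s : ℝ => osc (L * (2 * s - 2/3 * s ^ 3)) :=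
    continuous_osc.comp (by fun_prop)
  have e1 : ∫ s in (1/2:ℝ)..2, ((s ^ (-(3:ℝ)/2) : ℝ) : ℂ) * osc (L * (2 * s - 2/3 * s ^ 3))
      = (∫ s in (1/2:ℝ)..2, ((√2)⁻¹ : ℝ) * osc (4/3 * L) *
          (modelAmp s • ((fun v => osc (-(L * v ^ 2))) ∘ (fun s => (s - 1) * morseRoot s)) s))
        + ∫ s in (1/2:ℝ)..2, ((quotAmp s * (2 - 2 * s ^ 2) : ℝ) : ℂ)
            * osc (L * (2 * s - 2/3 * s ^ 3)) := by
    rw [← intervalIntegral.integral_add]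
    · refine intervalIntegral.integral_congr fun s hs => ?_
      have hs := hpos s hs
      have hsq : morseRoot s ^ 2 = 2 * (s + 2) / 3 := Real.sq_sqrt (by positivity)
      have e : L * (2 * s - 2/3 * s ^ 3) = 4/3 * L + -(L * ((s - 1) * morseRoot s) ^ 2) := by
        rw [mul_pow, hsq]; ring
      simp only [Function.comp, Complex.real_smul]
      rw [amp_split hs, e, osc_add]
      push_cast
      ring
    · apply ContinuousOn.intervalIntegrable
      refine continuousOn_const.mul ((hcm.mono hsub).smul ?_)
      refine (continuous_osc.comp
        (by fun_prop : Continuous fun v : ℝ => -(L * v ^ 2))).comp_continuousOn ?_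
      exact ContinuousOn.mul (by fun_prop) (hcw.mono hsub)
    · apply ContinuousOn.intervalIntegrable
      refine ContinuousOn.mul (Complex.continuous_ofReal.comp_continuousOn
        (ContinuousOn.mul (contDiffOn_quotAmp.continuousOn.mono hsub) (by fun_prop))) hosc.continuousOn
  rw [e1, intervalIntegral.integral_const_mul, intervalIntegral.integral_deriv_smul_comp
    (g := fun v => osc (-(L * v ^ 2))) (fun s hs => hdw s (hsub hs)) (hcm.mono hsub) (continuous_osc.comp (by fun_prop))]
  have e2 : (1/2 - 1 : ℝ) * morseRoot (1/2) = -p := by rw [hp]; ring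
  have e3 : (2 - 1 : ℝ) * morseRoot 2 = q := by rw [hq]; ring
  simp only [e2, e3]
  have b1 := norm_integral_osc_le (φ := fun s => 2 * s - 2/3 * s ^ 3) (φ' := fun s => 2 - 2 * s ^ 2)
    (by norm_num : (1/2:ℝ) ≤ 2) hL
    (fun s _ => (((hasDerivAt_id s).const_mul 2).sub
      ((hasDerivAt_pow 3 s).const_mul (2/3))).congr_deriv (by simp; ring)) (by fun_prop)
    (fun s hs => hdq s (hsub (by rwa [uIcc_of_le (by norm_num)])))
    ((hcq.mono hsub).intervalIntegrable)
  have b2 := hF p q L hp0 hq0 hL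
  have b3 : ‖(((√2)⁻¹ : ℝ) * osc (4/3 * L) : ℂ) * ((∫ v in (-p)..q, osc (-(L * v ^ 2)))
      - ((√L)⁻¹ : ℝ) * F)‖ ≤ (√2)⁻¹ * ((2 / p + 2 / q) / L) := by
    rw [norm_mul, norm_mul, norm_osc, Complex.norm_real, Real.norm_of_nonneg (by positivity),
      mul_one]
    gcongr
  rw [add_div, mul_div_assoc, add_comm (_ / L)]
  refine le_trans (le_of_eq ?_) ((norm_add_le _ _).trans (add_le_add b3 b1))
  congr 1
  ring

/-! ### Non-stationary regions away from zero, and the regular amplitude near zero -/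

lemma hasDerivAt_phase (s : ℝ) :
    HasDerivAt (fun s : ℝ => 2 * s - 2/3 * s ^ 3) (2 - 2 * s ^ 2) s :=
  (((hasDerivAt_id s).const_mul 2).sub
    ((hasDerivAt_pow 3 s).const_mul (2/3))).congr_deriv (by simp; ring)

/-- The contribution of the phase `2s` (the subtracted term) away from zero. -/
lemma linear_tail {L R : ℝ} (hL : 0 < L) (hR : 1/2 ≤ R) :
    ‖∫ s in (1/2:ℝ)..R, ((s ^ (-(3:ℝ)/2) : ℝ) : ℂ) * osc (L * (2 * s))‖
      ≤ 4 * (1/2:ℝ) ^ (-(3:ℝ)/2) / L := by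
  have hb : ∀ s : ℝ, 1/2 ≤ s → |-(s ^ (-(3:ℝ)/2)) / 2| ≤ (1/2:ℝ) ^ (-(3:ℝ)/2) := by
    intro s hs
    have hs0 : 0 < s := by linarith
    have h1 : s ^ (-(3:ℝ)/2) ≤ (1/2:ℝ) ^ (-(3:ℝ)/2) :=
      Real.rpow_le_rpow_of_nonpos (by norm_num) hs (by norm_num)
    have h2 : 0 < s ^ (-(3:ℝ)/2) := by positivity
    rw [neg_div, abs_neg, abs_of_pos (by positivity)]
    linarith
  have h := norm_integral_osc_le_of_monotone (φ := fun s => 2 * s) (φ' := fun _ => 2)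
    (H := fun s => -(s ^ (-(3:ℝ)/2)) / 2)
    (H' := fun s => -(-(3:ℝ)/2 * s ^ (-(3:ℝ)/2 - 1)) / 2) hR hL
    (fun s _ => ((hasDerivAt_id s).const_mul 2).congr_deriv (by simp)) (by fun_prop)
    (fun s hs => ((Real.hasDerivAt_rpow_const
      (Or.inl (by linarith [hs.1] : (0:ℝ) < s).ne')).neg).div_const 2)
    (fun s hs => by
      have : 0 < s := by linarith [hs.1]
      have : 0 < s ^ (-(3:ℝ)/2 - 1) := by positivity
      linarith)
    (hb _ le_rfl) (hb _ hR)
  rw [← norm_neg, ← intervalIntegral.integral_neg]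
  refine le_trans (le_of_eq ?_) h
  congr 1
  refine intervalIntegral.integral_congr fun s _ => ?_
  simp only [div_mul_cancel₀ _ (two_ne_zero' ℝ), Complex.ofReal_neg, neg_mul]

lemma cubic_tail {L R : ℝ} (hL : 0 < L) (hR : 2 ≤ R) :
    ‖∫ s in (2:ℝ)..R, ((s ^ (-(3:ℝ)/2) : ℝ) : ℂ) * osc (L * (2 * s - 2/3 * s ^ 3))‖
      ≤ 4 * 1 / L := by
  have hn : ∀ s : ℝ, 2 ≤ s → 2 - 2 * s ^ 2 < -1 := fun s hs => by nlinarith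
  have hb : ∀ s : ℝ, 2 ≤ s → |s ^ (-(3:ℝ)/2) / (2 - 2 * s ^ 2)| ≤ 1 := by
    intro s hs
    have hs0 : 0 < s := by linarith
    have h1 : s ^ (-(3:ℝ)/2) ≤ 1 :=
      Real.rpow_le_one_of_one_le_of_nonpos (by linarith) (by norm_num)
    have h2 : 0 < s ^ (-(3:ℝ)/2) := by positivity
    have h3 := hn s hs
    rw [abs_div, abs_of_pos h2, abs_of_neg (by linarith), div_le_one (by linarith)]
    linarith
  have h := norm_integral_osc_le_of_monotone (φ := fun s => 2 * s - 2/3 * s ^ 3)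
    (φ' := fun s => 2 - 2 * s ^ 2)
    (H := fun s => s ^ (-(3:ℝ)/2) / (2 - 2 * s ^ 2))
    (H' := fun s => (-(3:ℝ)/2 * s ^ (-(3:ℝ)/2 - 1) * (2 - 2 * s ^ 2) - s ^ (-(3:ℝ)/2) * (-4 * s))
      / (2 - 2 * s ^ 2) ^ 2) hR hL
    (fun s _ => hasDerivAt_phase s) (by fun_prop)
    (fun s hs => (Real.hasDerivAt_rpow_const
      (Or.inl (by linarith [hs.1] : (0:ℝ) < s).ne')).div
      (((hasDerivAt_pow 2 s).const_mul 2).const_sub 2 |>.congr_deriv (by simp; ring))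
      (by linarith [hn s hs.1]))
    (fun s hs => by
      have : 0 < s := by linarith [hs.1]
      have h1 : 0 < s ^ (-(3:ℝ)/2 - 1) := by positivity
      have h2 : 0 < s ^ (-(3:ℝ)/2) * s := by positivity
      have h3 := hn s hs.1
      refine div_nonneg ?_ (by positivity)
      nlinarith [mul_pos h1 (by linarith : 0 < -(2 - 2 * s ^ 2))])
    (hb _ le_rfl) (hb _ hR)
  refine le_trans (le_of_eq ?_) h
  congr 1
  refine intervalIntegral.integral_congr fun s hs => ?_
  rw [uIcc_of_le hR] at hs
  have h3 : 2 - 2 * s ^ 2 ≠ 0 := by linarith [hn s hs.1]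
  simp only [div_mul_cancel₀ _ h3]

lemma cubic_near {L δ : ℝ} (hL : 0 < L) (hδ : 0 < δ) (hδ' : δ ≤ 1/2) :
    ‖∫ s in δ..(1/2:ℝ), ((s ^ ((1:ℝ)/2) : ℝ) : ℂ) * osc (L * (2 * s - 2/3 * s ^ 3))‖
      ≤ 4 * 1 / L := by
  have hn : ∀ s : ℝ, 0 < s → s ≤ 1/2 → 1 < 2 - 2 * s ^ 2 := fun s hs _ => by nlinarith
  have hb : ∀ s : ℝ, 0 < s → s ≤ 1/2 → |s ^ ((1:ℝ)/2) / (2 - 2 * s ^ 2)| ≤ 1 := by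
    intro s hs0 hs
    have h1 : s ^ ((1:ℝ)/2) ≤ 1 := Real.rpow_le_one hs0.le (by linarith) (by norm_num)
    have h2 : 0 < s ^ ((1:ℝ)/2) := by positivity
    have h3 := hn s hs0 hs
    rw [abs_div, abs_of_pos h2, abs_of_pos (by linarith), div_le_one (by linarith)]
    linarith
  have h := norm_integral_osc_le_of_monotone (φ := fun s => 2 * s - 2/3 * s ^ 3)
    (φ' := fun s => 2 - 2 * s ^ 2)
    (H := fun s => s ^ ((1:ℝ)/2) / (2 - 2 * s ^ 2))
    (H' := fun s => ((1:ℝ)/2 * s ^ ((1:ℝ)/2 - 1) * (2 - 2 * s ^ 2) - s ^ ((1:ℝ)/2) * (-4 * s))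
      / (2 - 2 * s ^ 2) ^ 2) hδ' hL
    (fun s _ => hasDerivAt_phase s) (by fun_prop)
    (fun s hs => (Real.hasDerivAt_rpow_const
      (Or.inl (hδ.trans_le hs.1).ne')).div
      (((hasDerivAt_pow 2 s).const_mul 2).const_sub 2 |>.congr_deriv (by simp; ring))
      (by linarith [hn s (hδ.trans_le hs.1) hs.2]))
    (fun s hs => by
      have : 0 < s := hδ.trans_le hs.1
      have h1 : 0 < s ^ ((1:ℝ)/2 - 1) := by positivity
      have h2 : 0 < s ^ ((1:ℝ)/2) * s := by positivity
      have h3 := hn s this hs.2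
      refine div_nonneg ?_ (by positivity)
      nlinarith [mul_pos h1 (by linarith : 0 < (2 - 2 * s ^ 2))])
    (hb _ hδ hδ') (hb _ (by norm_num) le_rfl)
  refine le_trans (le_of_eq ?_) h
  congr 1
  refine intervalIntegral.integral_congr fun s hs => ?_
  rw [uIcc_of_le hδ'] at hs
  have h3 : 2 - 2 * s ^ 2 ≠ 0 := by linarith [hn s (hδ.trans_le hs.1) hs.2]
  simp only [div_mul_cancel₀ _ h3]

/-! ### The singularity at zero -/

/-- The difference of the two exponentials, with cubic phase `2s - (2/3)s³` and linear phase `2s`;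
it is `O(L s³)` near zero. -/
noncomputable def oscDiff (L s : ℝ) : ℂ := osc (L * (2 * s - 2/3 * s ^ 3)) - osc (L * (2 * s))

lemma continuous_oscDiff (L : ℝ) : Continuous (oscDiff L) := by
  unfold oscDiff
  exact (continuous_osc.comp (by fun_prop)).sub (continuous_osc.comp (by fun_prop))

lemma norm_oscDiff_le_two (L s : ℝ) : ‖oscDiff L s‖ ≤ 2 := by
  refine (norm_sub_le _ _).trans ?_
  rw [norm_osc, norm_osc]; norm_num

lemma norm_oscDiff_le {L s : ℝ} (hL : 0 < L) (hs : 0 ≤ s) : ‖oscDiff L s‖ ≤ L * s ^ 3 := by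
  refine (norm_osc_sub_le _ _).trans ?_
  have h : 0 ≤ L * s ^ 3 := by positivity
  have : L * (2 * s - 2/3 * s ^ 3) - L * (2 * s) = -(2/3 * (L * s ^ 3)) := by ring
  rw [this, abs_neg, abs_of_nonneg (by positivity)]
  linarith

lemma norm_rpow_mul_oscDiff_le {L s : ℝ} (q : ℝ) (hL : 0 < L) (hs : 0 < s) :
    ‖((s ^ q : ℝ) : ℂ) * oscDiff L s‖ ≤ L * s ^ (q + 3) := by
  rw [norm_mul, Complex.norm_real, Real.norm_of_nonneg (by positivity), Real.rpow_add hs]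
  have h := norm_oscDiff_le hL hs.le
  have h2 : s ^ (3:ℝ) = s ^ 3 := by norm_cast
  rw [h2]
  calc s ^ q * ‖oscDiff L s‖ ≤ s ^ q * (L * s ^ 3) := by gcongr
    _ = _ := by ring

/-- Integration by parts near zero, obtained by differentiating `s^q * oscDiff L s`. It trades the
amplitude `s^q` for `s^(q-1)` at the gain of a factor `1/L`, plus an integral with the better amplitude
`s^(q+2)` and the cubic phase alone. -/
lemma near_step {L δ q q₁ q₂ : ℝ} (h₁ : q₁ = q - 1) (h₂ : q₂ = q + 2) (hL : 0 < L) (hδ : 0 < δ)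
    (hδ' : δ ≤ 1/2) :
    ‖∫ s in δ..(1/2:ℝ), ((s ^ q : ℝ) : ℂ) * oscDiff L s‖ ≤
      ‖∫ s in δ..(1/2:ℝ), ((s ^ q₂ : ℝ) : ℂ) * osc (L * (2 * s - 2/3 * s ^ 3))‖ +
      (2 * (1/2:ℝ) ^ q + L * δ ^ (q + 3)
        + |q| * ‖∫ s in δ..(1/2:ℝ), ((s ^ q₁ : ℝ) : ℂ) * oscDiff L s‖) / (2 * L) := by
  have hpos : ∀ s ∈ uIcc δ (1/2:ℝ), 0 < s := fun s hs => by
    rw [uIcc_of_le hδ'] at hs; exact hδ.trans_le hs.1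
  have hcr : ∀ r : ℝ, ContinuousOn (fun s : ℝ => ((s ^ r : ℝ) : ℂ)) (uIcc δ (1/2:ℝ)) := fun r =>
    Complex.continuous_ofReal.comp_continuousOn
      (continuousOn_id.rpow_const fun s hs => Or.inl (hpos s hs).ne')
  have hosc : Continuous fun s : ℝ => osc (L * (2 * s - 2/3 * s ^ 3)) :=
    continuous_osc.comp (by fun_prop)
  have i0 : IntervalIntegrable (fun s : ℝ => ((s ^ q : ℝ) : ℂ) * oscDiff L s) volume δ (1/2) :=
    ((hcr q).mul (continuous_oscDiff L).continuousOn).intervalIntegrable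
  have i1 : IntervalIntegrable (fun s : ℝ => ((s ^ q₁ : ℝ) : ℂ) * oscDiff L s) volume δ (1/2) :=
    ((hcr q₁).mul (continuous_oscDiff L).continuousOn).intervalIntegrable
  have i2 : IntervalIntegrable (fun s : ℝ => ((s ^ q₂ : ℝ) : ℂ) *
      osc (L * (2 * s - 2/3 * s ^ 3))) volume δ (1/2) :=
    ((hcr q₂).mul hosc.continuousOn).intervalIntegrable
  have key := intervalIntegral.integral_eq_sub_of_hasDerivAt
    (f := fun s => ((s ^ q : ℝ) : ℂ) * oscDiff L s)
    (f' := fun s => (q : ℂ) * (((s ^ q₁ : ℝ) : ℂ) * oscDiff L s)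
      + (2 * L * Complex.I) * (((s ^ q : ℝ) : ℂ) * oscDiff L s)
      - (2 * L * Complex.I) * (((s ^ q₂ : ℝ) : ℂ) * osc (L * (2 * s - 2/3 * s ^ 3))))
    (a := δ) (b := 1/2)
    (fun s hs => by
      have hs := hpos s hs
      have d1 := (Real.hasDerivAt_rpow_const (p := q) (Or.inl hs.ne')).ofReal_comp
      have d2 := hasDerivAt_osc ((hasDerivAt_phase s).const_mul L)
      have d3 := hasDerivAt_osc (((hasDerivAt_id s).const_mul 2).const_mul L)
      refine (d1.mul (d2.sub d3)).congr_deriv ?_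
      have e : s ^ q₂ = s ^ q * s ^ 2 := by
        rw [h₂, Real.rpow_add hs]; norm_cast
      rw [e, h₁]
      simp only [oscDiff, id, Pi.sub_apply]
      push_cast
      ring)
    (((i1.const_mul _).add (i0.const_mul _)).sub (i2.const_mul _))
  rw [intervalIntegral.integral_sub ((i1.const_mul _).add (i0.const_mul _)) (i2.const_mul _),
    intervalIntegral.integral_add (i1.const_mul _) (i0.const_mul _),
    intervalIntegral.integral_const_mul, intervalIntegral.integral_const_mul,
    intervalIntegral.integral_const_mul] at key
  have b1 : ‖((((1/2:ℝ) ^ q : ℝ)) : ℂ) * oscDiff L (1/2)‖ ≤ 2 * (1/2:ℝ) ^ q := by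
    rw [norm_mul, Complex.norm_real, Real.norm_of_nonneg (by positivity), mul_comm]
    gcongr
    exact norm_oscDiff_le_two _ _
  have b2 := norm_rpow_mul_oscDiff_le q hL hδ
  set N0 := ∫ s in δ..(1/2:ℝ), ((s ^ q : ℝ) : ℂ) * oscDiff L s
  set N1 := ∫ s in δ..(1/2:ℝ), ((s ^ q₁ : ℝ) : ℂ) * oscDiff L s
  set K := ∫ s in δ..(1/2:ℝ), ((s ^ q₂ : ℝ) : ℂ) * osc (L * (2 * s - 2/3 * s ^ 3))
  set P1 := ((((1/2:ℝ) ^ q : ℝ)) : ℂ) * oscDiff L (1/2)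
  set P0 := ((δ ^ q : ℝ) : ℂ) * oscDiff L δ
  have hL' : (2 * L * Complex.I : ℂ) ≠ 0 := by
    simp [hL.ne']
  have hnL : ‖(2 * L * Complex.I : ℂ)‖ = 2 * L := by
    simp [abs_of_pos hL]
  have e : N0 = K + (P1 - P0 - q * N1) / (2 * L * Complex.I) := by
    rw [← sub_eq_iff_eq_add', eq_div_iff hL']
    linear_combination key
  rw [e]
  refine (norm_add_le _ _).trans ?_
  rw [norm_div, hnL]
  gcongr
  refine (norm_sub_le _ _).trans ?_
  rw [norm_mul, Complex.norm_real, Real.norm_eq_abs]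
  gcongr
  exact (norm_sub_le _ _).trans (add_le_add b1 b2)

lemma integral_rpow_neg_half_le {δ : ℝ} (hδ : 0 < δ) :
    ∫ s in δ..(1/2:ℝ), s ^ (-(1:ℝ)/2) ≤ 2 := by
  rw [integral_rpow (Or.inl (by norm_num))]
  have h1 : (1/2:ℝ) ^ (-(1:ℝ)/2 + 1) ≤ 1 :=
    Real.rpow_le_one (by norm_num) (by norm_num) (by norm_num)
  have h2 : 0 < δ ^ (-(1:ℝ)/2 + 1) := by positivity
  rw [div_le_iff₀ (by norm_num)]
  linarith

/-- Two applications of `near_step`, to the exponents `-3/2` and `-5/2`; the resulting integral with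
exponent `-7/2` converges absolutely because `oscDiff L s = O(L s³)`. -/
lemma near_bound {L δ : ℝ} (hL : 1 ≤ L) (hδ : 0 < δ) (hδ' : δ ≤ 1/2)
    (hLδ : L * δ ^ ((1:ℝ)/2) ≤ 1) :
    ‖∫ s in δ..(1/2:ℝ), ((s ^ (-(3:ℝ)/2) : ℝ) : ℂ) * oscDiff L s‖ ≤ 23 / L := by
  have hL0 : 0 < L := by linarith
  have hint : IntervalIntegrable (fun s : ℝ => s ^ (-(1:ℝ)/2)) volume δ (1/2) :=
    intervalIntegral.intervalIntegrable_rpow' (by norm_num)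
  have n7 : ‖∫ s in δ..(1/2:ℝ), ((s ^ (-(7:ℝ)/2) : ℝ) : ℂ) * oscDiff L s‖ ≤ L * 2 := by
    refine (intervalIntegral.norm_integral_le_of_norm_le hδ' (ae_of_all _ fun s hs => ?_)
      (hint.const_mul L)).trans ?_
    · refine (norm_rpow_mul_oscDiff_le _ hL0 (hδ.trans hs.1)).trans_eq ?_
      norm_num
    · rw [intervalIntegral.integral_const_mul]
      gcongr
      exact integral_rpow_neg_half_le hδ
  have k1 : ‖∫ s in δ..(1/2:ℝ), ((s ^ (-(1:ℝ)/2) : ℝ) : ℂ) *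
      osc (L * (2 * s - 2/3 * s ^ 3))‖ ≤ 2 := by
    refine (intervalIntegral.norm_integral_le_of_norm_le hδ' (ae_of_all _ fun s hs => ?_)
      hint).trans (integral_rpow_neg_half_le hδ)
    have : 0 < s := hδ.trans hs.1
    rw [norm_mul, norm_osc, mul_one, Complex.norm_real, Real.norm_of_nonneg (by positivity)]
  have n5 := near_step (q := -(5:ℝ)/2) (q₁ := -(7:ℝ)/2) (q₂ := -(1:ℝ)/2) (by norm_num)
    (by norm_num) hL0 hδ hδ'
  have n3 := near_step (q := -(3:ℝ)/2) (q₁ := -(5:ℝ)/2) (q₂ := (1:ℝ)/2) (by norm_num)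
    (by norm_num) hL0 hδ hδ'
  have hhalf : ∀ q : ℝ, -3 ≤ q → (1/2:ℝ) ^ q ≤ 8 := by
    intro q hq
    calc (1/2:ℝ) ^ q ≤ (1/2:ℝ) ^ (-3:ℝ) :=
          Real.rpow_le_rpow_of_exponent_ge (by norm_num) (by norm_num) hq
      _ = 8 := by
          rw [Real.rpow_neg (by norm_num)]; norm_num
  have h5 := hhalf (-(5:ℝ)/2) (by norm_num)
  have h3 := hhalf (-(3:ℝ)/2) (by norm_num)
  have d5 : L * δ ^ (-(5:ℝ)/2 + 3) ≤ 1 := by norm_num at hLδ ⊢; exact hLδ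
  have d3 : L * δ ^ (-(3:ℝ)/2 + 3) ≤ 1 := by
    refine le_trans ?_ hLδ
    gcongr ?_ * ?_
    exact Real.rpow_le_rpow_of_exponent_ge hδ (by linarith) (by norm_num)
  have a5 : |(-(5:ℝ)/2)| = 5/2 := by rw [abs_of_neg] <;> norm_num
  have a3 : |(-(3:ℝ)/2)| = 3/2 := by rw [abs_of_neg] <;> norm_num
  rw [a5] at n5
  rw [a3] at n3
  have m5 : ‖∫ s in δ..(1/2:ℝ), ((s ^ (-(5:ℝ)/2) : ℝ) : ℂ) * oscDiff L s‖ ≤ 13 := by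
    refine n5.trans ?_
    have : (2 * (1/2:ℝ) ^ (-(5:ℝ)/2) + L * δ ^ (-(5:ℝ)/2 + 3)
        + 5/2 * ‖∫ s in δ..(1/2:ℝ), ((s ^ (-(7:ℝ)/2) : ℝ) : ℂ) * oscDiff L s‖) / (2 * L) ≤ 11 := by
      rw [div_le_iff₀ (by positivity)]
      linarith
    linarith
  refine n3.trans ?_
  have kk := cubic_near hL0 hδ hδ'
  have : (2 * (1/2:ℝ) ^ (-(3:ℝ)/2) + L * δ ^ (-(3:ℝ)/2 + 3)
        + 3/2 * ‖∫ s in δ..(1/2:ℝ), ((s ^ (-(5:ℝ)/2) : ℝ) : ℂ) * oscDiff L s‖) / (2 * L)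
        ≤ 19 / L := by
      rw [div_le_div_iff₀ (by positivity) hL0]
      nlinarith
  calc _ ≤ 4 * 1 / L + 19 / L := add_le_add kk this
    _ = 23 / L := by ring

/-! ### The half-line integral -/

/-- The integrand on the half-line, with linear coefficient `x` and cubic coefficient `y`. Keeping both
free covers the original integrand (`x = 2t`, `y = 2/3`) and the rescaled one (`x = 2L`, `y = 2L/3`). -/
noncomputable def loopKernel (x y s : ℝ) : ℂ :=
  ((s ^ (-(3:ℝ)/2) : ℝ) : ℂ) * (osc (x * s - y * s ^ 3) - osc (x * s))

lemma integrableOn_loopKernel (x y : ℝ) : IntegrableOn (loopKernel x y) (Ioi 0) := by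
  have hc : ContinuousOn (loopKernel x y) (Ioi 0) := by
    unfold loopKernel
    refine ContinuousOn.mul (Complex.continuous_ofReal.comp_continuousOn
      (continuousOn_id.rpow_const fun s hs => Or.inl (ne_of_gt hs))) ?_
    exact ((continuous_osc.comp (by fun_prop)).sub
      (continuous_osc.comp (by fun_prop))).continuousOn
  rw [← Ioc_union_Ioi_eq_Ioi (zero_le_one' ℝ)]
  refine IntegrableOn.union ?_ ?_
  · refine Integrable.mono' (g := fun _ => |y|) (by simp)
      ((hc.mono Ioc_subset_Ioi_self).aestronglyMeasurable measurableSet_Ioc) ?_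
    refine (ae_restrict_iff' measurableSet_Ioc).2 (ae_of_all _ fun s hs => ?_)
    have hs0 : 0 < s := hs.1
    unfold loopKernel
    rw [norm_mul, Complex.norm_real, Real.norm_of_nonneg (by positivity)]
    have h := norm_osc_sub_le (x * s - y * s ^ 3) (x * s)
    have e : |x * s - y * s ^ 3 - x * s| = |y| * s ^ (3:ℝ) := by
      have : x * s - y * s ^ 3 - x * s = -(y * s ^ 3) := by ring
      rw [this, abs_neg, abs_mul, abs_of_pos (by positivity : 0 < s ^ 3)]
      norm_cast
    rw [e] at h
    calc _ ≤ s ^ (-(3:ℝ)/2) * (|y| * s ^ (3:ℝ)) := by gcongr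
      _ = |y| * s ^ (-(3:ℝ)/2 + 3) := by rw [Real.rpow_add hs0]; ring
      _ ≤ |y| * 1 := by
        gcongr
        exact Real.rpow_le_one hs0.le hs.2 (by norm_num)
      _ = |y| := mul_one _
  · refine Integrable.mono' (g := fun s => s ^ (-(3:ℝ)/2) * 2)
      ((integrableOn_Ioi_rpow_of_lt (by norm_num) one_pos).mul_const 2)
      ((hc.mono (Ioi_subset_Ioi zero_le_one)).aestronglyMeasurable measurableSet_Ioi) ?_
    refine (ae_restrict_iff' measurableSet_Ioi).2 (ae_of_all _ fun s hs => ?_)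
    have hs0 : 0 < s := one_pos.trans hs
    unfold loopKernel
    rw [norm_mul, Complex.norm_real, Real.norm_of_nonneg (by positivity)]
    gcongr
    refine (norm_sub_le _ _).trans ?_
    rw [norm_osc, norm_osc]; norm_num

lemma loopKernel_scaled (L s : ℝ) :
    loopKernel (2 * L) (2/3 * L) s = ((s ^ (-(3:ℝ)/2) : ℝ) : ℂ) * oscDiff L s := by
  unfold loopKernel oscDiff
  congr 3 <;> ring

lemma scaled_asymptotics : ∃ κ : ℂ, ∃ C : ℝ, ∀ L : ℝ, 2 ≤ L →
    ‖(∫ s in Ioi (0:ℝ), loopKernel (2 * L) (2/3 * L) s)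
      - ((√L)⁻¹ : ℝ) * osc (4/3 * L) * κ‖ ≤ C / L := by
  obtain ⟨κ, C, hC⟩ := stationary
  refine ⟨κ, 1 + 23 + C + 4 * (1/2:ℝ) ^ (-(3:ℝ)/2) + 4 * 1, fun L hL => ?_⟩
  have hL0 : 0 < L := by linarith
  have hint := integrableOn_loopKernel (2 * L) (2/3 * L)
  have hlim := (intervalIntegral_tendsto_integral_Ioi (0:ℝ) hint tendsto_id).sub_const
    (((√L)⁻¹ : ℝ) * osc (4/3 * L) * κ)
  refine le_of_tendsto hlim.norm ?_
  filter_upwards [eventually_ge_atTop 2] with R hR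
  simp only [id]
  -- On `[0, L⁻²]` the trivial bound `‖integrand‖ ≤ L` already gives `O(1/L)`.
  set δ : ℝ := (L ^ 2)⁻¹ with hδ
  have hδ0 : 0 < δ := by positivity
  have hδ1 : δ ≤ 1/4 := by
    rw [hδ, inv_le_comm₀ (by positivity) (by norm_num)]
    nlinarith
  have hLδ : L * δ ^ ((1:ℝ)/2) ≤ 1 := by
    rw [← Real.sqrt_eq_rpow, hδ, Real.sqrt_inv, Real.sqrt_sq hL0.le, mul_inv_cancel₀ hL0.ne']
  have hii : ∀ a b : ℝ, 0 ≤ a → a ≤ b →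
      IntervalIntegrable (loopKernel (2 * L) (2/3 * L)) volume a b := fun a b ha hab => by
    rw [intervalIntegrable_iff_integrableOn_Ioc_of_le hab]
    exact hint.mono_set fun s hs => ha.trans_lt hs.1
  have hcr : ∀ a b : ℝ, 0 < a → a ≤ b →
      ContinuousOn (fun s : ℝ => ((s ^ (-(3:ℝ)/2) : ℝ) : ℂ)) (uIcc a b) := fun a b ha hab => by
    refine Complex.continuous_ofReal.comp_continuousOn
      (continuousOn_id.rpow_const fun s hs => Or.inl ?_)
    rw [uIcc_of_le hab] at hs
    exact (ha.trans_le hs.1).ne'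
  have ic : ∀ a b : ℝ, 0 < a → a ≤ b → IntervalIntegrable (fun s : ℝ =>
      ((s ^ (-(3:ℝ)/2) : ℝ) : ℂ) * osc (L * (2 * s - 2/3 * s ^ 3))) volume a b :=
    fun a b ha hab => ((hcr a b ha hab).mul
      (continuous_osc.comp (by fun_prop)).continuousOn).intervalIntegrable
  have il : ∀ a b : ℝ, 0 < a → a ≤ b → IntervalIntegrable (fun s : ℝ =>
      ((s ^ (-(3:ℝ)/2) : ℝ) : ℂ) * osc (L * (2 * s))) volume a b :=
    fun a b ha hab => ((hcr a b ha hab).mul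
      (continuous_osc.comp (by fun_prop)).continuousOn).intervalIntegrable
  have hhR : (1/2:ℝ) ≤ R := by linarith
  have e1 : ∫ s in (1/2:ℝ)..R, loopKernel (2 * L) (2/3 * L) s =
      (∫ s in (1/2:ℝ)..2, ((s ^ (-(3:ℝ)/2) : ℝ) : ℂ) * osc (L * (2 * s - 2/3 * s ^ 3)))
      + (∫ s in (2:ℝ)..R, ((s ^ (-(3:ℝ)/2) : ℝ) : ℂ) * osc (L * (2 * s - 2/3 * s ^ 3)))
      - ∫ s in (1/2:ℝ)..R, ((s ^ (-(3:ℝ)/2) : ℝ) : ℂ) * osc (L * (2 * s)) := by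
    rw [intervalIntegral.integral_add_adjacent_intervals
      (ic _ _ (by norm_num) (by norm_num)) (ic _ _ (by norm_num) hR),
      ← intervalIntegral.integral_sub (ic _ _ (by norm_num) hhR) (il _ _ (by norm_num) hhR)]
    refine intervalIntegral.integral_congr fun s _ => ?_
    simp only [loopKernel_scaled, oscDiff, mul_sub]
  have b0 : ‖∫ s in (0:ℝ)..δ, loopKernel (2 * L) (2/3 * L) s‖ ≤ 1 / L := by
    refine (intervalIntegral.norm_integral_le_of_norm_le_const (C := L) fun s hs => ?_).trans ?_
    · rw [uIoc_of_le hδ0.le] at hs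
      rw [loopKernel_scaled]
      refine (norm_rpow_mul_oscDiff_le _ hL0 hs.1).trans ?_
      refine mul_le_of_le_one_right hL0.le ?_
      exact Real.rpow_le_one hs.1.le (by linarith [hs.2]) (by norm_num)
    · rw [sub_zero, abs_of_pos hδ0, hδ]
      refine le_of_eq ?_
      field_simp
  have b1 := near_bound (by linarith) hδ0 (by linarith) hLδ
  have b2 := hC L hL0
  have b3 := linear_tail hL0 hhR
  have b4 := cubic_tail hL0 hR
  rw [← intervalIntegral.integral_add_adjacent_intervals (hii 0 δ le_rfl hδ0.le)
    (hii δ R hδ0.le (by linarith)),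
    ← intervalIntegral.integral_add_adjacent_intervals (hii δ (1/2) hδ0.le (by linarith))
    (hii (1/2) R (by norm_num) hhR), e1]
  simp only [loopKernel_scaled] at b0 ⊢
  rw [add_div, add_div, add_div, add_div]
  refine le_trans (le_of_eq ?_) ((norm_add_le _ _).trans (add_le_add ((norm_sub_le _ _).trans
    (add_le_add ((norm_add_le _ _).trans (add_le_add ((norm_add_le _ _).trans
      (add_le_add b0 b1)) b2)) b3)) b4))
  congr 1
  ring

/-- The substitution `β = √t s`, which moves the stationary point to `s = 1` and produces the large
parameter `L = t^{3/2}`. -/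
lemma integral_loopKernel_scaling {t : ℝ} (ht : 0 < t) :
    ∫ s in Ioi (0:ℝ), loopKernel (2 * t) (2/3) s = (((√t) ^ (-(1:ℝ)/2) : ℝ) : ℂ) *
      ∫ s in Ioi (0:ℝ), loopKernel (2 * √t ^ 3) (2/3 * √t ^ 3) s := by
  have hr : 0 < √t := Real.sqrt_pos.2 ht
  have htt : t = √t ^ 2 := (Real.sq_sqrt ht.le).symm
  have h := integral_comp_mul_left_Ioi (loopKernel (2 * t) (2/3)) 0 hr
  rw [mul_zero] at h
  have e : ∀ s ∈ Ioi (0:ℝ), loopKernel (2 * t) (2/3) (√t * s) =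
      (((√t) ^ (-(3:ℝ)/2) : ℝ) : ℂ) * loopKernel (2 * √t ^ 3) (2/3 * √t ^ 3) s := by
    intro s hs
    unfold loopKernel
    rw [Real.mul_rpow hr.le (le_of_lt hs), Complex.ofReal_mul, mul_assoc]
    have e1 : 2 * t * (√t * s) = 2 * √t ^ 3 * s := by
      rw [← Real.sq_sqrt ht.le]; simp only [Real.sqrt_sq hr.le]; ring
    have e2 : 2/3 * (√t * s) ^ 3 = 2/3 * √t ^ 3 * s ^ 3 := by ring
    rw [e1, e2]
  rw [setIntegral_congr_fun measurableSet_Ioi e, integral_const_mul] at h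
  have e3 : (√t) ^ (-(1:ℝ)/2) = √t * (√t) ^ (-(3:ℝ)/2) := by
    rw [← Real.rpow_one_add' hr.le (by norm_num)]; norm_num
  rw [e3, Complex.ofReal_mul, mul_assoc, h, Complex.real_smul, ← mul_assoc, ← Complex.ofReal_mul,
    mul_inv_cancel₀ hr.ne', Complex.ofReal_one, one_mul]

lemma halfLine_asymptotics : ∃ κ : ℂ, ∃ C : ℝ, ∀ t : ℝ, 2 ≤ t →
    ‖(∫ s in Ioi (0:ℝ), loopKernel (2 * t) (2/3) s)
      - ((t⁻¹ : ℝ) : ℂ) * osc (4/3 * t ^ ((3:ℝ)/2)) * κ‖ ≤ C * t ^ (-(3:ℝ)/2) := by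
  obtain ⟨κ, C, hC⟩ := scaled_asymptotics
  refine ⟨κ, C, fun t ht => ?_⟩
  have ht0 : 0 < t := by linarith
  have hr : 0 < √t := Real.sqrt_pos.2 ht0
  have hr1 : 1 ≤ √t := Real.one_le_sqrt.2 (by linarith)
  have h3 : √t ^ 3 = t ^ ((3:ℝ)/2) := by
    rw [Real.sqrt_eq_rpow, ← Real.rpow_natCast, ← Real.rpow_mul ht0.le]; norm_num
  have hL : 2 ≤ √t ^ 3 := by
    have := Real.sq_sqrt ht0.le
    nlinarith
  have h := hC _ hL
  have hCn : 0 ≤ C / √t ^ 3 := (norm_nonneg _).trans h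
  have e1 : t⁻¹ = (√t) ^ (-(1:ℝ)/2) * (√(√t ^ 3))⁻¹ := by
    rw [Real.sqrt_eq_rpow (√t ^ 3), ← Real.rpow_natCast, ← Real.rpow_mul hr.le,
      ← Real.rpow_neg hr.le, ← Real.rpow_add hr]
    norm_num
    exact (Real.sq_sqrt ht0.le).symm
  have e2 : C * t ^ (-(3:ℝ)/2) = C / √t ^ 3 := by
    rw [h3, neg_div, Real.rpow_neg ht0.le, ← div_eq_mul_inv]
  rw [integral_loopKernel_scaling ht0, e1, e2, ← h3, Complex.ofReal_mul, mul_assoc, mul_assoc,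
    ← mul_sub, ← mul_assoc, norm_mul, Complex.norm_real, Real.norm_of_nonneg (by positivity)]
  calc _ ≤ 1 * (C / √t ^ 3) := by
        gcongr
        exact Real.rpow_le_one_of_one_le_of_nonpos hr1 (by norm_num)
    _ = _ := one_mul _

/-! ### Reduction of the kernel to the half-line integral -/

/-- The integrand at `-β` is minus the conjugate of the integrand at `β`, so that the integral over the
line is `2i` times the imaginary part of the integral over the half-line. -/
lemma shortLoopQ_eq_im (t : ℝ) :
    shortLoopQ t = (((2*Real.pi) ^ (-(3:ℝ)/2) *
      (osc (-(Real.pi/4)) * ∫ s in Ioi (0:ℝ), loopKernel (2 * t) (2/3) s).im : ℝ) : ℂ) := by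
  set Z := osc (-(Real.pi/4)) * ∫ s in Ioi (0:ℝ), loopKernel (2 * t) (2/3) s with hZ
  unfold shortLoopQ
  set F : ℝ → ℂ := fun β => (Real.sign β : ℂ) * ((|β| ^ (-(3:ℝ)/2) : ℝ) : ℂ) *
      Complex.exp (-Complex.I * ((Real.pi : ℂ)/4) * (Real.sign β : ℂ)
        + 2 * Complex.I * (β : ℂ) * (t : ℂ)) *
      (Complex.exp (-(2/3) * Complex.I * (β : ℂ)^3) - 1) with hF
  set G : ℝ → ℂ := fun s => osc (-(Real.pi/4)) * loopKernel (2 * t) (2/3) s with hG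
  have hGi : IntegrableOn G (Ioi 0) := (integrableOn_loopKernel _ _).const_mul _
  have hGZ : ∫ s in Ioi (0:ℝ), G s = Z := integral_const_mul _ _
  have f1 : ∀ s ∈ Ioi (0:ℝ), F s = G s := by
    intro s hs
    have hs : 0 < s := hs
    simp only [hF, hG, Real.sign_of_pos hs, abs_of_pos hs, loopKernel, osc]
    push_cast
    rw [show (2 * (t:ℂ) * s - 2/3 * (s:ℂ)^3) * Complex.I
      = 2 * (t:ℂ) * s * Complex.I + -(2/3) * Complex.I * (s:ℂ)^3 by ring,
      show -Complex.I * ((Real.pi : ℂ)/4) * 1 + 2 * Complex.I * (s : ℂ) * (t : ℂ)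
      = -((Real.pi : ℂ)/4) * Complex.I + 2 * (t:ℂ) * s * Complex.I by ring,
      Complex.exp_add, Complex.exp_add]
    ring
  have f2 : ∀ s ∈ Ioi (0:ℝ), F (-s) = -(starRingEnd ℂ) (G s) := by
    intro s hs
    rw [← f1 s hs]
    have hs : 0 < s := hs
    simp only [hF, Real.sign_of_pos hs, Real.sign_of_neg (neg_lt_zero.2 hs), abs_neg, map_mul,
      map_sub, map_one, ← Complex.exp_conj, Complex.conj_ofReal]
    simp only [Complex.ofReal_neg, Complex.ofReal_one, map_neg, map_mul, map_add, map_pow, map_div₀,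
      map_ofNat, map_one, Complex.conj_I, Complex.conj_ofReal]
    ring_nf
  have hFp : IntegrableOn F (Ioi 0) := hGi.congr_fun (fun s hs => (f1 s hs).symm) measurableSet_Ioi
  have hconj : IntegrableOn (fun s => -(starRingEnd ℂ) (G s)) (Ioi 0) :=
    (Complex.conjCLE.toContinuousLinearMap.integrable_comp hGi).neg
  have hFn' : IntegrableOn (fun s => F (-s)) (Ioi 0) :=
    hconj.congr_fun (fun s hs => (f2 s hs).symm) measurableSet_Ioi
  have hFn : IntegrableOn F (Iic 0) := by
    rw [integrableOn_Iic_iff_integrableOn_Iio]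
    have := hFn'.comp_neg
    simpa using this
  have hsplit : ∫ β, F β = Z - (starRingEnd ℂ) Z := by
    rw [← intervalIntegral.integral_Iic_add_Ioi hFn hFp]
    have hneg := integral_comp_neg_Ioi 0 F
    rw [neg_zero] at hneg
    rw [← hneg, setIntegral_congr_fun measurableSet_Ioi f2, setIntegral_congr_fun measurableSet_Ioi f1,
      integral_neg, integral_conj, hGZ]
    ring
  rw [hsplit, Complex.sub_conj]
  push_cast
  field_simp

/-- There exist real constants `A`, `B` such that
`Q(t) − t^{−1}(A cos((4/3)t^{3/2}) + B sin((4/3)t^{3/2})) = O(t^{−3/2})` as `t → +∞`. -/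
theorem shortLoopQ_asymptotics :
    ∃ A B : ℝ,
      (fun t : ℝ => shortLoopQ t - ((t⁻¹ : ℝ) : ℂ) *
          ((A * Real.cos ((4/3) * t ^ ((3:ℝ)/2)) + B * Real.sin ((4/3) * t ^ ((3:ℝ)/2)) : ℝ) : ℂ))
        =O[atTop] fun t : ℝ => t ^ (-(3:ℝ)/2) := by
  obtain ⟨κ, C, hC⟩ := halfLine_asymptotics
  set c : ℝ := (2*Real.pi) ^ (-(3:ℝ)/2) with hc
  have hc0 : 0 ≤ c := by positivity
  set μ : ℂ := osc (-(Real.pi/4)) * κ with hμ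
  refine ⟨c * μ.im, c * μ.re, IsBigO.of_bound (c * C) ?_⟩
  filter_upwards [eventually_ge_atTop 2] with t ht
  have h := hC t ht
  set J := ∫ s in Ioi (0:ℝ), loopKernel (2 * t) (2/3) s with hJ
  set θ := 4/3 * t ^ ((3:ℝ)/2) with hθ
  have key : shortLoopQ t - ((t⁻¹ : ℝ) : ℂ) *
      ((c * μ.im * Real.cos θ + c * μ.re * Real.sin θ : ℝ) : ℂ)
      = ((c * (osc (-(Real.pi/4)) * (J - ((t⁻¹ : ℝ) : ℂ) * osc θ * κ)).im : ℝ) : ℂ) := by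
    rw [shortLoopQ_eq_im, ← hJ, ← Complex.ofReal_mul, ← Complex.ofReal_sub]
    congr 1
    have e : osc (-(Real.pi/4)) * (J - ((t⁻¹ : ℝ) : ℂ) * osc θ * κ)
        = osc (-(Real.pi/4)) * J - ((t⁻¹ : ℝ) : ℂ) * (osc θ * μ) := by rw [hμ]; ring
    have eθ : (osc θ * μ).im = Real.cos θ * μ.im + Real.sin θ * μ.re := by
      rw [Complex.mul_im, osc, Complex.exp_ofReal_mul_I_re, Complex.exp_ofReal_mul_I_im]
    rw [e, Complex.sub_im, Complex.im_ofReal_mul, eθ]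
    ring
  rw [key, Complex.norm_real, Real.norm_eq_abs, abs_mul, abs_of_nonneg hc0]
  have ht0 : 0 < t := by linarith
  rw [Real.norm_of_nonneg (by positivity : 0 ≤ t ^ (-(3:ℝ)/2))]
  refine (mul_le_mul_of_nonneg_left ?_ hc0).trans_eq (mul_assoc _ _ _).symm
  refine (Complex.abs_im_le_norm _).trans ?_
  rwa [norm_mul, norm_osc, one_mul]
end

section
/- Let Q : (0, ∞) → ℂ be defined by Q(t) = (2π)^{−3/2} (2i)^{−1} ∫_ℝ sign(β) |β|^{−3/2} exp(−i(π/4)·sign β + 2iβt) (exp(−(2/3)iβ³) − 1) dβ (an absolutely convergent integral), and for t > 0 let F₂(t) := (2π)^{−3/2} · lim_{R→∞} ∫_{−R}^{R} |β|^{−1/2} exp(−i(π/4)·sign β + 2iβt) (exp(−(2/3)iβ³) − 1) dβ. Then for every t > 0 the improper integral defining F₂(t) exists, Q is differentiable at t, and Q′(t) = F₂(t). -/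
/-!
`F₂` converges only conditionally, so one cannot differentiate under the integral over `ℝ`
directly. Instead, truncate both integrals to `[-R, R]`. There the integrand of `F₂` is bounded
(the factor `exp(-(2/3)iβ³) - 1` vanishes to third order at `β = 0`), and dominated convergence
shows that the derivative of the truncated `Q` is the truncated `F₂` (`hasDerivAt_truncated`). The
truncations of `Q` converge pointwise to `Q` by absolute integrability (`integrable_qIntegrand`).
It remains to see that the truncations of `F₂` are uniformly Cauchy on an interval around `t`
(`uniformCauchy_truncated`); the theorem on differentiating limits of functions does the rest.

By the symmetry `f(-β) = conj (f(β))` of the integrand, the Cauchy estimate reduces to tails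
`∫_R^S` with `0 < R`. Such a tail splits into two oscillatory integrals with amplitude `β^{-1/2}`,
with phases `2βt` and `2βt - (2/3)β³`. Their phase derivatives `2t` and `2t - 2β²` are bounded away
from `0` when `t` is, and when `β² ≥ t + 1`, respectively. Integrating by parts against a decreasing
amplitude (`norm_integral_oscillatory_le`) bounds both by a multiple of `R^{-1/2}`, uniformly in
`S` and locally uniformly in `t`.
-/

open MeasureTheory Filter

/-! ### Integrands and pointwise bounds -/

/-- The integrand of `shortLoopQ`. -/
noncomputable def qIntegrand (t β : ℝ) : ℂ :=
  (Real.sign β : ℂ) * ((|β| ^ (-(3:ℝ)/2) : ℝ) : ℂ) *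
      Complex.exp (-Complex.I * ((Real.pi : ℂ)/4) * (Real.sign β : ℂ)
        + 2 * Complex.I * (β : ℂ) * (t : ℂ)) *
      (Complex.exp (-(2/3) * Complex.I * (β : ℂ)^3) - 1)

/-- The integrand of the improper integral `F₂`. -/
noncomputable def fIntegrand (t β : ℝ) : ℂ :=
  ((|β| ^ (-(1:ℝ)/2) : ℝ) : ℂ) *
            Complex.exp (-Complex.I * ((Real.pi : ℂ)/4) * (Real.sign β : ℂ)
              + 2 * Complex.I * (β : ℂ) * (t : ℂ)) *
            (Complex.exp (-(2/3) * Complex.I * (β : ℂ)^3) - 1)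

lemma measurable_realSign : Measurable Real.sign := by
  unfold Real.sign
  exact Measurable.ite measurableSet_Iio measurable_const
    (Measurable.ite measurableSet_Ioi measurable_const measurable_const)

lemma measurable_qIntegrand (t : ℝ) : Measurable (qIntegrand t) := by
  have := measurable_realSign
  unfold qIntegrand
  fun_prop

lemma measurable_fIntegrand (t : ℝ) : Measurable (fIntegrand t) := by
  have := measurable_realSign
  unfold fIntegrand
  fun_prop

lemma norm_phase (t β : ℝ) :
    ‖Complex.exp (-Complex.I * ((Real.pi : ℂ)/4) * (Real.sign β : ℂ)
        + 2 * Complex.I * (β : ℂ) * (t : ℂ))‖ = 1 := by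
  have : -Complex.I * ((Real.pi : ℂ)/4) * (Real.sign β : ℂ) + 2 * Complex.I * (β : ℂ) * (t : ℂ)
      = ((-(Real.pi / 4) * Real.sign β + 2 * β * t : ℝ) : ℂ) * Complex.I := by
    push_cast; ring
  rw [this, Complex.norm_exp_ofReal_mul_I]

lemma cubic_eq (β : ℝ) : -(2/3) * Complex.I * (β : ℂ)^3
    = Complex.I * ((-(2/3) * β ^ 3 : ℝ) : ℂ) := by
  push_cast; ring

lemma norm_cubic_le_two (β : ℝ) :
    ‖Complex.exp (-(2/3) * Complex.I * (β : ℂ)^3) - 1‖ ≤ 2 := by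
  refine (norm_sub_le _ _).trans ?_
  rw [cubic_eq, Complex.norm_exp_I_mul_ofReal, norm_one]
  norm_num

lemma norm_cubic_le (β : ℝ) :
    ‖Complex.exp (-(2/3) * Complex.I * (β : ℂ)^3) - 1‖ ≤ |β| ^ 3 := by
  rw [cubic_eq]
  refine Real.norm_exp_I_mul_ofReal_sub_one_le.trans ?_
  rw [Real.norm_eq_abs, abs_mul, abs_pow, abs_neg, abs_of_pos (by norm_num : (0:ℝ) < 2/3)]
  have : 0 ≤ |β| ^ 3 := by positivity
  linarith

/-- The cubic factor vanishes to third order at `0`, which absorbs the singular weights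
`|β|^{-1/2}` and `|β|^{-3/2}`. For `s ≠ 0` the convention `0 ^ s = 0` covers `β = 0`. -/
lemma weight_mul_le_one {β s : ℝ} (hβ : |β| ≤ 1) (hs : s ≠ 0) (hs3 : -3 ≤ s) :
    |β| ^ s * ‖Complex.exp (-(2/3) * Complex.I * (β : ℂ)^3) - 1‖ ≤ 1 := by
  rcases eq_or_ne β 0 with rfl | h0
  · simp [Real.zero_rpow hs]
  have hpos : 0 < |β| := abs_pos.mpr h0
  calc |β| ^ s * ‖Complex.exp (-(2/3) * Complex.I * (β : ℂ)^3) - 1‖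
      ≤ |β| ^ s * |β| ^ 3 := by gcongr; exact norm_cubic_le β
    _ = |β| ^ (s + 3) := by
        rw [Real.rpow_add hpos]; norm_cast
    _ ≤ 1 := Real.rpow_le_one hpos.le hβ (by linarith)

lemma norm_fIntegrand (t β : ℝ) : ‖fIntegrand t β‖
    = |β| ^ (-(1:ℝ)/2) * ‖Complex.exp (-(2/3) * Complex.I * (β : ℂ)^3) - 1‖ := by
  rw [fIntegrand, norm_mul, norm_mul, norm_phase, Complex.norm_real, mul_one,
    Real.norm_of_nonneg (by positivity)]

lemma norm_fIntegrand_le (t β : ℝ) : ‖fIntegrand t β‖ ≤ 2 := by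
  rw [norm_fIntegrand]
  rcases le_total |β| 1 with h | h
  · exact (weight_mul_le_one h (by norm_num) (by norm_num)).trans (by norm_num)
  · have h1 := Real.rpow_le_one_of_one_le_of_nonpos h (by norm_num : -(1:ℝ)/2 ≤ 0)
    calc _ ≤ (1:ℝ) * 2 := by gcongr; exact norm_cubic_le_two β
      _ = 2 := one_mul 2

lemma norm_qIntegrand_le (t β : ℝ) :
    ‖qIntegrand t β‖ ≤ |β| ^ (-(3:ℝ)/2)
      * ‖Complex.exp (-(2/3) * Complex.I * (β : ℂ)^3) - 1‖ := by
  rw [qIntegrand, norm_mul, norm_mul, norm_mul, norm_phase, Complex.norm_real, Complex.norm_real,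
    mul_one, Real.norm_of_nonneg (r := |β| ^ (-(3:ℝ)/2)) (by positivity)]
  have hs : ‖Real.sign β‖ ≤ 1 := by
    rcases Real.sign_apply_eq β with h | h | h <;> simp [h]
  gcongr
  exact mul_le_of_le_one_left (by positivity) hs

/-- The integral defining `Q` is absolutely convergent: its integrand is dominated by a multiple of
`(1 + |β|)^{-3/2}`. -/
lemma integrable_qIntegrand (t : ℝ) : Integrable (qIntegrand t) := by
  have hJ : Integrable (fun β : ℝ => (2 * 2 ^ ((3:ℝ)/2)) * (1 + ‖β‖) ^ (-((3:ℝ)/2))) :=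
    (integrable_one_add_norm (by norm_num)).const_mul _
  refine hJ.mono' (measurable_qIntegrand t).aestronglyMeasurable (Eventually.of_forall fun β => ?_)
  refine (norm_qIntegrand_le t β).trans ?_
  rw [Real.norm_eq_abs]
  -- Applied with `x = 1` for `|β| ≤ 1` and with `x = |β|` for `|β| ≥ 1`.
  have key : ∀ x : ℝ, 0 < x → 1 + |β| ≤ 2 * x →
      x ^ (-(3:ℝ)/2) ≤ 2 ^ ((3:ℝ)/2) * (1 + |β|) ^ (-((3:ℝ)/2)) := by
    intro x hx h
    have h1 : (2 * x) ^ (-((3:ℝ)/2)) ≤ (1 + |β|) ^ (-((3:ℝ)/2)) :=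
      Real.rpow_le_rpow_of_nonpos (by positivity) h (by norm_num)
    rw [Real.mul_rpow (by norm_num) hx.le] at h1
    calc x ^ (-(3:ℝ)/2)
        = 2 ^ ((3:ℝ)/2) * (2 ^ (-((3:ℝ)/2)) * x ^ (-((3:ℝ)/2))) := by
          rw [← mul_assoc, ← Real.rpow_add (by norm_num)]; norm_num
      _ ≤ _ := by gcongr
  rcases le_total |β| 1 with h | h
  · refine (weight_mul_le_one h (by norm_num) (by norm_num)).trans ?_
    have := key 1 one_pos (by linarith)
    rw [Real.one_rpow] at this
    linarith
  · have h1 := key |β| (by linarith) (by linarith)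
    calc _ ≤ (2 ^ ((3:ℝ)/2) * (1 + |β|) ^ (-((3:ℝ)/2))) * 2 := by
          gcongr; exact norm_cubic_le_two β
      _ = _ := by ring

lemma intervalIntegrable_fIntegrand (t a b : ℝ) :
    IntervalIntegrable (fIntegrand t) volume a b := by
  refine (intervalIntegrable_const (c := (2:ℝ))).mono_fun
    (measurable_fIntegrand t).aestronglyMeasurable (Eventually.of_forall fun β => ?_)
  simpa using norm_fIntegrand_le t β

/-! ### Differentiating the truncated integral -/

lemma hasDerivAt_qIntegrand (t β : ℝ) :
    HasDerivAt (fun s => qIntegrand s β) (2 * Complex.I * fIntegrand t β) t := by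
  have hw : Real.sign β * |β| ^ (-(3:ℝ)/2) * β = |β| ^ (-(1:ℝ)/2) := by
    rcases eq_or_ne β 0 with rfl | h0
    · rw [abs_zero, Real.zero_rpow (by norm_num)]; simp
    have hpos : 0 < |β| := abs_pos.mpr h0
    have habs : Real.sign β * β = |β| := by
      rcases h0.lt_or_gt with h | h
      · rw [Real.sign_of_neg h, abs_of_neg h]; ring
      · rw [Real.sign_of_pos h, abs_of_pos h]; ring
    rw [mul_right_comm, habs, ← Real.rpow_one_add' hpos.le (by norm_num)]
    norm_num
  have h1 : HasDerivAt (fun s : ℝ => -Complex.I * ((Real.pi : ℂ)/4) * (Real.sign β : ℂ)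
      + 2 * Complex.I * (β : ℂ) * (s : ℂ)) (2 * Complex.I * (β : ℂ)) t := by
    simpa using ((Complex.ofRealCLM.hasDerivAt (x := t)).const_mul
      (2 * Complex.I * (β : ℂ))).const_add (-Complex.I * ((Real.pi : ℂ)/4) * (Real.sign β : ℂ))
  have h2 := ((h1.cexp.const_mul ((Real.sign β : ℂ) * ((|β| ^ (-(3:ℝ)/2) : ℝ) : ℂ))).mul_const
    (Complex.exp (-(2/3) * Complex.I * (β : ℂ)^3) - 1))
  refine h2.congr_deriv ?_
  rw [fIntegrand, ← hw]
  push_cast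
  ring

lemma hasDerivAt_truncated (t R : ℝ) :
    HasDerivAt (fun s => ∫ β in (-R)..R, qIntegrand s β)
      (2 * Complex.I * ∫ β in (-R)..R, fIntegrand t β) t := by
  have := (intervalIntegral.hasDerivAt_integral_of_dominated_loc_of_deriv_le (μ := volume)
    (a := -R) (b := R)
    (F := qIntegrand) (F' := fun s β => 2 * Complex.I * fIntegrand s β) (x₀ := t) (s := Set.univ)
    (bound := fun _ => 4) univ_mem
    (Eventually.of_forall fun s => (measurable_qIntegrand s).aestronglyMeasurable)
    (integrable_qIntegrand t).intervalIntegrable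
    ((measurable_fIntegrand t).const_mul _).aestronglyMeasurable
    (Eventually.of_forall fun β _ s _ => ?_) intervalIntegrable_const
    (Eventually.of_forall fun β _ s _ => hasDerivAt_qIntegrand s β)).2
  · rwa [intervalIntegral.integral_const_mul] at this
  · have := norm_fIntegrand_le s β
    simp only [norm_mul, Complex.norm_I, Complex.norm_ofNat]
    linarith

/-! ### Oscillatory tail estimates -/

/-- First-derivative (van der Corput) estimate: integrate by parts; since `w` is nonnegative and
decreasing, the boundary terms and the total variation of `w` add up to `2 w(a)`. An integral
`∫ g e^{iφ}` is treated by taking `w = ± g / φ'`. -/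
lemma norm_integral_oscillatory_le {w w' φ φ' : ℝ → ℝ} {a b : ℝ} (hab : a ≤ b)
    (hw : ∀ x ∈ Set.Icc a b, HasDerivAt w (w' x) x)
    (hw'c : ContinuousOn w' (Set.Icc a b)) (hw'n : ∀ x ∈ Set.Icc a b, w' x ≤ 0)
    (hb : 0 ≤ w b)
    (hφ : ∀ x, HasDerivAt φ (φ' x) x) (hφ' : Continuous φ') :
    ‖∫ x in a..b, (w x : ℂ) * (Complex.exp (φ x * Complex.I) * (φ' x * Complex.I))‖
      ≤ 2 * w a := by
  have hI : Set.uIcc a b = Set.Icc a b := Set.uIcc_of_le hab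
  have hφc : Continuous φ := continuous_iff_continuousAt.mpr fun x => (hφ x).continuousAt
  have hw'i : IntervalIntegrable w' volume a b := (hI ▸ hw'c).intervalIntegrable
  have hFTC : ∫ x in a..b, w' x = w b - w a :=
    intervalIntegral.integral_eq_sub_of_hasDerivAt (fun x hx => hw x (hI ▸ hx)) hw'i
  rw [intervalIntegral.integral_mul_deriv_eq_deriv_mul
    (u' := fun x => (w' x : ℂ)) (v := fun x => Complex.exp (φ x * Complex.I))
    (fun x hx => (hw x (hI ▸ hx)).ofReal_comp)
    (fun x _ => ((hφ x).ofReal_comp.mul_const Complex.I).cexp)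
    (by
      refine ContinuousOn.intervalIntegrable ?_
      rw [hI]; exact Complex.continuous_ofReal.comp_continuousOn hw'c)
    (Continuous.intervalIntegrable (by fun_prop) _ _)]
  have h3 : ‖∫ x in a..b, (w' x : ℂ) * Complex.exp (φ x * Complex.I)‖ ≤ ∫ x in a..b, -w' x := by
    refine intervalIntegral.norm_integral_le_of_norm_le hab (Eventually.of_forall fun x hx => ?_)
      hw'i.neg
    have := hw'n x ⟨hx.1.le, hx.2⟩
    simp [Complex.norm_exp_ofReal_mul_I, abs_of_nonpos this]
  rw [intervalIntegral.integral_neg, hFTC] at h3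
  have hle : w b ≤ w a := by
    have : ∫ x in a..b, w' x ≤ 0 := by
      have := intervalIntegral.integral_nonneg (μ := volume) hab (f := fun x => - w' x)
        (fun x hx => by have := hw'n x hx; linarith)
      rw [intervalIntegral.integral_neg] at this
      linarith
    linarith
  refine (norm_sub_le _ _).trans ?_
  have h4 := norm_sub_le ((w b : ℂ) * Complex.exp (φ b * Complex.I))
    ((w a : ℂ) * Complex.exp (φ a * Complex.I))
  simp only [norm_mul, Complex.norm_exp_ofReal_mul_I, mul_one, Complex.norm_real,
    Real.norm_of_nonneg hb, Real.norm_of_nonneg (hb.trans hle)] at h4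
  linarith

/-- The part of the tail with linear phase `2βt`, whose derivative is the constant `2t`. -/
lemma norm_tail_linear {t R S : ℝ} (ht : 0 < t) (hR : 0 < R) (hRS : R ≤ S) :
    ‖∫ β in R..S, ((β ^ (-(1:ℝ)/2) : ℝ) : ℂ) * Complex.exp ((2 * β * t : ℝ) * Complex.I)‖
      ≤ R ^ (-(1:ℝ)/2) / t := by
  have hx0 : ∀ x ∈ Set.Icc R S, 0 < x := fun x hx => hR.trans_le hx.1
  have h := norm_integral_oscillatory_le (a := R) (b := S) (w := fun β => β ^ (-(1:ℝ)/2) / (2 * t))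
    (w' := fun β => (-(1:ℝ)/2 * β ^ (-(1:ℝ)/2 - 1)) / (2 * t))
    (φ := fun β => 2 * β * t) (φ' := fun _ => 2 * t) hRS
    (fun x hx => (Real.hasDerivAt_rpow_const (Or.inl (hx0 x hx).ne')).div_const _)
    (by
      refine ContinuousOn.div_const (continuousOn_const.mul ?_) _
      exact continuousOn_id.rpow_const fun x hx => Or.inl (hx0 x hx).ne')
    (fun x hx => by
      have := hx0 x hx
      have h1 : 0 ≤ x ^ (-(1:ℝ)/2 - 1) / (2 * t) := by positivity
      have h2 : (-(1:ℝ)/2 * x ^ (-(1:ℝ)/2 - 1)) / (2 * t)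
        = -(1/2) * (x ^ (-(1:ℝ)/2 - 1) / (2 * t)) := by ring
      rw [h2]; linarith)
    (by have := hR.trans_le hRS; positivity)
    (fun x => by simpa using ((hasDerivAt_id x).const_mul 2).mul_const t) continuous_const
  have e : ∀ β : ℝ, ((β ^ (-(1:ℝ)/2) / (2 * t) : ℝ) : ℂ)
      * (Complex.exp ((2 * β * t : ℝ) * Complex.I) * ((2 * t : ℝ) * Complex.I))
      = Complex.I * (((β ^ (-(1:ℝ)/2) : ℝ) : ℂ) * Complex.exp ((2 * β * t : ℝ) * Complex.I)) := by
    intro β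
    have : (t : ℂ) ≠ 0 := by exact_mod_cast ht.ne'
    push_cast
    field_simp
  simp only [e, intervalIntegral.integral_const_mul, norm_mul, Complex.norm_I, one_mul] at h
  refine h.trans_eq ?_
  field_simp

/-- The part of the tail with cubic phase `2βt - (2/3)β³`: since `R² ≥ t + 1`, the interval lies
beyond the stationary point `β = √t`, and there `2β² - 2t ≥ 2`. -/
lemma norm_tail_cubic {t R S : ℝ} (hR : 0 < R) (hRt : t + 1 ≤ R ^ 2) (hRS : R ≤ S) :
    ‖∫ β in R..S, ((β ^ (-(1:ℝ)/2) : ℝ) : ℂ)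
        * Complex.exp ((2 * β * t - 2/3 * β ^ 3 : ℝ) * Complex.I)‖
      ≤ R ^ (-(1:ℝ)/2) := by
  have hx0 : ∀ x ∈ Set.Icc R S, 0 < x := fun x hx => hR.trans_le hx.1
  have hx1 : ∀ x ∈ Set.Icc R S, 2 ≤ 2 * x ^ 2 - 2 * t := fun x hx => by
    have : R ^ 2 ≤ x ^ 2 := by gcongr; exact hx.1
    linarith
  have hd : ∀ x : ℝ, HasDerivAt (fun β => 2 * β ^ 2 - 2 * t) (4 * x) x := fun x => by
    refine (((hasDerivAt_pow 2 x).const_mul 2).sub_const (2 * t)).congr_deriv ?_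
    norm_num; ring
  have h := norm_integral_oscillatory_le (a := R) (b := S)
    (w := fun β => β ^ (-(1:ℝ)/2) * (2 * β ^ 2 - 2 * t)⁻¹)
    (w' := fun β => (-(1:ℝ)/2 * β ^ (-(1:ℝ)/2 - 1)) * (2 * β ^ 2 - 2 * t)⁻¹
      + β ^ (-(1:ℝ)/2) * (-(4 * β) / (2 * β ^ 2 - 2 * t) ^ 2))
    (φ := fun β => 2 * β * t - 2/3 * β ^ 3) (φ' := fun β => 2 * t - 2 * β ^ 2) hRS
    (fun x hx => (Real.hasDerivAt_rpow_const (Or.inl (hx0 x hx).ne')).mul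
      ((hd x).inv (by linarith [hx1 x hx])))
    (by
      have hp : ∀ s : ℝ, ContinuousOn (fun x : ℝ => x ^ s) (Set.Icc R S) := fun s =>
        continuousOn_id.rpow_const fun x hx => Or.inl (hx0 x hx).ne'
      have hq : ContinuousOn (fun x : ℝ => 2 * x ^ 2 - 2 * t) (Set.Icc R S) := by fun_prop
      refine ((continuousOn_const.mul (hp _)).mul (hq.inv₀ ?_)).add ((hp _).mul
        (ContinuousOn.div (by fun_prop) (hq.pow 2) ?_))
      · intro x hx; linarith [hx1 x hx]
      · intro x hx; exact pow_ne_zero _ (by linarith [hx1 x hx]))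
    (fun x hx => by
      have h0 := hx0 x hx
      have h1 : 0 < 2 * x ^ 2 - 2 * t := by linarith [hx1 x hx]
      have h2 : 0 ≤ x ^ (-(1:ℝ)/2 - 1) * (2 * x ^ 2 - 2 * t)⁻¹ := by positivity
      have h3 : 0 ≤ x ^ (-(1:ℝ)/2) * ((4 * x) / (2 * x ^ 2 - 2 * t) ^ 2) := by positivity
      rw [neg_div (_ ^ 2)]
      linarith)
    (by
      have h0 := hR.trans_le hRS
      have h1 : 0 < 2 * S ^ 2 - 2 * t := by linarith [hx1 S ⟨hRS, le_rfl⟩]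
      positivity)
    (fun x => by
      refine ((((hasDerivAt_id x).const_mul 2).mul_const t).sub
        ((hasDerivAt_pow 3 x).const_mul (2/3))).congr_deriv ?_
      norm_num; ring)
    (by fun_prop)
  have e : ∀ β ∈ Set.uIcc R S, ((β ^ (-(1:ℝ)/2) * (2 * β ^ 2 - 2 * t)⁻¹ : ℝ) : ℂ)
      * (Complex.exp ((2 * β * t - 2/3 * β ^ 3 : ℝ) * Complex.I)
        * ((2 * t - 2 * β ^ 2 : ℝ) * Complex.I))
      = -Complex.I * (((β ^ (-(1:ℝ)/2) : ℝ) : ℂ)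
        * Complex.exp ((2 * β * t - 2/3 * β ^ 3 : ℝ) * Complex.I)) := by
    intro β hβ
    rw [Set.uIcc_of_le hRS] at hβ
    have h1 : ((2 * β ^ 2 - 2 * t : ℝ) : ℂ) ≠ 0 := by
      have := hx1 β hβ
      exact_mod_cast (by linarith : (2 * β ^ 2 - 2 * t) ≠ 0)
    have h2 : ((2 * t - 2 * β ^ 2 : ℝ) : ℂ) = -((2 * β ^ 2 - 2 * t : ℝ) : ℂ) := by
      push_cast; ring
    rw [h2, Complex.ofReal_mul, Complex.ofReal_inv]
    generalize ((2 * β ^ 2 - 2 * t : ℝ) : ℂ) = z at h1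
    field_simp
  rw [intervalIntegral.integral_congr e, intervalIntegral.integral_const_mul, norm_mul, norm_neg,
    Complex.norm_I, one_mul] at h
  refine h.trans ?_
  have h1 := hx1 R ⟨le_rfl, hRS⟩
  have h2 : (2 * R ^ 2 - 2 * t)⁻¹ ≤ 2⁻¹ := by gcongr
  have h3 : 0 ≤ R ^ (-(1:ℝ)/2) := by positivity
  have h4 := mul_le_mul_of_nonneg_left h2 h3
  linarith

lemma norm_tail_le {t R S : ℝ} (ht : 0 < t) (hR : 0 < R) (hRt : t + 1 ≤ R ^ 2) (hRS : R ≤ S) :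
    ‖∫ β in R..S, fIntegrand t β‖ ≤ (1 + 1 / t) * R ^ (-(1:ℝ)/2) := by
  have e : ∀ β ∈ Set.uIcc R S, fIntegrand t β
      = Complex.exp (-Complex.I * ((Real.pi : ℂ)/4)) *
        (((β ^ (-(1:ℝ)/2) : ℝ) : ℂ) * Complex.exp ((2 * β * t - 2/3 * β ^ 3 : ℝ) * Complex.I)
        - ((β ^ (-(1:ℝ)/2) : ℝ) : ℂ) * Complex.exp ((2 * β * t : ℝ) * Complex.I)) := by
    intro β hβ
    rw [Set.uIcc_of_le hRS] at hβ
    have h0 : 0 < β := hR.trans_le hβ.1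
    have e1 : ((2 * β * t - 2/3 * β ^ 3 : ℝ) : ℂ) * Complex.I
      = (2 * β * t : ℝ) * Complex.I + (-(2/3) * Complex.I * (β : ℂ)^3) := by push_cast; ring
    have e2 : 2 * Complex.I * (β : ℂ) * (t : ℂ) = (2 * β * t : ℝ) * Complex.I := by
      push_cast; ring
    rw [fIntegrand, Real.sign_of_pos h0, abs_of_pos h0, Complex.ofReal_one, mul_one, e1,
      Complex.exp_add, Complex.exp_add, e2]
    ring
  have hp : ContinuousOn (fun β : ℝ => ((β ^ (-(1:ℝ)/2) : ℝ) : ℂ)) (Set.uIcc R S) := by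
    refine Complex.continuous_ofReal.comp_continuousOn (continuousOn_id.rpow_const fun x hx => ?_)
    rw [Set.uIcc_of_le hRS] at hx
    exact Or.inl (hR.trans_le hx.1).ne'
  have hpi : ∀ ψ : ℝ → ℝ, Continuous ψ → IntervalIntegrable
      (fun β : ℝ => ((β ^ (-(1:ℝ)/2) : ℝ) : ℂ) * Complex.exp (ψ β * Complex.I)) volume R S :=
    fun ψ hψ => (hp.mul (Continuous.continuousOn (by fun_prop))).intervalIntegrable
  rw [intervalIntegral.integral_congr e, intervalIntegral.integral_const_mul,
    intervalIntegral.integral_sub (hpi (fun β => 2 * β * t - 2/3 * β ^ 3) (by fun_prop))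
      (hpi (fun β => 2 * β * t) (by fun_prop)), norm_mul]
  have hn : ‖Complex.exp (-Complex.I * ((Real.pi : ℂ)/4))‖ = 1 := by
    rw [show -Complex.I * ((Real.pi : ℂ)/4) = ((-(Real.pi/4) : ℝ) : ℂ) * Complex.I by
      push_cast; ring, Complex.norm_exp_ofReal_mul_I]
  rw [hn, one_mul]
  refine (norm_sub_le _ _).trans ?_
  have h1 := norm_tail_linear ht hR hRS
  have h2 := norm_tail_cubic hR hRt hRS
  calc _ ≤ R ^ (-(1:ℝ)/2) + R ^ (-(1:ℝ)/2) / t := add_le_add h2 h1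
    _ = _ := by ring

lemma fIntegrand_neg (t β : ℝ) : fIntegrand t (-β) = (starRingEnd ℂ) (fIntegrand t β) := by
  simp only [fIntegrand, map_mul, map_sub, map_one, Complex.conj_ofReal, ← Complex.exp_conj,
    map_add, map_neg, map_pow, Complex.conj_I, map_div₀, map_ofNat, abs_neg, Real.sign_neg]
  push_cast
  ring_nf

/-- Cauchy estimate for the truncations of `F₂`; the two tails are complex conjugates. -/
lemma norm_truncated_sub_le {t R S : ℝ} (ht : 0 < t) (hR : 0 < R) (hRt : t + 1 ≤ R ^ 2)
    (hRS : R ≤ S) :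
    ‖(∫ β in (-S)..S, fIntegrand t β) - ∫ β in (-R)..R, fIntegrand t β‖
      ≤ 2 * ((1 + 1 / t) * R ^ (-(1:ℝ)/2)) := by
  have hi := intervalIntegrable_fIntegrand t
  have hneg : ∫ β in (-S)..(-R), fIntegrand t β
      = (starRingEnd ℂ) (∫ β in R..S, fIntegrand t β) := by
    rw [← intervalIntegral.integral_comp_neg, ← intervalIntegral.intervalIntegral_conj]
    simp only [fIntegrand_neg]
  have hsplit : (∫ β in (-S)..S, fIntegrand t β) - ∫ β in (-R)..R, fIntegrand t β
      = (∫ β in (-S)..(-R), fIntegrand t β) + ∫ β in R..S, fIntegrand t β := by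
    rw [← intervalIntegral.integral_add_adjacent_intervals (hi (-S) (-R)) (hi (-R) S),
      ← intervalIntegral.integral_add_adjacent_intervals (hi (-R) R) (hi R S)]
    ring
  have h := norm_tail_le ht hR hRt hRS
  rw [hsplit, hneg]
  refine (norm_add_le _ _).trans ?_
  rw [RCLike.norm_conj]
  linarith

/-! ### Passing to the limit -/

lemma uniformCauchy_truncated {a b : ℝ} (ha : 0 < a) (c : ℂ) :
    UniformCauchySeqOn (fun R t : ℝ => c * ∫ β in (-R)..R, fIntegrand t β) atTop
      (Set.Ioo a b) := by
  rw [Metric.uniformCauchySeqOn_iff]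
  intro ε hε
  have hlim : Tendsto (fun R : ℝ => ‖c‖ * (2 * ((1 + 1 / a) * R ^ (-(1:ℝ)/2)))) atTop (nhds 0) := by
    have := tendsto_rpow_neg_atTop (by norm_num : (0:ℝ) < 1/2)
    have h2 := ((this.const_mul (1 + 1 / a)).const_mul 2).const_mul ‖c‖
    simpa [neg_div] using h2
  obtain ⟨N, hN⟩ := eventually_atTop.mp (((hlim.eventually_lt_const hε).and
    (eventually_ge_atTop 1)).and (eventually_ge_atTop (b + 1)))
  have key : ∀ m ≥ N, ∀ n ≥ m, ∀ t ∈ Set.Ioo a b,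
      dist (c * ∫ β in (-n)..n, fIntegrand t β) (c * ∫ β in (-m)..m, fIntegrand t β) < ε := by
    intro m hm n hn t ht
    obtain ⟨⟨h1, h2⟩, h3⟩ := hN m hm
    have h4 : t + 1 ≤ m ^ 2 := by nlinarith [ht.2]
    have h0 : 0 < t := ha.trans ht.1
    rw [dist_eq_norm, ← mul_sub, norm_mul]
    refine lt_of_le_of_lt ?_ h1
    have hm0 : 0 < m := by linarith
    refine (mul_le_mul_of_nonneg_left (norm_truncated_sub_le h0 hm0 h4 hn) (norm_nonneg c)).trans ?_
    have h5 : 1 / t ≤ 1 / a := one_div_le_one_div_of_le ha ht.1.le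
    gcongr
  refine ⟨N, fun m hm n hn t ht => ?_⟩
  rcases le_total m n with h | h
  · rw [dist_comm]; exact key m hm n h t ht
  · exact key n hn m h t ht

/-- For every `t > 0` the improper integral defining the loop part `F₂(t)` exists,
`Q` is differentiable at `t`, and `Q′(t) = F₂(t)`. -/
theorem shortLoopQ_hasDerivAt (t : ℝ) (ht : 0 < t) :
    ∃ F₂ : ℂ,
      Tendsto (fun R : ℝ => (((2*Real.pi) ^ (-(3:ℝ)/2) : ℝ) : ℂ) *
          ∫ β in (-R)..R, ((|β| ^ (-(1:ℝ)/2) : ℝ) : ℂ) *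
            Complex.exp (-Complex.I * ((Real.pi : ℂ)/4) * (Real.sign β : ℂ)
              + 2 * Complex.I * (β : ℂ) * (t : ℂ)) *
            (Complex.exp (-(2/3) * Complex.I * (β : ℂ)^3) - 1))
        atTop (nhds F₂)
      ∧ HasDerivAt shortLoopQ F₂ t := by
  set c : ℂ := (((2*Real.pi) ^ (-(3:ℝ)/2) : ℝ) : ℂ) with hc
  have hU := uniformCauchy_truncated (a := t / 2) (b := 2 * t) (half_pos ht) c
  have hex : ∀ s ∈ Set.Ioo (t / 2) (2 * t), ∃ F : ℂ,
      Tendsto (fun R : ℝ => c * ∫ β in (-R)..R, fIntegrand s β) atTop (nhds F) :=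
    fun s hs => CompleteSpace.complete (hU.cauchy_map hs)
  choose! F hF using hex
  have hmem : t ∈ Set.Ioo (t / 2) (2 * t) := ⟨by linarith, by linarith⟩
  refine ⟨F t, hF t hmem, ?_⟩
  refine hasDerivAt_of_tendstoUniformlyOn (l := atTop)
    (f := fun R s => c * (2 * Complex.I)⁻¹ * ∫ β in (-R)..R, qIntegrand s β) isOpen_Ioo
    (hU.tendstoUniformlyOn_of_tendsto hF) (Eventually.of_forall fun R s _ => ?_)
    (fun s _ => ?_) hmem
  · refine ((hasDerivAt_truncated s R).const_mul (c * (2 * Complex.I)⁻¹)).congr_deriv ?_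
    have : (2 * Complex.I) ≠ 0 := by simp
    field_simp
  · exact (intervalIntegral_tendsto_integral (integrable_qIntegrand s) tendsto_neg_atTop_atBot
      tendsto_id).const_mul _
end

section
/- For every t > 0, the two improper integrals F(t) := (2π)^{−3/2} · lim_{R→∞} ∫_{−R}^{R} |β|^{−1/2} exp(−i(π/4)·sign β) · exp(i(2βt − (2/3)β³)) dβ and F₂(t) := (2π)^{−3/2} · lim_{R→∞} ∫_{−R}^{R} |β|^{−1/2} exp(−i(π/4)·sign β + 2iβt) (exp(−(2/3)iβ³) − 1) dβ both exist, both are real numbers, and F(t) = (2π)^{−1} t^{−1/2} + F₂(t). -/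
/-!
Write `g(β) = exp(i(2βt - (2/3)β³))` and `g₀(β) = exp(2iβt)`. The integrand of `F₂` is the difference
of the integrands `|β|^{-1/2} exp(-i(π/4) sign β) g(β)` and the same with `g₀`, so everything reduces
to showing that these two improper integrals converge to real numbers and to evaluating the second.

Both `g` and `g₀` satisfy `g(-β) = conj (g β)`, so the integral over `[-R, R]` is twice the real part
of `e^{-iπ/4} ∫₀^R x^{-1/2} g(x) dx` (`integral_symIntegrand`); this gives reality at once.
Convergence of the half-line integrals follows from integration by parts against a weight decreasing
to zero (`tendsto_integral_of_antitone_mul`). For `g` this is applied beyond the stationary point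
`√t` of the phase (`tendsto_cubic`).

For `g₀`, put `c = ε - 2it`. For `ε > 0`, `∫₀^∞ x^{-1/2} e^{-cx} dx = (π/c)^{1/2}` by the Gaussian
integral (`expInt_eq`), and the integrated-by-parts form of the left side is continuous as `ε → 0⁺`
(`expInt_tendsto`). Hence the value at `c = -2it` is `e^{iπ/4} √(π/(2t))` (`expInt_neg_I`), and
multiplying by `2 e^{-iπ/4} (2π)^{-3/2}` gives `(2π)^{-1} t^{-1/2}` (`weyl_constant`).
-/

open MeasureTheory Filter

/-! ### Integration by parts on a half-line -/

/-- Dirichlet's test in integral form: `u` decreases to `0` and the primitive `E` of `e` is bounded,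
so integrating by parts leaves an absolutely convergent integral, because `u'` is integrable. The
explicit value of the limit is what allows passing to the limit in a parameter later. -/
theorem tendsto_integral_of_antitone_mul {a M : ℝ} {u u' : ℝ → ℝ} {E e : ℝ → ℂ}
    (hu : ∀ x ∈ Set.Ici a, HasDerivAt u (u' x) x) (hneg : ∀ x ∈ Set.Ioi a, u' x ≤ 0)
    (hlim : Tendsto u atTop (nhds 0))
    (hE : ∀ x ∈ Set.Ici a, HasDerivAt E (e x) x) (he : ContinuousOn e (Set.Ici a))
    (hM : ∀ x ∈ Set.Ici a, ‖E x‖ ≤ M) :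
    Tendsto (fun R : ℝ => ∫ x in a..R, (u x : ℂ) * e x) atTop
      (nhds (-((u a : ℂ) * E a) - ∫ x in Set.Ioi a, (u' x : ℂ) * E x)) := by
  have hint : IntegrableOn u' (Set.Ioi a) := integrableOn_Ioi_deriv_of_nonpos' hu hneg hlim
  have hEc : ContinuousOn E (Set.Ici a) := fun x hx => (hE x hx).continuousAt.continuousWithinAt
  have hint' : IntegrableOn (fun x => (u' x : ℂ) * E x) (Set.Ioi a) := by
    refine Integrable.mul_bdd (c := M) hint.ofReal
      ((hEc.mono Set.Ioi_subset_Ici_self).aestronglyMeasurable measurableSet_Ioi) ?_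
    filter_upwards [ae_restrict_mem measurableSet_Ioi] with x hx
    exact hM x (Set.Ioi_subset_Ici_self hx)
  have h1 := intervalIntegral_tendsto_integral_Ioi a hint' tendsto_id
  have h2 : Tendsto (fun R => (u R : ℂ) * E R) atTop (nhds 0) := by
    refine squeeze_zero_norm' (a := fun R => |u R| * M) ?_ (by simpa using hlim.abs.mul_const M)
    filter_upwards [eventually_ge_atTop a] with R hR
    rw [norm_mul, Complex.norm_real, Real.norm_eq_abs]
    exact mul_le_mul_of_nonneg_left (hM R hR) (abs_nonneg _)
  have h3 := (h2.sub_const ((u a : ℂ) * E a)).sub h1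
  rw [zero_sub] at h3
  refine h3.congr' ?_
  filter_upwards [eventually_ge_atTop a] with R hR
  have hs : Set.uIcc a R ⊆ Set.Ici a := by
    rw [Set.uIcc_of_le hR]; exact Set.Icc_subset_Ici_self
  refine (intervalIntegral.integral_mul_deriv_eq_deriv_mul
    (fun x hx => (hu x (hs hx)).ofReal_comp) (fun x hx => hE x (hs hx)) ?_ ?_).symm
  · rw [intervalIntegrable_iff_integrableOn_Ioc_of_le hR]
    exact (IntegrableOn.mono_set hint Set.Ioc_subset_Ioi_self).ofReal
  · exact (he.mono hs).intervalIntegrable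

theorem intervalIntegrable_rpow_mul (a b : ℝ) {g : ℝ → ℂ} (hg : Continuous g) :
    IntervalIntegrable (fun x : ℝ => ((x ^ (-(1:ℝ)/2) : ℝ) : ℂ) * g x) volume a b :=
  IntervalIntegrable.mul_continuousOn (f := fun x : ℝ => ((x ^ (-(1:ℝ)/2) : ℝ) : ℂ))
    ⟨(intervalIntegral.intervalIntegrable_rpow' (by norm_num)).1.ofReal,
      (intervalIntegral.intervalIntegrable_rpow' (by norm_num)).2.ofReal⟩ hg.continuousOn

theorem hasDerivAt_rpow_neg_half {x : ℝ} (hx : 0 < x) :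
    HasDerivAt (fun x : ℝ => x ^ (-(1:ℝ)/2)) (-(1/2) * x ^ (-(3:ℝ)/2)) x := by
  convert Real.hasDerivAt_rpow_const (p := -(1:ℝ)/2) (Or.inl hx.ne') using 1
  norm_num

theorem tendsto_rpow_neg_half : Tendsto (fun x : ℝ => x ^ (-(1:ℝ)/2)) atTop (nhds 0) := by
  simpa [neg_div] using tendsto_rpow_neg_atTop (y := (1:ℝ)/2) (by norm_num)

/-! ### The Fresnel-type integral giving the Weyl part -/

/-- The value of the improper integral `∫₀^∞ x^{-1/2} e^{-cx} dx` for `Re c ≥ 0`, `c ≠ 0`, written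
after integrating by parts on `[1, ∞)`. All integrals in this expression converge absolutely, so it
is visibly continuous in `c` up to the imaginary axis. -/
noncomputable def expInt (c : ℂ) : ℂ :=
  (∫ x in (0:ℝ)..1, ((x ^ (-(1:ℝ)/2) : ℝ) : ℂ) * Complex.exp (-c * x)) +
    (-((((1:ℝ) ^ (-(1:ℝ)/2) : ℝ) : ℂ) * (Complex.exp (-c * (1:ℝ)) / (-c))) -
      ∫ x in Set.Ioi (1:ℝ), ((-(1/2) * x ^ (-(3:ℝ)/2) : ℝ) : ℂ) * (Complex.exp (-c * x) / (-c)))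

theorem norm_exp_neg_mul_le {c : ℂ} (hc : 0 ≤ c.re) {x : ℝ} (hx : 0 ≤ x) :
    ‖Complex.exp (-c * x)‖ ≤ 1 := by
  rw [Complex.norm_exp]
  simp; positivity

theorem tendsto_expInt {c : ℂ} (hc : 0 ≤ c.re) (hc0 : c ≠ 0) :
    Tendsto (fun R : ℝ => ∫ x in (0:ℝ)..R, ((x ^ (-(1:ℝ)/2) : ℝ) : ℂ) * Complex.exp (-c * x))
      atTop (nhds (expInt c)) := by
  have h := tendsto_integral_of_antitone_mul (a := 1) (M := 1 / ‖c‖)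
    (u := fun x : ℝ => x ^ (-(1:ℝ)/2)) (E := fun x : ℝ => Complex.exp (-c * x) / (-c))
    (e := fun x : ℝ => Complex.exp (-c * x))
    (fun x hx => hasDerivAt_rpow_neg_half (lt_of_lt_of_le one_pos hx))
    (fun x hx => by
      have : 0 < x := lt_trans one_pos hx
      have : 0 < x ^ (-(3:ℝ)/2) := by positivity
      linarith)
    tendsto_rpow_neg_half
    (fun x _ => by
      have h1 : HasDerivAt (fun x : ℝ => -c * (x : ℂ)) (-c) x := by
        simpa using (Complex.ofRealCLM.hasDerivAt (x := x)).const_mul (-c)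
      convert! h1.cexp.div_const (-c) using 1
      rw [mul_div_assoc, div_self (neg_ne_zero.2 hc0), mul_one])
    (by fun_prop)
    (fun x hx => by
      rw [norm_div, norm_neg]
      gcongr
      exact norm_exp_neg_mul_le hc (le_trans zero_le_one hx))
  refine (h.const_add (∫ x in (0:ℝ)..1, ((x ^ (-(1:ℝ)/2) : ℝ) : ℂ) * Complex.exp (-c * x))).congr
    fun R => ?_
  exact intervalIntegral.integral_add_adjacent_intervals
    (intervalIntegrable_rpow_mul _ _ (by fun_prop)) (intervalIntegrable_rpow_mul _ _ (by fun_prop))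

/-- For `Re c > 0` the substitution `x = y²` reduces the integral to a complex Gaussian. -/
theorem expInt_eq {c : ℂ} (hc : 0 < c.re) : expInt c = ((Real.pi : ℂ) / c) ^ (1 / 2 : ℂ) := by
  have hc0 : c ≠ 0 := by rintro rfl; simp at hc
  refine tendsto_nhds_unique (tendsto_expInt hc.le hc0) ?_
  have h1 := integral_gaussian_complex_Ioi hc
  have h2 := integral_comp_rpow_Ioi (fun x : ℝ => Complex.exp (-c * (x : ℂ) ^ 2))
    (p := 1/2) (by norm_num)
  have h3 := (integrableOn_Ioi_comp_rpow_iff (fun x : ℝ => Complex.exp (-c * (x : ℂ) ^ 2))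
    (p := 1/2) (by norm_num)).2 (integrable_cexp_neg_mul_sq hc).integrableOn
  have key : ∀ x ∈ Set.Ioi (0:ℝ),
      (|(1/2:ℝ)| * x ^ ((1/2:ℝ) - 1)) • Complex.exp (-c * ((x ^ (1/2:ℝ) : ℝ) : ℂ) ^ 2)
      = (1/2 : ℂ) * (((x ^ (-(1:ℝ)/2) : ℝ) : ℂ) * Complex.exp (-c * x)) := by
    intro x hx
    have hx : (0:ℝ) < x := hx
    rw [← Complex.ofReal_pow, ← Real.rpow_natCast, ← Real.rpow_mul hx.le]
    norm_num
    ring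
  rw [h1, setIntegral_congr_fun measurableSet_Ioi key, integral_const_mul] at h2
  have h4 : IntegrableOn (fun x : ℝ => ((x ^ (-(1:ℝ)/2) : ℝ) : ℂ) * Complex.exp (-c * x))
      (Set.Ioi 0) := by
    have := (h3.congr_fun key measurableSet_Ioi).const_mul 2
    refine this.congr (ae_of_all _ fun x => ?_)
    ring
  have h5 := intervalIntegral_tendsto_integral_Ioi 0 h4 tendsto_id
  rwa [show (∫ x in Set.Ioi (0:ℝ), ((x ^ (-(1:ℝ)/2) : ℝ) : ℂ) * Complex.exp (-c * x)) =
    ((Real.pi : ℂ) / c) ^ (1 / 2 : ℂ) by linear_combination 2 * h2] at h5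

/-- Continuity of `expInt` at the boundary point `-2it`, approached horizontally from the right
half-plane, by dominated convergence. -/
theorem expInt_tendsto {t : ℝ} (ht : 0 < t) :
    Tendsto (fun ε : ℝ => expInt (ε - 2 * t * Complex.I)) (nhdsWithin 0 (Set.Ioi 0))
      (nhds (expInt (-(2 * t * Complex.I)))) := by
  set l := nhdsWithin (0:ℝ) (Set.Ioi 0)
  have hc : Tendsto (fun ε : ℝ => (ε - 2 * t * Complex.I : ℂ)) l
      (nhds (-(2 * t * Complex.I))) := by
    have : ContinuousAt (fun ε : ℝ => (ε - 2 * t * Complex.I : ℂ)) 0 := by fun_prop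
    simpa using this.tendsto.mono_left nhdsWithin_le_nhds
  have hne : (-(2 * t * Complex.I) : ℂ) ≠ 0 := by simp [ht.ne']
  have hpos : ∀ᶠ ε in l, 0 < ε := self_mem_nhdsWithin
  have hre : ∀ ε : ℝ, (ε - 2 * t * Complex.I : ℂ).re = ε := by simp
  have hexp : ∀ x : ℝ, Tendsto (fun ε : ℝ => Complex.exp (-(ε - 2 * t * Complex.I : ℂ) * x)) l
      (nhds (Complex.exp (-(-(2 * t * Complex.I)) * x))) := fun x =>
    (Complex.continuous_exp.tendsto _).comp (hc.neg.mul_const _)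
  have hnorm : ∀ ε : ℝ, 2 * t ≤ ‖(ε - 2 * t * Complex.I : ℂ)‖ := fun ε => by
    have := Complex.abs_im_le_norm (ε - 2 * t * Complex.I : ℂ)
    simpa [abs_of_pos ht] using this
  unfold expInt
  refine Tendsto.add ?_ (Tendsto.sub ?_ ?_)
  · refine intervalIntegral.tendsto_integral_filter_of_dominated_convergence
      (fun x => x ^ (-(1:ℝ)/2)) ?_ ?_ (intervalIntegral.intervalIntegrable_rpow' (by norm_num)) ?_
    · refine Eventually.of_forall fun ε => ?_
      exact (intervalIntegrable_rpow_mul 0 1 (by fun_prop)).aestronglyMeasurable_restrict_uIoc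
    · filter_upwards [hpos] with ε hε
      refine ae_of_all _ fun x hx => ?_
      rw [Set.uIoc_of_le zero_le_one] at hx
      have hw : 0 ≤ x ^ (-(1:ℝ)/2) := Real.rpow_nonneg hx.1.le _
      rw [norm_mul, Complex.norm_real, Real.norm_of_nonneg hw]
      exact mul_le_of_le_one_right hw (norm_exp_neg_mul_le (by rw [hre]; exact hε.le) hx.1.le)
    · exact ae_of_all _ fun x _ => (hexp x).const_mul _
  · exact (((hexp 1).div hc.neg (neg_ne_zero.2 hne)).const_mul _).neg
  · refine tendsto_integral_filter_of_dominated_convergence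
      (fun x => (1/2) * x ^ (-(3:ℝ)/2) * (1 / (2 * t))) ?_ ?_ ?_ ?_
    · refine Eventually.of_forall fun ε => Measurable.aestronglyMeasurable ?_
      fun_prop
    · filter_upwards [hpos] with ε hε
      filter_upwards [ae_restrict_mem measurableSet_Ioi] with x hx
      have hx0 : (0:ℝ) < x := lt_trans one_pos hx
      have hw : 0 < x ^ (-(3:ℝ)/2) := Real.rpow_pos_of_pos hx0 _
      rw [norm_mul, Complex.norm_real, norm_div, norm_neg, neg_mul, norm_neg,
        Real.norm_of_nonneg (by positivity)]
      gcongr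
      · exact norm_exp_neg_mul_le (by rw [hre]; exact hε.le) hx0.le
      · exact hnorm ε
    · exact ((integrableOn_Ioi_rpow_of_lt (by norm_num) one_pos).const_mul _).mul_const _
    · exact ae_of_all _ fun x => ((hexp x).div hc.neg (neg_ne_zero.2 hne)).const_mul _

/-- The Fresnel integral `∫₀^∞ x^{-1/2} e^{2itx} dx = e^{iπ/4} √(π / (2t))`, as the boundary value
of the Gaussian formula; the principal square root is continuous there since `π / (-2it)` lies on
the positive imaginary axis. -/
theorem expInt_neg_I {t : ℝ} (ht : 0 < t) :
    Complex.exp (-Complex.I * ((Real.pi : ℂ)/4)) * expInt (-(2 * t * Complex.I)) =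
      ((Real.sqrt (Real.pi / (2 * t)) : ℝ) : ℂ) := by
  have hpi := Real.pi_pos
  have hval : (Real.pi : ℂ) / (-(2 * t * Complex.I)) =
      ((Real.pi / (2 * t) : ℝ) : ℂ) * Complex.I := by
    have : (t : ℂ) ≠ 0 := by exact_mod_cast ht.ne'
    push_cast
    field_simp
    simp
  have h1 : expInt (-(2 * t * Complex.I)) =
      ((Real.pi : ℂ) / (-(2 * t * Complex.I))) ^ (1 / 2 : ℂ) := by
    refine tendsto_nhds_unique (expInt_tendsto ht) ?_
    have : Tendsto (fun ε : ℝ => ((Real.pi : ℂ) / (ε - 2 * t * Complex.I)) ^ (1 / 2 : ℂ))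
        (nhdsWithin 0 (Set.Ioi 0)) (nhds (((Real.pi : ℂ) / (-(2 * t * Complex.I))) ^ (1 / 2 : ℂ))) := by
      have hca : ContinuousAt
          (fun ε : ℝ => ((Real.pi : ℂ) / (ε - 2 * t * Complex.I)) ^ (1 / 2 : ℂ)) 0 := by
        refine ContinuousAt.cpow ?_ continuousAt_const ?_
        · refine ContinuousAt.div (by fun_prop) (by fun_prop) ?_
          simp [ht.ne']
        · rw [Complex.ofReal_zero, zero_sub, hval]
          refine Or.inr ?_
          rw [Complex.im_ofReal_mul, Complex.I_im, mul_one]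
          positivity
      simpa using hca.tendsto.mono_left nhdsWithin_le_nhds
    refine this.congr' ?_
    filter_upwards [self_mem_nhdsWithin] with ε hε
    exact (expInt_eq (by simpa using hε)).symm
  have hp : 0 < Real.pi / (2 * t) := by positivity
  have hne : ((Real.pi / (2 * t) : ℝ) : ℂ) * Complex.I ≠ 0 :=
    mul_ne_zero (Complex.ofReal_ne_zero.2 hp.ne') Complex.I_ne_zero
  rw [h1, hval, Complex.cpow_def_of_ne_zero hne, Complex.log_ofReal_mul hp Complex.I_ne_zero,
    Complex.log_I, ← Complex.exp_add, Real.sqrt_eq_rpow, Real.rpow_def_of_pos hp,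
    Complex.ofReal_exp]
  congr 1
  push_cast
  ring

/-! ### Convergence of the integral with the cubic phase -/

/-- Beyond `x = 1 + t` the phase `2tx - (2/3)x³` has no stationary point, since its derivative is
`-(2x² - 2t) < 0` there, and the weight `x^{-1/2} / (2x² - 2t)` decreases to `0`. -/
theorem tendsto_cubic {t : ℝ} (ht : 0 < t) :
    ∃ H : ℂ, Tendsto (fun R : ℝ => ∫ x in (0:ℝ)..R, ((x ^ (-(1:ℝ)/2) : ℝ) : ℂ) *
      Complex.exp (Complex.I * (2 * (x : ℂ) * (t : ℂ) - (2/3) * (x : ℂ)^3))) atTop (nhds H) := by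
  set e : ℝ → ℂ := fun x => Complex.exp (Complex.I * (2 * (x : ℂ) * (t : ℂ) - (2/3) * (x : ℂ)^3))
    with he
  have hec : Continuous e := by fun_prop
  have hpos : ∀ x ∈ Set.Ici (1 + t), 0 < x ∧ 0 < 2 * x ^ 2 - 2 * t := by
    intro x hx
    have hx : 1 + t ≤ x := hx
    exact ⟨by linarith, by nlinarith⟩
  have h := tendsto_integral_of_antitone_mul (a := 1 + t) (M := 1)
    (u := fun x : ℝ => x ^ (-(1:ℝ)/2) * (2 * x ^ 2 - 2 * t)⁻¹)
    (u' := fun x : ℝ => (-(1/2) * x ^ (-(3:ℝ)/2)) * (2 * x ^ 2 - 2 * t)⁻¹ +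
      x ^ (-(1:ℝ)/2) * (-(4 * x) / (2 * x ^ 2 - 2 * t) ^ 2))
    (E := fun x => Complex.I * e x)
    (e := fun x => ((2 * x ^ 2 - 2 * t : ℝ) : ℂ) * e x)
    (fun x hx => by
      obtain ⟨h0, h1⟩ := hpos x hx
      refine (hasDerivAt_rpow_neg_half h0).mul (HasDerivAt.inv ?_ h1.ne')
      convert! ((hasDerivAt_pow 2 x).const_mul 2).sub_const (2 * t) using 1
      ring)
    (fun x hx => by
      obtain ⟨h0, h1⟩ := hpos x (Set.Ioi_subset_Ici_self hx)
      have h2 : 0 ≤ (1/2) * x ^ (-(3:ℝ)/2) * (2 * x ^ 2 - 2 * t)⁻¹ := by positivity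
      have h3 : 0 ≤ x ^ (-(1:ℝ)/2) * ((4 * x) / (2 * x ^ 2 - 2 * t) ^ 2) := by positivity
      rw [neg_div (_ ^ 2)]
      linarith)
    (by
      have h1 : Tendsto (fun x : ℝ => 2 * x ^ 2 - 2 * t) atTop atTop :=
        tendsto_atTop_add_const_right _ _
          ((tendsto_pow_atTop (two_ne_zero)).const_mul_atTop two_pos)
      simpa using tendsto_rpow_neg_half.mul h1.inv_tendsto_atTop)
    (fun x _ => by
      have h1 : HasDerivAt (fun x : ℝ => Complex.I * (2 * (x : ℂ) * (t : ℂ) - (2/3) * (x : ℂ)^3))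
          (Complex.I * (2 * t - 2 * x ^ 2)) x := by
        have hx : HasDerivAt (fun x : ℝ => (x : ℂ)) 1 x := Complex.ofRealCLM.hasDerivAt
        convert! (((hx.const_mul 2).mul_const (t : ℂ)).sub
          ((hx.pow 3).const_mul (2/3))).const_mul Complex.I using 1
        push_cast
        ring
      convert! h1.cexp.const_mul Complex.I using 1
      push_cast
      linear_combination (-(e x) * (2 * t - 2 * x ^ 2)) * Complex.I_mul_I)
    (by fun_prop)
    (fun x _ => by
      simp only [norm_mul, Complex.norm_I, one_mul, he]
      rw [show (Complex.I * (2 * (x : ℂ) * (t : ℂ) - (2/3) * (x : ℂ)^3)) =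
          ((2 * x * t - (2/3) * x ^ 3 : ℝ) : ℂ) * Complex.I by push_cast; ring,
        Complex.norm_exp_ofReal_mul_I])
  refine ⟨_, (h.const_add (∫ x in (0:ℝ)..(1 + t), ((x ^ (-(1:ℝ)/2) : ℝ) : ℂ) * e x)).congr' ?_⟩
  filter_upwards [eventually_ge_atTop (1 + t)] with R hR
  rw [← intervalIntegral.integral_add_adjacent_intervals
    (intervalIntegrable_rpow_mul 0 (1 + t) hec) (intervalIntegrable_rpow_mul (1 + t) R hec)]
  congr 1
  refine intervalIntegral.integral_congr fun x hx => ?_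
  rw [Set.uIcc_of_le hR] at hx
  have h1 := (hpos x hx.1).2
  have h2 : ((2 * x ^ 2 - 2 * t : ℝ) : ℂ) ≠ 0 := Complex.ofReal_ne_zero.2 h1.ne'
  simp only [Complex.ofReal_mul, Complex.ofReal_inv]
  rw [mul_assoc, inv_mul_cancel_left₀ h2]

/-! ### Reduction of symmetric integrals to the half-line -/

/-- The integrand `|β|^{-1/2} exp(-i(π/4) sign β) g(β)` common to the integrals over `[-R, R]`. -/
noncomputable def symIntegrand (g : ℝ → ℂ) (β : ℝ) : ℂ :=
  ((|β| ^ (-(1:ℝ)/2) : ℝ) : ℂ) *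
    Complex.exp (-Complex.I * ((Real.pi : ℂ)/4) * (Real.sign β : ℂ)) * g β

theorem symIntegrand_neg {g : ℝ → ℂ} (hg : ∀ x, g (-x) = (starRingEnd ℂ) (g x)) (β : ℝ) :
    symIntegrand g (-β) = (starRingEnd ℂ) (symIntegrand g β) := by
  simp only [symIntegrand, abs_neg, Real.sign_neg, hg, map_mul, Complex.conj_ofReal,
    ← Complex.exp_conj, map_neg, Complex.conj_I, map_div₀, map_ofNat]
  push_cast
  simp

theorem symIntegrand_of_pos (g : ℝ → ℂ) {β : ℝ} (hβ : 0 < β) :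
    symIntegrand g β = Complex.exp (-Complex.I * ((Real.pi : ℂ)/4)) *
      (((β ^ (-(1:ℝ)/2) : ℝ) : ℂ) * g β) := by
  rw [symIntegrand, abs_of_pos hβ, Real.sign_of_pos hβ]
  push_cast
  ring_nf

theorem intervalIntegrable_symIntegrand {g : ℝ → ℂ} (hgc : Continuous g)
    (hg : ∀ x, g (-x) = (starRingEnd ℂ) (g x)) {R : ℝ} (hR : 0 ≤ R) :
    IntervalIntegrable (symIntegrand g) volume 0 R ∧
      IntervalIntegrable (symIntegrand g) volume (-R) 0 := by
  have h1 : IntervalIntegrable (symIntegrand g) volume 0 R := by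
    refine ((intervalIntegrable_rpow_mul 0 R hgc).const_mul
      (Complex.exp (-Complex.I * ((Real.pi : ℂ)/4)))).congr fun x hx => ?_
    rw [Set.uIoc_of_le hR] at hx
    exact (symIntegrand_of_pos g hx.1).symm
  refine ⟨h1, ?_⟩
  have h2 : IntervalIntegrable (fun x => symIntegrand g (-x)) volume 0 R := by
    simp_rw [symIntegrand_neg hg]
    rw [intervalIntegrable_iff] at h1 ⊢
    exact (Complex.conjCLE.toContinuousLinearMap.integrable_comp h1 :)
  simpa using ((IntervalIntegrable.iff_comp_neg (by simp)).1 h2).symm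

/-- When `g(-β)` is the conjugate of `g(β)`, the two halves of the integral are conjugate, so the
integral over `[-R, R]` is twice the real part of the half-line integral. -/
theorem integral_symIntegrand {g : ℝ → ℂ} (hgc : Continuous g)
    (hg : ∀ x, g (-x) = (starRingEnd ℂ) (g x)) {R : ℝ} (hR : 0 ≤ R) :
    ∫ β in (-R)..R, symIntegrand g β = ((2 * (Complex.exp (-Complex.I * ((Real.pi : ℂ)/4)) *
      ∫ x in (0:ℝ)..R, ((x ^ (-(1:ℝ)/2) : ℝ) : ℂ) * g x).re : ℝ) : ℂ) := by
  obtain ⟨h1, h2⟩ := intervalIntegrable_symIntegrand hgc hg hR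
  have h3 : ∫ β in (0:ℝ)..R, symIntegrand g β = Complex.exp (-Complex.I * ((Real.pi : ℂ)/4)) *
      ∫ x in (0:ℝ)..R, ((x ^ (-(1:ℝ)/2) : ℝ) : ℂ) * g x := by
    rw [← intervalIntegral.integral_const_mul]
    refine intervalIntegral.integral_congr_ae (ae_of_all _ fun x hx => ?_)
    rw [Set.uIoc_of_le hR] at hx
    exact symIntegrand_of_pos g hx.1
  have h4 : ∫ β in (-R)..0, symIntegrand g β =
      (starRingEnd ℂ) (∫ β in (0:ℝ)..R, symIntegrand g β) := by
    have := intervalIntegral.integral_comp_neg (symIntegrand g) (a := 0) (b := R)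
    rw [neg_zero] at this
    rw [← this]
    simp_rw [symIntegrand_neg hg, intervalIntegral.integral_of_le hR]
    exact integral_conj
  rw [← intervalIntegral.integral_add_adjacent_intervals h2 h1, h4, add_comm, Complex.add_conj, h3]

theorem tendsto_symIntegrand {g : ℝ → ℂ} (hgc : Continuous g)
    (hg : ∀ x, g (-x) = (starRingEnd ℂ) (g x)) {L : ℂ}
    (hL : Tendsto (fun R : ℝ => ∫ x in (0:ℝ)..R, ((x ^ (-(1:ℝ)/2) : ℝ) : ℂ) * g x)
      atTop (nhds L)) :
    Tendsto (fun R : ℝ => ∫ β in (-R)..R, symIntegrand g β) atTop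
      (nhds ((2 * (Complex.exp (-Complex.I * ((Real.pi : ℂ)/4)) * L).re : ℝ) : ℂ)) := by
  refine Tendsto.congr' ?_ ((Complex.continuous_ofReal.tendsto _).comp
    (((Complex.continuous_re.tendsto _).comp (hL.const_mul _)).const_mul 2))
  filter_upwards [eventually_ge_atTop 0] with R hR
  exact (integral_symIntegrand hgc hg hR).symm

/-! ### The decomposition -/

theorem weyl_constant {t : ℝ} (ht : 0 < t) :
    (2*Real.pi) ^ (-(3:ℝ)/2) * (2 * Real.sqrt (Real.pi / (2 * t))) =
      (2*Real.pi)⁻¹ * t ^ (-(1:ℝ)/2) := by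
  have hpi := Real.pi_pos
  have h1 : (2*Real.pi) ^ (-(3:ℝ)/2) = (2*Real.pi)⁻¹ * (Real.sqrt (2*Real.pi))⁻¹ := by
    rw [Real.sqrt_eq_rpow, ← Real.rpow_neg (by positivity), ← Real.rpow_neg_one,
      ← Real.rpow_add (by positivity)]
    norm_num
  have h2 : t ^ (-(1:ℝ)/2) = (Real.sqrt t)⁻¹ := by
    rw [Real.sqrt_eq_rpow, ← Real.rpow_neg ht.le]
    norm_num
  have h3 : 2 * Real.sqrt (Real.pi / (2 * t)) = Real.sqrt (2 * Real.pi) * (Real.sqrt t)⁻¹ := by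
    rw [← Real.sqrt_inv, ← Real.sqrt_mul (by positivity),
      show 2 * Real.pi * t⁻¹ = 2 ^ 2 * (Real.pi / (2 * t)) by field_simp,
      Real.sqrt_mul (by positivity), Real.sqrt_sq (by positivity)]
  have h4 : Real.sqrt (2*Real.pi) ≠ 0 := by positivity
  rw [h1, h2, h3]
  field_simp

/-- For every `t > 0`, the improper integrals
`F(t) = (2π)^{−3/2} lim_{R→∞} ∫_{−R}^{R} |β|^{−1/2} exp(−i(π/4) sign β) exp(i(2βt − (2/3)β³)) dβ`
and
`F₂(t) = (2π)^{−3/2} lim_{R→∞} ∫_{−R}^{R} |β|^{−1/2} exp(−i(π/4) sign β + 2iβt)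
(exp(−(2/3)iβ³) − 1) dβ`
both exist, both are real, and `F(t) = (2π)^{−1} t^{−1/2} + F₂(t)`. -/
theorem F_decomposition (t : ℝ) (ht : 0 < t) :
    ∃ F F₂ : ℂ,
      Tendsto (fun R : ℝ => (((2*Real.pi) ^ (-(3:ℝ)/2) : ℝ) : ℂ) *
          ∫ β in (-R)..R, ((|β| ^ (-(1:ℝ)/2) : ℝ) : ℂ) *
            Complex.exp (-Complex.I * ((Real.pi : ℂ)/4) * (Real.sign β : ℂ)) *
            Complex.exp (Complex.I * (2 * (β : ℂ) * (t : ℂ) - (2/3) * (β : ℂ)^3)))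
        atTop (nhds F)
      ∧ Tendsto (fun R : ℝ => (((2*Real.pi) ^ (-(3:ℝ)/2) : ℝ) : ℂ) *
          ∫ β in (-R)..R, ((|β| ^ (-(1:ℝ)/2) : ℝ) : ℂ) *
            Complex.exp (-Complex.I * ((Real.pi : ℂ)/4) * (Real.sign β : ℂ)
              + 2 * Complex.I * (β : ℂ) * (t : ℂ)) *
            (Complex.exp (-(2/3) * Complex.I * (β : ℂ)^3) - 1))
        atTop (nhds F₂)
      ∧ F.im = 0 ∧ F₂.im = 0
      ∧ F = (((2*Real.pi)⁻¹ * t ^ (-(1:ℝ)/2) : ℝ) : ℂ) + F₂ := by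
  obtain ⟨H, hH⟩ := tendsto_cubic ht
  set g : ℝ → ℂ := fun β =>
    Complex.exp (Complex.I * (2 * (β : ℂ) * (t : ℂ) - (2/3) * (β : ℂ)^3)) with hg
  set g₀ : ℝ → ℂ := fun β => Complex.exp (-(-(2 * t * Complex.I)) * β) with hg₀
  have hgc : Continuous g := by fun_prop
  have hgc₀ : Continuous g₀ := by fun_prop
  have hgs : ∀ x, g (-x) = (starRingEnd ℂ) (g x) := fun x => by
    simp only [hg, ← Complex.exp_conj]
    congr 1
    simp [Complex.conj_ofNat]
    ring
  have hgs₀ : ∀ x, g₀ (-x) = (starRingEnd ℂ) (g₀ x) := fun x => by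
    simp only [hg₀, ← Complex.exp_conj]
    congr 1
    simp [Complex.conj_ofNat]
  have hG : Tendsto (fun R : ℝ => ∫ x in (0:ℝ)..R, ((x ^ (-(1:ℝ)/2) : ℝ) : ℂ) * g₀ x) atTop
      (nhds (expInt (-(2 * t * Complex.I)))) :=
    tendsto_expInt (by simp) (by simp [ht.ne'])
  have h1 := tendsto_symIntegrand hgc hgs hH
  have h2 := tendsto_symIntegrand hgc₀ hgs₀ hG
  rw [expInt_neg_I ht, Complex.ofReal_re] at h2
  set C : ℝ := (2*Real.pi) ^ (-(3:ℝ)/2) with hC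
  set A : ℝ := 2 * (Complex.exp (-Complex.I * ((Real.pi : ℂ)/4)) * H).re
  refine ⟨(C : ℂ) * (A : ℂ),
    (C : ℂ) * ((A : ℂ) - ((2 * Real.sqrt (Real.pi / (2 * t)) : ℝ) : ℂ)), h1.const_mul _, ?_, ?_,
    ?_, ?_⟩
  · refine ((h1.sub h2).const_mul (C : ℂ)).congr' ?_
    filter_upwards [eventually_ge_atTop 0] with R hR
    obtain ⟨i1, i2⟩ := intervalIntegrable_symIntegrand hgc hgs hR
    obtain ⟨j1, j2⟩ := intervalIntegrable_symIntegrand hgc₀ hgs₀ hR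
    rw [← intervalIntegral.integral_sub (i2.trans i1) (j2.trans j1)]
    congr 1
    refine intervalIntegral.integral_congr fun x _ => ?_
    have e1 : g x = g₀ x * Complex.exp (-(2/3) * Complex.I * (x : ℂ)^3) := by
      simp only [hg, hg₀, ← Complex.exp_add]
      congr 1
      ring
    have e2 : Complex.exp (-Complex.I * ((Real.pi : ℂ)/4) * (Real.sign x : ℂ)
        + 2 * Complex.I * (x : ℂ) * (t : ℂ)) =
        Complex.exp (-Complex.I * ((Real.pi : ℂ)/4) * (Real.sign x : ℂ)) * g₀ x := by
      simp only [hg₀, ← Complex.exp_add]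
      congr 1
      ring
    simp only [symIntegrand, e1, e2]
    ring
  · rw [← Complex.ofReal_mul, Complex.ofReal_im]
  · rw [← Complex.ofReal_sub, ← Complex.ofReal_mul, Complex.ofReal_im]
  · rw [← weyl_constant ht, ← hC]
    push_cast
    ring
end

section
/- Let d ≥ 2 be an integer and define, for r > 0, Υ_d(r) = ∫_0^1 ∫_0^π z^{d−1} cos(2zr·cos φ) (sin φ)^{d−2} dφ dz. Then there exist real constants A and B such that Υ_d(r) − r^{−(d+1)/2} (A·cos 2r + B·sin 2r) = O(r^{−(d+3)/2}) as r → +∞. -/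
open MeasureTheory Filter Asymptotics

/-!
Write `J m s = ∫_0^π cos(s cos φ) (sin φ)^m dφ`, a Poisson integral, equal up to a constant to
`s^{-m/2}` times the Bessel function of order `m/2`.

The `z`-integral can be computed: integrating by parts in `φ` gives
`s (J d)' + d (J d) = (d - 1) J (d - 2)`, so `z ↦ z^d J d (2 z r)` is a primitive of
`(d - 1) z^{d-1} J (d - 2) (2 z r)` and `Υ_d(r) = J d (2 r) / (d - 1)`
(`integral_profile_eq`).

The asymptotics of `J d` comes from its differential equation. The function
`u s = s^{(d+1)/2} J d s` satisfies `u'' + u = (c / s²) u` with `c` constant. For such an equation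
the energy `u² + u'²` stays bounded, because `(u² + u'²) exp(|c|/s)` is nonincreasing; hence the
variation-of-constants coefficients `u cos - u' sin` and `u sin + u' cos` have derivatives
`O(s⁻²)` and converge to limits `A`, `B` with error `O(1/s)`. This gives
`u s = A cos s + B sin s + O(1/s)` (`exists_asymptotics_of_ode`).
-/

namespace PilotModel

/-- The Poisson integral `∫_0^π cos(s cos φ) (sin φ)^m dφ`. -/
noncomputable def J (m : ℕ) (s : ℝ) : ℝ :=
  ∫ φ in (0:ℝ)..Real.pi, Real.cos (s * Real.cos φ) * Real.sin φ ^ m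

/-- The integral `∫_0^π sin(s cos φ) cos φ (sin φ)^m dφ`, which is minus the derivative of
`J m`. -/
noncomputable def K (m : ℕ) (s : ℝ) : ℝ :=
  ∫ φ in (0:ℝ)..Real.pi, Real.sin (s * Real.cos φ) * Real.cos φ * Real.sin φ ^ m

/-! ### Derivatives and recurrences of the Poisson integrals -/

/-- Differentiation under the integral sign over `[0, π]`, for a uniformly bounded
`x`-derivative that is continuous in `φ`. -/
lemma hasDerivAt_integral_of_bound (F F' : ℝ → ℝ → ℝ) (s : ℝ) (hF : ∀ x, Continuous (F x))
    (hF' : ∀ x, Continuous (F' x)) (C : ℝ) (hC : ∀ x φ, |F' x φ| ≤ C)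
    (hd : ∀ x φ, HasDerivAt (fun x => F x φ) (F' x φ) x) :
    HasDerivAt (fun x => ∫ φ in (0:ℝ)..Real.pi, F x φ)
      (∫ φ in (0:ℝ)..Real.pi, F' s φ) s := by
  refine (intervalIntegral.hasDerivAt_integral_of_dominated_loc_of_deriv_le
    (F := F) (F' := F') (bound := fun _ => C) (s := Set.univ) Filter.univ_mem ?_ ?_ ?_ ?_ ?_ ?_).2
  · exact Eventually.of_forall fun x => (hF x).aestronglyMeasurable
  · exact (hF s).intervalIntegrable _ _
  · exact (hF' s).aestronglyMeasurable
  · exact Eventually.of_forall fun φ _ x _ => hC x φ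
  · exact intervalIntegrable_const
  · exact Eventually.of_forall fun φ _ x _ => hd x φ

lemma abs_sin_pow_le (m : ℕ) (φ : ℝ) : |Real.sin φ ^ m| ≤ 1 := by
  rw [abs_pow]
  exact pow_le_one₀ (abs_nonneg _) (Real.abs_sin_le_one φ)

lemma hasDerivAt_J (m : ℕ) (s : ℝ) : HasDerivAt (J m) (-K m s) s := by
  have h := hasDerivAt_integral_of_bound
    (fun s φ => Real.cos (s * Real.cos φ) * Real.sin φ ^ m)
    (fun s φ => -(Real.sin (s * Real.cos φ) * Real.cos φ * Real.sin φ ^ m)) s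
    (fun x => by fun_prop) (fun x => by fun_prop) 1
    (fun x φ => by
      rw [abs_neg, abs_mul, abs_mul]
      exact mul_le_one₀ (mul_le_one₀ (Real.abs_sin_le_one _) (abs_nonneg _)
        (Real.abs_cos_le_one _)) (abs_nonneg _) (abs_sin_pow_le m φ))
    (fun x φ => by
      have := (((hasDerivAt_id x).mul_const (Real.cos φ)).cos).mul_const (Real.sin φ ^ m)
      refine HasDerivAt.congr_deriv this ?_
      simp only [id]
      ring)
  rw [intervalIntegral.integral_neg] at h
  exact h

lemma hasDerivAt_K (m : ℕ) (s : ℝ) : HasDerivAt (K m) (J m s - J (m + 2) s) s := by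
  have h := hasDerivAt_integral_of_bound
    (fun s φ => Real.sin (s * Real.cos φ) * Real.cos φ * Real.sin φ ^ m)
    (fun s φ => Real.cos (s * Real.cos φ) * Real.cos φ * Real.cos φ * Real.sin φ ^ m) s
    (fun x => by fun_prop) (fun x => by fun_prop) 1
    (fun x φ => by
      rw [abs_mul, abs_mul, abs_mul]
      exact mul_le_one₀ (mul_le_one₀ (mul_le_one₀ (Real.abs_cos_le_one _) (abs_nonneg _)
        (Real.abs_cos_le_one _)) (abs_nonneg _)
        (Real.abs_cos_le_one _)) (abs_nonneg _) (abs_sin_pow_le m φ))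
    (fun x φ => by
      have := ((((hasDerivAt_id x).mul_const (Real.cos φ)).sin).mul_const
        (Real.cos φ)).mul_const (Real.sin φ ^ m)
      refine HasDerivAt.congr_deriv this ?_
      simp only [id]
      ring)
  have e : J m s - J (m + 2) s = ∫ φ in (0:ℝ)..Real.pi,
      Real.cos (s * Real.cos φ) * Real.cos φ * Real.cos φ * Real.sin φ ^ m := by
    unfold J
    rw [← intervalIntegral.integral_sub
      (Continuous.intervalIntegrable (by fun_prop) _ _)
      (Continuous.intervalIntegrable (by fun_prop) _ _)]
    congr 1
    ext φ
    have := Real.sin_sq_add_cos_sq φ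
    rw [pow_add]
    linear_combination (- Real.cos (s * Real.cos φ) * Real.sin φ ^ m) * this
  rw [e]
  exact h

/-- Obtained by integrating the `φ`-derivative of `sin(s cos φ) (sin φ)^(m+1)`. -/
lemma mul_J_add_two (m : ℕ) (s : ℝ) : s * J (m + 2) s = (m + 1) * K m s := by
  have h := intervalIntegral.integral_eq_sub_of_hasDerivAt (a := 0) (b := Real.pi)
    (f := fun φ => Real.sin (s * Real.cos φ) * Real.sin φ ^ (m + 1))
    (f' := fun φ => ((m:ℝ) + 1) * (Real.sin (s * Real.cos φ) * Real.cos φ * Real.sin φ ^ m)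
      - s * (Real.cos (s * Real.cos φ) * Real.sin φ ^ (m + 2)))
    (fun φ _ => by
      have := (((Real.hasDerivAt_cos φ).const_mul s).sin).mul
        ((Real.hasDerivAt_sin φ).pow (m + 1))
      refine HasDerivAt.congr_deriv this ?_
      simp only [Pi.pow_apply, Nat.add_sub_cancel]
      push_cast
      ring)
    (Continuous.intervalIntegrable (by fun_prop) _ _)
  rw [intervalIntegral.integral_sub (Continuous.intervalIntegrable (by fun_prop) _ _)
    (Continuous.intervalIntegrable (by fun_prop) _ _), intervalIntegral.integral_const_mul,
    intervalIntegral.integral_const_mul] at h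
  simp only [Real.sin_pi, Real.sin_zero, ne_eq, Nat.add_eq_zero_iff, one_ne_zero, and_false,
    not_false_eq_true, zero_pow, mul_zero, sub_self] at h
  unfold J K
  linarith

/-- Obtained by integrating the `φ`-derivative of `cos(s cos φ) cos φ (sin φ)^(m+1)`. -/
lemma recurrence_J (m : ℕ) (s : ℝ) :
    (m + 2) * J (m + 2) s - s * K (m + 2) s = (m + 1) * J m s := by
  have h := intervalIntegral.integral_eq_sub_of_hasDerivAt (a := 0) (b := Real.pi)
    (f := fun φ => Real.cos (s * Real.cos φ) * Real.cos φ * Real.sin φ ^ (m + 1))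
    (f' := fun φ => s * (Real.sin (s * Real.cos φ) * Real.cos φ * Real.sin φ ^ (m + 2))
      + ((m:ℝ) + 1) * (Real.cos (s * Real.cos φ) * Real.sin φ ^ m)
      - ((m:ℝ) + 2) * (Real.cos (s * Real.cos φ) * Real.sin φ ^ (m + 2)))
    (fun φ _ => by
      have := ((((Real.hasDerivAt_cos φ).const_mul s).cos).mul (Real.hasDerivAt_cos φ)).mul
        ((Real.hasDerivAt_sin φ).pow (m + 1))
      refine HasDerivAt.congr_deriv this ?_
      simp only [Pi.pow_apply, Pi.mul_apply, Nat.add_sub_cancel]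
      push_cast
      have h2 := Real.sin_sq_add_cos_sq φ
      linear_combination (((m:ℝ) + 1) * Real.cos (s * Real.cos φ) * Real.sin φ ^ m) * h2)
    (Continuous.intervalIntegrable (by fun_prop) _ _)
  rw [intervalIntegral.integral_sub (Continuous.intervalIntegrable (by fun_prop) _ _)
    (Continuous.intervalIntegrable (by fun_prop) _ _),
    intervalIntegral.integral_add (Continuous.intervalIntegrable (by fun_prop) _ _)
    (Continuous.intervalIntegrable (by fun_prop) _ _), intervalIntegral.integral_const_mul,
    intervalIntegral.integral_const_mul, intervalIntegral.integral_const_mul] at h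
  simp only [Real.sin_pi, Real.sin_zero, ne_eq, Nat.add_eq_zero_iff, one_ne_zero, and_false,
    not_false_eq_true, zero_pow, mul_zero, sub_self] at h
  unfold J K
  linarith

lemma integral_profile_eq (m : ℕ) (r : ℝ) :
    (∫ z in (0:ℝ)..1, ∫ φ in (0:ℝ)..Real.pi,
      z ^ (m + 1) * Real.cos (2 * z * r * Real.cos φ) * Real.sin φ ^ m)
      = J (m + 2) (2 * r) / (m + 1) := by
  have hJ : Continuous (J m) :=
    continuous_iff_continuousAt.2 fun s => (hasDerivAt_J m s).continuousAt
  have hm : (m:ℝ) + 1 ≠ 0 := by positivity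
  have h := intervalIntegral.integral_eq_sub_of_hasDerivAt (a := 0) (b := 1)
    (f := fun z => z ^ (m + 2) * J (m + 2) (2 * z * r) / (m + 1))
    (f' := fun z => z ^ (m + 1) * J m (2 * z * r))
    (fun z _ => by
      have h1 : HasDerivAt (fun z : ℝ => 2 * z * r) (2 * r) z := by
        simpa using ((hasDerivAt_id z).const_mul 2).mul_const r
      have h2 := (((hasDerivAt_id z).pow (m + 2)).mul
        ((hasDerivAt_J (m + 2) (2 * z * r)).comp z h1)).div_const ((m:ℝ) + 1)
      refine HasDerivAt.congr_deriv h2 ?_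
      rw [div_eq_iff hm]
      have h3 := recurrence_J m (2 * z * r)
      simp only [id, Pi.pow_apply, Function.comp]
      push_cast
      linear_combination z ^ (m + 1) * h3)
    (Continuous.intervalIntegrable (by fun_prop) _ _)
  simp only [one_pow, one_mul, mul_one, ne_eq, Nat.add_eq_zero_iff, OfNat.ofNat_ne_zero,
    and_false, not_false_eq_true, zero_pow, zero_mul, zero_div, sub_zero] at h
  rw [← h]
  congr 1
  ext z
  unfold J
  rw [← intervalIntegral.integral_const_mul]
  congr 1
  ext φ
  ring

/-! ### Perturbed harmonic oscillator -/

lemma exists_limit_of_deriv_bound (a a' : ℝ → ℝ) (C : ℝ)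
    (ha : ∀ s, 1 ≤ s → HasDerivAt a (a' s) s) (hb : ∀ s, 1 ≤ s → |a' s| ≤ C / s ^ 2) :
    ∃ A, ∀ s, 1 ≤ s → |a s - A| ≤ C / s := by
  have hdiv : ∀ s : ℝ, 1 ≤ s → HasDerivAt (fun s => C / s) (-(C / s ^ 2)) s := by
    intro s hs
    have := (hasDerivAt_inv (by positivity : s ≠ 0)).const_mul C
    simpa [div_eq_mul_inv] using this
  have hC : 0 ≤ C := by simpa using (abs_nonneg _).trans (hb 1 le_rfl)
  have hmono : MonotoneOn (fun s => a s - C / s) (Set.Ici 1) := by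
    have hd : ∀ s : ℝ, 1 ≤ s → HasDerivAt (fun s => a s - C / s) (a' s - -(C / s ^ 2)) s :=
      fun s hs => (ha s hs).sub (hdiv s hs)
    refine monotoneOn_of_deriv_nonneg (convex_Ici 1)
      (fun s hs => (hd s hs).continuousAt.continuousWithinAt) ?_ ?_
    · intro s hs
      rw [interior_Ici] at hs
      exact (hd s (le_of_lt hs)).differentiableAt.differentiableWithinAt
    · intro s hs
      rw [interior_Ici] at hs
      rw [(hd s (le_of_lt hs)).deriv]
      linarith [(abs_le.1 (hb s (le_of_lt hs))).1]
  have hanti : AntitoneOn (fun s => a s + C / s) (Set.Ici 1) := by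
    have hd : ∀ s : ℝ, 1 ≤ s → HasDerivAt (fun s => a s + C / s) (a' s + -(C / s ^ 2)) s :=
      fun s hs => (ha s hs).add (hdiv s hs)
    refine antitoneOn_of_deriv_nonpos (convex_Ici 1)
      (fun s hs => (hd s hs).continuousAt.continuousWithinAt) ?_ ?_
    · intro s hs
      rw [interior_Ici] at hs
      exact (hd s (le_of_lt hs)).differentiableAt.differentiableWithinAt
    · intro s hs
      rw [interior_Ici] at hs
      rw [(hd s (le_of_lt hs)).deriv]
      linarith [(abs_le.1 (hb s (le_of_lt hs))).2]
  have key : ∀ s t : ℝ, 1 ≤ s → 1 ≤ t → a s - C / s ≤ a t + C / t := by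
    intro s t hs ht
    have hst : (1:ℝ) ≤ max s t := le_max_of_le_left hs
    have h1 := hmono (Set.mem_Ici.2 hs) (Set.mem_Ici.2 hst) (le_max_left s t)
    have h2 := hanti (Set.mem_Ici.2 ht) (Set.mem_Ici.2 hst) (le_max_right s t)
    have h3 : 0 ≤ C / max s t := by positivity
    simp only at h1 h2
    linarith
  refine ⟨sSup ((fun s => a s - C / s) '' Set.Ici 1), fun s hs => ?_⟩
  have h1 : a s - C / s ≤ sSup ((fun s => a s - C / s) '' Set.Ici 1) := by
    refine le_csSup ⟨a 1 + C / 1, ?_⟩ ⟨s, hs, rfl⟩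
    rintro _ ⟨t, ht, rfl⟩
    exact key t 1 ht le_rfl
  have h2 : sSup ((fun s => a s - C / s) '' Set.Ici 1) ≤ a s + C / s := by
    refine csSup_le ⟨_, 1, Set.mem_Ici.2 le_rfl, rfl⟩ ?_
    rintro _ ⟨t, ht, rfl⟩
    exact key t s ht hs
  rw [abs_le]
  constructor <;> linarith

/-- The energy `u² + v²` is bounded because `(u² + v²) exp(|c|/s)` is nonincreasing. -/
lemma exists_bound_of_ode (u v : ℝ → ℝ) (c : ℝ) (hu : ∀ s, 1 ≤ s → HasDerivAt u (v s) s)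
    (hv : ∀ s, 1 ≤ s → HasDerivAt v (c / s ^ 2 * u s - u s) s) :
    ∃ M, ∀ s, 1 ≤ s → |u s| ≤ M := by
  have hanti : AntitoneOn (fun s => (u s ^ 2 + v s ^ 2) * Real.exp (|c| / s)) (Set.Ici 1) := by
    have hd : ∀ s : ℝ, 1 ≤ s → HasDerivAt (fun s => (u s ^ 2 + v s ^ 2) * Real.exp (|c| / s))
        ((2 * u s * v s * c - |c| * (u s ^ 2 + v s ^ 2)) / s ^ 2 * Real.exp (|c| / s)) s := by
      intro s hs
      have hdiv : HasDerivAt (fun s => |c| / s) (-(|c| / s ^ 2)) s := by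
        have := (hasDerivAt_inv (by positivity : s ≠ 0)).const_mul |c|
        simpa [div_eq_mul_inv] using this
      have := (((hu s hs).pow 2).add ((hv s hs).pow 2)).mul hdiv.exp
      refine HasDerivAt.congr_deriv this ?_
      simp only [Pi.pow_apply, Pi.add_apply]
      have : s ≠ 0 := by positivity
      field_simp
      push_cast
      ring
    refine antitoneOn_of_deriv_nonpos (convex_Ici 1)
      (fun s hs => (hd s hs).continuousAt.continuousWithinAt) ?_ ?_
    · intro s hs
      rw [interior_Ici] at hs
      exact (hd s (le_of_lt hs)).differentiableAt.differentiableWithinAt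
    · intro s hs
      rw [interior_Ici] at hs
      rw [(hd s (le_of_lt hs)).deriv]
      refine mul_nonpos_of_nonpos_of_nonneg (div_nonpos_of_nonpos_of_nonneg ?_ (sq_nonneg s))
        (Real.exp_pos _).le
      have h1 : 2 * u s * v s * c ≤ |2 * u s * v s| * |c| := by
        rw [← abs_mul]
        exact le_abs_self _
      have h2 : |2 * u s * v s| ≤ u s ^ 2 + v s ^ 2 := by
        rw [abs_le]
        constructor <;> nlinarith [sq_nonneg (u s + v s), sq_nonneg (u s - v s)]
      nlinarith [abs_nonneg c]
  refine ⟨√((u 1 ^ 2 + v 1 ^ 2) * Real.exp (|c| / 1)), fun s hs => Real.abs_le_sqrt ?_⟩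
  have h1 := hanti (Set.mem_Ici.2 le_rfl) (Set.mem_Ici.2 hs) hs
  have h2 : 1 ≤ Real.exp (|c| / s) := Real.one_le_exp (by positivity)
  simp only at h1
  nlinarith [sq_nonneg (u s), sq_nonneg (v s)]

lemma exists_asymptotics_of_ode (u v : ℝ → ℝ) (c : ℝ) (hu : ∀ s, 1 ≤ s → HasDerivAt u (v s) s)
    (hv : ∀ s, 1 ≤ s → HasDerivAt v (c / s ^ 2 * u s - u s) s) :
    ∃ A B C, ∀ s, 1 ≤ s → |u s - (A * Real.cos s + B * Real.sin s)| ≤ C / s := by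
  obtain ⟨M, hM⟩ := exists_bound_of_ode u v c hu hv
  have hM0 : 0 ≤ M := (abs_nonneg _).trans (hM 1 le_rfl)
  have hbound : ∀ s t : ℝ, 1 ≤ s → |t| ≤ 1 → |c / s ^ 2 * u s * t| ≤ |c| * M / s ^ 2 := by
    intro s t hs ht
    have h1 : |u s| * |t| ≤ M * 1 := mul_le_mul (hM s hs) ht (abs_nonneg _) hM0
    rw [abs_mul, abs_mul, abs_div, abs_of_nonneg (sq_nonneg s), mul_assoc, mul_div_right_comm]
    exact mul_le_mul_of_nonneg_left (by simpa using h1) (by positivity)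
  obtain ⟨A, hA⟩ := exists_limit_of_deriv_bound
    (fun s => u s * Real.cos s - v s * Real.sin s) (fun s => c / s ^ 2 * u s * (-Real.sin s))
    (|c| * M)
    (fun s hs => by
      have := ((hu s hs).mul (Real.hasDerivAt_cos s)).sub
        ((hv s hs).mul (Real.hasDerivAt_sin s))
      refine HasDerivAt.congr_deriv this ?_
      ring)
    (fun s hs => hbound s _ hs (by rw [abs_neg]; exact Real.abs_sin_le_one s))
  obtain ⟨B, hB⟩ := exists_limit_of_deriv_bound
    (fun s => u s * Real.sin s + v s * Real.cos s) (fun s => c / s ^ 2 * u s * Real.cos s)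
    (|c| * M)
    (fun s hs => by
      have := ((hu s hs).mul (Real.hasDerivAt_sin s)).add
        ((hv s hs).mul (Real.hasDerivAt_cos s))
      refine HasDerivAt.congr_deriv this ?_
      ring)
    (fun s hs => hbound s _ hs (Real.abs_cos_le_one s))
  refine ⟨A, B, |c| * M + |c| * M, fun s hs => ?_⟩
  have e : u s - (A * Real.cos s + B * Real.sin s)
      = (u s * Real.cos s - v s * Real.sin s - A) * Real.cos s
        + (u s * Real.sin s + v s * Real.cos s - B) * Real.sin s := by
    linear_combination (-u s) * Real.sin_sq_add_cos_sq s
  rw [e, add_div]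
  refine (abs_add_le _ _).trans (add_le_add ?_ ?_)
  · rw [abs_mul]
    exact (mul_le_of_le_one_right (abs_nonneg _) (Real.abs_cos_le_one s)).trans (hA s hs)
  · rw [abs_mul]
    exact (mul_le_of_le_one_right (abs_nonneg _) (Real.abs_sin_le_one s)).trans (hB s hs)

/-! ### Asymptotics of the Poisson integral -/

lemma exists_asymptotics_J (m : ℕ) :
    ∃ A B C : ℝ, ∀ s, 1 ≤ s →
      |s ^ (((m:ℝ) + 1) / 2) * J m s - (A * Real.cos s + B * Real.sin s)| ≤ C / s := by
  set a : ℝ := ((m:ℝ) + 1) / 2 with ha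
  refine exists_asymptotics_of_ode (fun s => s ^ a * J m s)
    (fun s => a * s ^ (a - 1) * J m s - s ^ a * K m s) (a * (a - 1)) ?_ ?_
  · intro s hs
    have h0 : s ≠ 0 := by positivity
    have := (Real.hasDerivAt_rpow_const (p := a) (Or.inl h0)).mul (hasDerivAt_J m s)
    refine HasDerivAt.congr_deriv this ?_
    ring
  · intro s hs
    have h0 : s ≠ 0 := by positivity
    have := (((Real.hasDerivAt_rpow_const (p := a - 1) (Or.inl h0)).const_mul a).mul
      (hasDerivAt_J m s)).sub
      ((Real.hasDerivAt_rpow_const (p := a) (Or.inl h0)).mul (hasDerivAt_K m s))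
    refine HasDerivAt.congr_deriv this ?_
    have h1 : s ^ (a - 1) = s ^ a / s := Real.rpow_sub_one h0 a
    have h2 : s ^ (a - 1 - 1) = s ^ a / s / s := by rw [Real.rpow_sub_one h0, h1]
    have h3 : J (m + 2) s = 2 * a * K m s / s := by
      rw [eq_div_iff h0, ha]
      linear_combination mul_J_add_two m s
    rw [h2, h1, h3]
    field_simp
    ring

end PilotModel

/-- For `d ≥ 2` and `Υ_d(r) = ∫_0^1 ∫_0^π z^{d−1} cos(2zr cos φ) (sin φ)^{d−2} dφ dz`,
there exist real constants `A`, `B` with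
`Υ_d(r) − r^{−(d+1)/2}(A cos 2r + B sin 2r) = O(r^{−(d+3)/2})` as `r → +∞`. -/
theorem pilot_model_boundary_layer_asymptotics (d : ℕ) (hd : 2 ≤ d) :
    ∃ A B : ℝ,
      (fun r : ℝ =>
          (∫ z in (0:ℝ)..1, ∫ φ in (0:ℝ)..Real.pi,
            z ^ (d-1) * Real.cos (2*z*r*Real.cos φ) * Real.sin φ ^ (d-2))
          - r ^ (-((d:ℝ)+1)/2) * (A * Real.cos (2*r) + B * Real.sin (2*r)))
        =O[atTop] fun r : ℝ => r ^ (-((d:ℝ)+3)/2) := by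
  obtain ⟨m, rfl⟩ := Nat.exists_eq_add_of_le' hd
  obtain ⟨A, B, C, h⟩ := PilotModel.exists_asymptotics_J (m + 2)
  set a : ℝ := (((m + 2 : ℕ):ℝ) + 1) / 2 with ha
  -- `q` collects the factor `1/(d-1)` and the rescaling `(2r)^(-a) = 2^(-a) r^(-a)`.
  set q : ℝ := (2:ℝ) ^ (-a) / (m + 1) with hq
  have hq0 : 0 ≤ q := by positivity
  refine ⟨q * A, q * B, IsBigO.of_bound (q * (C / 2)) ?_⟩
  filter_upwards [eventually_ge_atTop 1] with r hr
  have hr0 : 0 < r := by positivity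
  have e1 : (-(((m + 2 : ℕ):ℝ) + 1) / 2) = -a := by rw [ha]; ring
  have e2 : (-(((m + 2 : ℕ):ℝ) + 3) / 2) = -a - 1 := by rw [ha]; ring
  have e3 : m + 2 - 1 = m + 1 := rfl
  rw [e1, e2, e3, Nat.add_sub_cancel, PilotModel.integral_profile_eq]
  have hs := h (2 * r) (by linarith)
  have hpow : (2:ℝ) ^ (-a) * r ^ (-a) * (2 * r) ^ a = 1 := by
    rw [← Real.mul_rpow (by norm_num) hr0.le, ← Real.rpow_add (by positivity)]
    simp
  have e : PilotModel.J (m + 2) (2 * r) / (m + 1)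
      - r ^ (-a) * (q * A * Real.cos (2 * r) + q * B * Real.sin (2 * r))
      = q * r ^ (-a) * ((2 * r) ^ a * PilotModel.J (m + 2) (2 * r)
        - (A * Real.cos (2 * r) + B * Real.sin (2 * r))) := by
    rw [hq]
    linear_combination (-PilotModel.J (m + 2) (2 * r) / (m + 1)) * hpow
  have hra : 0 ≤ r ^ (-a) := by positivity
  rw [e, Real.norm_eq_abs, abs_mul, abs_of_nonneg (mul_nonneg hq0 hra), Real.norm_eq_abs,
    Real.rpow_sub_one hr0.ne', abs_of_nonneg (div_nonneg hra hr0.le)]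
  calc _ ≤ q * r ^ (-a) * (C / (2 * r)) := mul_le_mul_of_nonneg_left hs (by positivity)
    _ = _ := by field_simp
end
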